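/- The number α₅ = √11 · ln((√11 − 1)/(√11 + 1)) has irrationality measure at most 5.82338; that is, for every real κ > 5.82338, there exist only finitely many pairs (p, q) with p ∈ ℤ and q a positive integer such that |α₅ − p/q| < q^(−κ). -/

import Mathlib

/-!
Put `z = (√11 - 1) / (√11 + 1)` and let `C (t)` be the product of the binomial coefficients
`(t + h).choose (2 * h)` for `h = 7 * m, 5 * m, 3 * m`. Up to elementary factors, the integral of
`C (s - 1 / 2) * z ^ s` against the logistic density on a vertical line is the derivative
`∑ t, (C (t) * z ^ t * log z + C' (t) * z ^ t)` of a power series sum along `t`. Since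
`(C (t))` is symmetric about `t = -1 / 2`, both sums are, after multiplication by simple powers of
`1 - z` and `1 + z`, rational numbers with a controlled denominator: the least common multiple of
`1, …, 14 * m` suffices, and the primes `p` such that adding the digits in base `p` always produces
a carry in one of the binomial coefficients can be removed from it. The prime number theorem, which
follows from a Tauberian argument and the nonvanishing of `ζ` on `re s = 1`, converts this into an
exponential rate.

The saddle point method bounds the sum `∑ t, C (t) * z ^ t` from both sides and, after shifting
the line to a complex saddle point, the integral from above. A sequence of integer linear forms in
`1` and `α` with coefficients of rate `σ` and values of rate `-τ` bounds the irrationality measure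
of the irrational number `α` by `1 + σ / τ`. The irrationality itself comes from Hermite's integrals
`∫ x in -1..1, (1 - x ^ 2) ^ n * cosh (ω * x)`.
-/

namespace LogIrrationality

section FejerKernel

open MeasureTheory Complex

/-- The triangle function `max 0 (1 - |t|)`, complex-valued so that its Fourier transform,
the Fejér kernel, can be taken directly. -/
noncomputable def triangle (t : ℝ) : ℂ := ((max 0 (1 - |t|) : ℝ) : ℂ)

/-- The Fejér kernel `(sin (π w) / (π w))²`, the smoothing kernel of the Tauberian argument. -/
noncomputable def fejerKernel (w : ℝ) : ℝ := Real.sinc (Real.pi * w) ^ 2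

lemma continuous_triangle : Continuous triangle := by unfold triangle; fun_prop

lemma triangle_eq_zero {t : ℝ} (ht : 1 ≤ |t|) : triangle t = 0 := by simp [triangle, ht]

lemma triangle_of_mem_Icc {t : ℝ} (ht : t ∈ Set.Icc (0 : ℝ) 1) :
    triangle t = ((1 - t : ℝ) : ℂ) := by
  rw [triangle, abs_of_nonneg ht.1, max_eq_right (by linarith [ht.2])]

lemma integrable_triangle : Integrable triangle := by
  refine continuous_triangle.integrable_of_hasCompactSupport
    (.intro (K := Set.Icc (-1) 1) isCompact_Icc fun t ht ↦ triangle_eq_zero ?_)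
  contrapose! ht
  exact abs_le.1 ht.le

lemma fejerKernel_nonneg (w : ℝ) : 0 ≤ fejerKernel w := sq_nonneg _

lemma continuous_fejerKernel : Continuous fejerKernel := by unfold fejerKernel; fun_prop

lemma fejerKernel_le_inv_one_add_sq (w : ℝ) : fejerKernel w ≤ 2 * (1 + w ^ 2)⁻¹ := by
  have le_one : fejerKernel w ≤ 1 := (sq_le_one_iff_abs_le_one _).2 (Real.abs_sinc_le_one _)
  have mul_sq_le_one : fejerKernel w * w ^ 2 ≤ 1 := by
    rcases eq_or_ne w 0 with rfl | hw
    · simp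
    · have hpi : 1 ≤ Real.pi ^ 2 := by nlinarith [Real.pi_gt_three]
      rw [fejerKernel, Real.sinc_of_ne_zero (by positivity), div_pow, mul_pow, div_mul_eq_mul_div,
        div_le_one (by positivity)]
      exact mul_le_mul_of_nonneg_right ((Real.sin_sq_le_one _).trans hpi) (sq_nonneg w)
  rw [← div_eq_mul_inv, le_div_iff₀ (by positivity)]
  linarith

lemma integrable_fejerKernel : Integrable fejerKernel :=
  (integrable_inv_one_add_sq.const_mul 2).mono' continuous_fejerKernel.aestronglyMeasurable
    (.of_forall fun w ↦ by
      rw [Real.norm_of_nonneg (fejerKernel_nonneg w)]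
      exact fejerKernel_le_inv_one_add_sq w)

lemma integral_one_sub_mul_cos (c : ℝ) :
    ∫ t in (0 : ℝ)..1, 2 * (1 - t) * Real.cos (c * t) = Real.sinc (c / 2) ^ 2 := by
  rcases eq_or_ne c 0 with rfl | hc
  · have hderiv (t : ℝ) :
        HasDerivAt (fun t : ℝ ↦ 2 * t - t ^ 2) (2 * (1 - t) * Real.cos (0 * t)) t := by
      convert! ((hasDerivAt_id t).const_mul 2).sub ((hasDerivAt_id t).pow 2) using 1
      simp only [zero_mul, Real.cos_zero, id_eq]
      ring
    rw [intervalIntegral.integral_eq_sub_of_hasDerivAt (fun t _ ↦ hderiv t)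
      (Continuous.intervalIntegrable (by fun_prop) _ _)]
    norm_num
  · have hderiv (t : ℝ) : HasDerivAt
        (fun t : ℝ ↦ 2 * (1 - t) * Real.sin (c * t) / c - 2 * Real.cos (c * t) / c ^ 2)
        (2 * (1 - t) * Real.cos (c * t)) t := by
      have hmul : HasDerivAt (fun t ↦ c * t) c t := by simpa using (hasDerivAt_id t).const_mul c
      have hlin : HasDerivAt (fun t : ℝ ↦ 2 * (1 - t)) (-2) t := by
        simpa using ((hasDerivAt_id t).const_sub 1).const_mul 2
      convert! ((hlin.mul hmul.sin).div_const c).sub ((hmul.cos.const_mul 2).div_const (c ^ 2))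
        using 1
      field_simp
      ring
    have hcos : Real.cos c = 1 - 2 * Real.sin (c / 2) ^ 2 := by
      rw [← Real.cos_two_mul_eq_one_sub, mul_div_cancel₀ c two_ne_zero]
    rw [intervalIntegral.integral_eq_sub_of_hasDerivAt (fun t _ ↦ hderiv t)
      (Continuous.intervalIntegrable (by fun_prop) _ _), Real.sinc_of_ne_zero (by positivity)]
    simp only [sub_self, mul_zero, mul_one, zero_mul, zero_div, hcos, sub_zero, Real.sin_zero,
      Real.cos_zero]
    field_simp
    ring

lemma integral_triangle_mul_exp (w : ℝ) :
    ∫ t, triangle t * cexp (-(2 * Real.pi * t * w : ℝ) * I) = fejerKernel w := by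
  set f : ℝ → ℂ := fun t ↦ triangle t * cexp (-(2 * Real.pi * t * w : ℝ) * I) with hf
  have hcont : Continuous f := continuous_triangle.mul (by fun_prop)
  have hcont_neg : Continuous fun t ↦ f (-t) := hcont.comp continuous_neg
  have hsupp (t : ℝ) (ht : t ∉ Set.Ioc (-1 : ℝ) 1) : f t = 0 := by
    suffices 1 ≤ |t| by simp [hf, triangle_eq_zero this]
    contrapose! ht
    exact ⟨(abs_lt.1 ht).1, (abs_lt.1 ht).2.le⟩
  have hfold : ∫ t in (-1 : ℝ)..0, f t = ∫ t in (0 : ℝ)..1, f (-t) := by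
    simp [intervalIntegral.integral_comp_neg f]
  have hcos : ∀ t ∈ Set.uIcc (0 : ℝ) 1,
      f (-t) + f t = ((2 * (1 - t) * Real.cos (2 * Real.pi * w * t) : ℝ) : ℂ) := by
    intro t ht
    rw [Set.uIcc_of_le zero_le_one] at ht
    have heven : triangle (-t) = triangle t := by simp [triangle]
    have harg : 2 * Real.pi * t * w = 2 * Real.pi * w * t := by ring
    simp only [hf, heven, triangle_of_mem_Icc ht, harg, mul_neg, neg_mul, ofReal_neg, neg_neg]
    rw [ofReal_mul (2 * (1 - t)), ofReal_mul 2, ofReal_ofNat, ofReal_cos]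
    have two_cos := Complex.two_cos ((2 * Real.pi * w * t : ℝ) : ℂ)
    rw [neg_mul] at two_cos
    linear_combination -((1 - t : ℝ) : ℂ) * two_cos
  rw [← setIntegral_eq_integral_of_forall_compl_eq_zero hsupp,
    ← intervalIntegral.integral_of_le (by norm_num),
    ← intervalIntegral.integral_add_adjacent_intervals (hcont.intervalIntegrable _ 0)
      (hcont.intervalIntegrable _ _), hfold,
    ← intervalIntegral.integral_add (hcont_neg.intervalIntegrable _ _)
      (hcont.intervalIntegrable _ _),
    intervalIntegral.integral_congr hcos, intervalIntegral.integral_ofReal,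
    integral_one_sub_mul_cos, fejerKernel, mul_assoc, mul_div_cancel_left₀ _ two_ne_zero]

lemma fourier_triangle : FourierTransform.fourier triangle = fun w ↦ (fejerKernel w : ℂ) := by
  ext w
  rw [Real.fourier_eq', ← integral_triangle_mul_exp w]
  refine integral_congr_ae (.of_forall fun t ↦ ?_)
  have harg : (-2 * Real.pi * inner ℝ t w : ℝ) = -(2 * Real.pi * t * w) := by simp; ring
  simp only [harg, smul_eq_mul, ofReal_neg, mul_comm (triangle t)]

lemma integral_fejerKernel : ∫ w, fejerKernel w = 1 := by
  have hinv := congrFun (continuous_triangle.fourierInv_fourier_eq integrable_triangle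
    (by rw [fourier_triangle]; exact integrable_fejerKernel.ofReal)) 0
  rw [Real.fourierInv_eq', fourier_triangle] at hinv
  simp only [inner_zero_right, mul_zero, ofReal_zero, zero_mul, Complex.exp_zero, one_smul,
    integral_complex_ofReal, triangle, abs_zero, sub_zero, max_eq_right zero_le_one] at hinv
  exact_mod_cast hinv

end FejerKernel

section Tauberian

open MeasureTheory Filter Topology Complex

variable {b : ℝ → ℝ} {C : ℝ} {g : ℂ → ℂ}

lemma integrableOn_mul_cexp_neg (hb : Measurable b) (hbC : ∀ u, |b u| ≤ C) {z : ℂ}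
    (hz : 0 < z.re) : IntegrableOn (fun u : ℝ ↦ (b u : ℂ) * cexp (-z * u)) (Set.Ioi 0) :=
  (integrableOn_exp_mul_complex_Ioi (by simpa using hz) 0).bdd_mul (c := C)
    (Complex.measurable_ofReal.comp hb).aestronglyMeasurable
    (.of_forall fun u ↦ by simpa using hbC u)

lemma norm_cexp_neg_ofReal_mul_I (x : ℝ) : ‖cexp (-(x : ℂ) * I)‖ = 1 := by
  rw [← ofReal_neg, norm_exp_ofReal_mul_I]

lemma integral_mul_exp_mul_fejerKernel (hb : Measurable b) (hbC : ∀ u, |b u| ≤ C)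
    (hgb : ∀ z : ℂ, 0 < z.re → g z = ∫ u in Set.Ioi (0 : ℝ), (b u : ℂ) * cexp (-z * u))
    (l v : ℝ) {d : ℝ} (hd : 0 < d) :
    ∫ u in Set.Ioi (0 : ℝ), (b u : ℂ) * cexp (-d * u) * (fejerKernel (l * (v - u)) : ℂ) =
      ∫ t, triangle t * cexp (-(2 * Real.pi * t * (l * v) : ℝ) * I) *
        g (d - (2 * Real.pi * l * t : ℝ) * I) := by
  simp_rw [← integral_triangle_mul_exp, ← integral_const_mul]
  rw [integral_integral_swap]
  · refine integral_congr_ae (.of_forall fun t ↦ ?_)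
    simp only
    rw [hgb _ (by simp [hd]), ← integral_const_mul]
    refine integral_congr_ae (.of_forall fun u ↦ ?_)
    have hexp : cexp (-d * u) * cexp (-(2 * Real.pi * t * (l * (v - u)) : ℝ) * I) =
        cexp (-(2 * Real.pi * t * (l * v) : ℝ) * I) *
          cexp (-(d - (2 * Real.pi * l * t : ℝ) * I) * u) := by
      rw [← Complex.exp_add, ← Complex.exp_add]
      congr 1
      push_cast
      ring
    linear_combination (b u * triangle t : ℂ) * hexp
  · have hint := integrableOn_mul_cexp_neg hb hbC (z := d) (by simpa using hd)
    refine (hint.mul_prod integrable_triangle).mono ?_ (.of_forall fun p ↦ ?_)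
    · exact (((Complex.measurable_ofReal.comp hb).comp measurable_fst).aestronglyMeasurable.mul
        (by fun_prop)).mul
        ((continuous_triangle.comp continuous_snd).aestronglyMeasurable.mul (by fun_prop))
    · simp only [Function.uncurry]
      rw [norm_mul, norm_mul (triangle p.2), norm_cexp_neg_ofReal_mul_I, mul_one, ← norm_mul]

lemma integrable_fejerKernel_mul_sub {l : ℝ} (hl : l ≠ 0) (v : ℝ) :
    Integrable fun u ↦ fejerKernel (l * (v - u)) :=
  (integrable_fejerKernel.comp_mul_left' hl).comp_sub_left v

lemma tendsto_integral_mul_exp_mul_fejerKernel (hb : Measurable b) (hbC : ∀ u, |b u| ≤ C)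
    {l : ℝ} (hl : l ≠ 0) (v : ℝ) :
    Tendsto (fun d : ℝ ↦ ∫ u in Set.Ioi (0 : ℝ),
        (b u : ℂ) * cexp (-d * u) * (fejerKernel (l * (v - u)) : ℂ)) (𝓝[>] 0)
      (𝓝 (∫ u in Set.Ioi (0 : ℝ), (b u : ℂ) * (fejerKernel (l * (v - u)) : ℂ))) := by
  have hC : 0 ≤ C := (abs_nonneg _).trans (hbC 0)
  refine tendsto_integral_filter_of_dominated_convergence
    (fun u ↦ C * fejerKernel (l * (v - u))) (.of_forall fun d ↦ ?_) ?_
    ((integrable_fejerKernel_mul_sub hl v).const_mul C).integrableOn (.of_forall fun u ↦ ?_)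
  · exact ((Complex.measurable_ofReal.comp hb).aestronglyMeasurable.mul (by fun_prop)).mul
      (Complex.measurable_ofReal.comp
        (continuous_fejerKernel.measurable.comp (by fun_prop))).aestronglyMeasurable
  · filter_upwards [self_mem_nhdsWithin] with d (hd : 0 < d)
    filter_upwards [ae_restrict_mem measurableSet_Ioi] with u (hu : 0 < u)
    have hexp : ‖cexp (-d * u)‖ ≤ 1 := by
      rw [Complex.norm_exp, Real.exp_le_one_iff]
      simpa using (mul_pos hd hu).le
    rw [norm_mul, norm_mul, norm_real, norm_real, Real.norm_eq_abs,
      Real.norm_of_nonneg (fejerKernel_nonneg _)]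
    gcongr
    · exact fejerKernel_nonneg _
    · exact (mul_le_mul (hbC u) hexp (norm_nonneg _) hC).trans_eq (mul_one C)
  · have hcont : Continuous fun d : ℝ ↦
        (b u : ℂ) * cexp (-d * u) * (fejerKernel (l * (v - u)) : ℂ) := by fun_prop
    simpa using (hcont.tendsto 0).mono_left nhdsWithin_le_nhds

lemma tendsto_integral_triangle_mul (hg : ContinuousOn g {z | 0 ≤ z.re}) (l v : ℝ) :
    Tendsto (fun d : ℝ ↦ ∫ t, triangle t * cexp (-(2 * Real.pi * t * (l * v) : ℝ) * I) *
        g (d - (2 * Real.pi * l * t : ℝ) * I)) (𝓝[>] 0)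
      (𝓝 (∫ t, triangle t * cexp (-(2 * Real.pi * t * (l * v) : ℝ) * I) *
        g (-(2 * Real.pi * l * t : ℝ) * I))) := by
  have hcont : ContinuousOn (fun p : ℝ × ℝ ↦ g (p.1 - (2 * Real.pi * l * p.2 : ℝ) * I))
      (Set.Ici (0 : ℝ) ×ˢ Set.univ) :=
    hg.comp (by fun_prop) fun p hp ↦ by simpa using hp.1
  obtain ⟨M, hM⟩ := ((isCompact_Icc (a := (0 : ℝ)) (b := 1)).prod
    (isCompact_Icc (a := (-1 : ℝ)) (b := 1))).exists_bound_of_continuousOn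
    (hcont.mono (Set.prod_mono (fun _ hx ↦ hx.1) (Set.subset_univ _)))
  refine tendsto_integral_filter_of_dominated_convergence (fun t ↦ ‖triangle t‖ * M) ?_ ?_
    (integrable_triangle.norm.mul_const M) (.of_forall fun t ↦ ?_)
  · filter_upwards [self_mem_nhdsWithin] with d (hd : 0 < d)
    exact (continuous_triangle.aestronglyMeasurable.mul (by fun_prop)).mul
      (hcont.comp_continuous (f := fun t : ℝ ↦ (d, t)) (by fun_prop)
        fun t ↦ ⟨hd.le, trivial⟩).aestronglyMeasurable
  · filter_upwards [Ioo_mem_nhdsGT one_pos] with d hd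
    refine .of_forall fun t ↦ ?_
    rw [norm_mul, norm_mul, norm_cexp_neg_ofReal_mul_I, mul_one]
    by_cases ht : |t| ≤ 1
    · gcongr
      exact hM (d, t) ⟨⟨hd.1.le, hd.2.le⟩, abs_le.1 ht⟩
    · simp [triangle_eq_zero (not_le.1 ht).le]
  · have hwithin : ContinuousWithinAt (fun d : ℝ ↦ g (d - (2 * Real.pi * l * t : ℝ) * I))
        (Set.Ici 0) 0 :=
      (hcont (0, t) ⟨Set.self_mem_Ici, trivial⟩).comp (f := fun d : ℝ ↦ (d, t)) (by fun_prop)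
        fun d hd ↦ ⟨hd, trivial⟩
    have hlim := (hwithin.mono Set.Ioi_subset_Ici_self).tendsto
    simp only [ofReal_zero, zero_sub, ← neg_mul] at hlim
    exact tendsto_const_nhds.mul hlim

lemma integral_mul_fejerKernel (hb : Measurable b) (hbC : ∀ u, |b u| ≤ C)
    (hg : ContinuousOn g {z | 0 ≤ z.re})
    (hgb : ∀ z : ℂ, 0 < z.re → g z = ∫ u in Set.Ioi (0 : ℝ), (b u : ℂ) * cexp (-z * u))
    {l : ℝ} (hl : l ≠ 0) (v : ℝ) :
    ∫ u in Set.Ioi (0 : ℝ), (b u : ℂ) * (fejerKernel (l * (v - u)) : ℂ) =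
      ∫ t, triangle t * cexp (-(2 * Real.pi * t * (l * v) : ℝ) * I) *
        g (-(2 * Real.pi * l * t : ℝ) * I) := by
  refine tendsto_nhds_unique (tendsto_integral_mul_exp_mul_fejerKernel hb hbC hl v)
    ((tendsto_integral_triangle_mul hg l v).congr' ?_)
  filter_upwards [self_mem_nhdsWithin] with d hd
  exact (integral_mul_exp_mul_fejerKernel hb hbC hgb l v hd).symm

/-- The smoothed function is the Fourier transform of an integrable function, so it vanishes at
infinity by the Riemann-Lebesgue lemma. -/
lemma tendsto_integral_Ioi_mul_fejerKernel (hb : Measurable b) (hbC : ∀ u, |b u| ≤ C)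
    (hg : ContinuousOn g {z | 0 ≤ z.re})
    (hgb : ∀ z : ℂ, 0 < z.re → g z = ∫ u in Set.Ioi (0 : ℝ), (b u : ℂ) * cexp (-z * u))
    {l : ℝ} (hl : 0 < l) :
    Tendsto (fun v : ℝ ↦ ∫ u in Set.Ioi (0 : ℝ), b u * fejerKernel (l * (v - u))) atTop
      (𝓝 0) := by
  have hRL := (Real.zero_at_infty_fourier fun t ↦
    triangle t * g (-(2 * Real.pi * l * t : ℝ) * I)).comp
      ((tendsto_id.const_mul_atTop hl).mono_right atTop_le_cocompact)
  suffices Tendsto (fun v : ℝ ↦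
      ((∫ u in Set.Ioi (0 : ℝ), b u * fejerKernel (l * (v - u)) : ℝ) : ℂ)) atTop (𝓝 0) by
    simpa [Function.comp_def] using (Complex.continuous_re.tendsto 0).comp this
  refine hRL.congr fun v ↦ ?_
  rw [← integral_complex_ofReal]
  simp only [ofReal_mul]
  rw [integral_mul_fejerKernel hb hbC hg hgb hl.ne' v]
  simp only [Function.comp, Real.fourier_eq', id]
  refine integral_congr_ae (.of_forall fun t ↦ ?_)
  have harg : (-2 * Real.pi * inner ℝ t (l * v) : ℝ) = -(2 * Real.pi * t * (l * v)) := by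
    simp
    ring
  simp only [harg, smul_eq_mul, ofReal_neg, ofReal_mul]
  ring

lemma exists_setIntegral_lt_abs_lt {K : ℝ → ℝ} (hK : Integrable K) {ε : ℝ} (hε : 0 < ε) :
    ∃ R > 0, ∫ w in {w : ℝ | R < |w|}, K w < ε := by
  have hmeas (R : ℝ) : MeasurableSet {w : ℝ | R < |w|} :=
    measurableSet_lt (by fun_prop) (by fun_prop)
  have hanti : Antitone fun R : ℝ ↦ {w : ℝ | R < |w|} := fun _ _ h _ hw ↦ h.trans_lt hw
  have hempty : ⋂ R : ℝ, {w : ℝ | R < |w|} = ∅ :=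
    Set.eq_empty_of_forall_notMem fun w hw ↦ lt_irrefl |w| (Set.mem_iInter.1 hw |w|)
  have hlim := tendsto_setIntegral_of_antitone hmeas hanti ⟨0, hK.integrableOn⟩
  rw [hempty, setIntegral_empty] at hlim
  obtain ⟨R, hRε, hR⟩ := ((hlim.eventually_lt_const hε).and (eventually_gt_atTop 0)).exists
  exact ⟨R, hR, hRε⟩

lemma le_integral_mul_of_le_on_abs_le {K f : ℝ → ℝ} {c R : ℝ} (hK : Integrable K)
    (hK0 : ∀ w, 0 ≤ K w) (hK1 : ∫ w, K w = 1) (hf : Measurable f) (hfC : ∀ w, |f w| ≤ C)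
    (hcC : c ≤ C) (hcf : ∀ w, |w| ≤ R → c ≤ f w) :
    c - 2 * C * ∫ w in {w : ℝ | R < |w|}, K w ≤ ∫ w, f w * K w := by
  have hmeas : MeasurableSet {w : ℝ | R < |w|} := measurableSet_lt (by fun_prop) (by fun_prop)
  have htail : Integrable ({w : ℝ | R < |w|}.indicator K) := hK.indicator hmeas
  calc c - 2 * C * ∫ w in {w : ℝ | R < |w|}, K w
      = ∫ w, (c * K w - 2 * C * {w : ℝ | R < |w|}.indicator K w) := by
        rw [integral_sub (hK.const_mul c) (htail.const_mul _), integral_const_mul,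
          integral_const_mul, hK1, mul_one, integral_indicator hmeas]
    _ ≤ ∫ w, f w * K w := by
        refine integral_mono ((hK.const_mul c).sub (htail.const_mul _))
          (hK.bdd_mul hf.aestronglyMeasurable (.of_forall hfC)) fun w ↦ ?_
        by_cases hw : R < |w|
        · rw [Set.indicator_of_mem (by exact hw)]
          nlinarith [hK0 w, (abs_le.1 (hfC w)).1]
        · rw [Set.indicator_of_notMem (by exact hw), mul_zero, sub_zero]
          exact mul_le_mul_of_nonneg_right (hcf w (not_lt.1 hw)) (hK0 w)

section SlowDecrease

variable {K : ℝ → ℝ} {η R v : ℝ}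

lemma abs_div_div_le {w : ℝ} (hη : 0 < η) (hR : 0 < R) (hw : |w| ≤ R) : |w / (R / η)| ≤ η := by
  have hl : 0 < R / η := div_pos hR hη
  rwa [abs_div, abs_of_pos hl, div_le_iff₀ hl, mul_div_cancel₀ R hη.ne']

lemma exp_mul_le_smoothed (hb : Measurable b) (hbC : ∀ u, |b u| ≤ C) (hb1 : ∀ u, -1 ≤ b u)
    (hslow : ∀ u v, 0 < u → u ≤ v → (b u + 1) * Real.exp (u - v) ≤ b v + 1)
    (hK : Integrable K) (hK0 : ∀ w, 0 ≤ K w) (hK1 : ∫ w, K w = 1)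
    (hη : 0 < η) (hR : 0 < R) (hv : 0 < v) :
    (b v + 1) * Real.exp (-(2 * η)) - 1 - 2 * C * ∫ w in {w : ℝ | R < |w|}, K w ≤
      ∫ w, b (v + η - w / (R / η)) * K w := by
  have hexp : Real.exp (-(2 * η)) ≤ 1 := Real.exp_le_one_iff.2 (by linarith)
  refine le_integral_mul_of_le_on_abs_le hK hK0 hK1 (hb.comp (by fun_prop)) (fun w ↦ hbC _) ?_
    fun w hw ↦ ?_
  · nlinarith [hb1 v, (abs_le.1 (hbC v)).2]
  · have hshift : |w / (R / η)| ≤ η := abs_div_div_le hη hR hw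
    have hslow := hslow v (v + η - w / (R / η)) hv (by linarith [(abs_le.1 hshift).2])
    have hmono : Real.exp (-(2 * η)) ≤ Real.exp (v - (v + η - w / (R / η))) :=
      Real.exp_le_exp.2 (by linarith [(abs_le.1 hshift).1])
    nlinarith [mul_le_mul_of_nonneg_left hmono (by linarith [hb1 v] : 0 ≤ b v + 1)]

lemma smoothed_le_exp_mul (hb : Measurable b) (hbC : ∀ u, |b u| ≤ C) (hb1 : ∀ u, -1 ≤ b u)
    (hslow : ∀ u v, 0 < u → u ≤ v → (b u + 1) * Real.exp (u - v) ≤ b v + 1)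
    (hK : Integrable K) (hK0 : ∀ w, 0 ≤ K w) (hK1 : ∫ w, K w = 1)
    (hη : 0 < η) (hR : 0 < R) (hv : 2 * η < v) :
    ∫ w, b (v - η - w / (R / η)) * K w ≤
      (b v + 1) * Real.exp (2 * η) - 1 + 2 * C * ∫ w in {w : ℝ | R < |w|}, K w := by
  have hexp : 1 ≤ Real.exp (2 * η) := Real.one_le_exp (by linarith)
  have hle := le_integral_mul_of_le_on_abs_le (f := fun w ↦ -b (v - η - w / (R / η))) (C := C)
    (c := -((b v + 1) * Real.exp (2 * η) - 1)) (R := R) hK hK0 hK1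
    (hb.comp (by fun_prop)).neg (fun w ↦ by simpa using hbC _) ?_ fun w hw ↦ ?_
  · simp only [neg_mul, integral_neg] at hle
    linarith
  · nlinarith [hb1 v, (abs_le.1 (hbC v)).1]
  · have hshift : |w / (R / η)| ≤ η := abs_div_div_le hη hR hw
    set u := v - η - w / (R / η) with hu
    have hslow := hslow u v (by linarith [(abs_le.1 hshift).2]) (by linarith [(abs_le.1 hshift).1])
    have hmono : 1 ≤ Real.exp (u - v) * Real.exp (2 * η) := by
      rw [← Real.exp_add]
      exact Real.one_le_exp (by linarith [(abs_le.1 hshift).2])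
    nlinarith [mul_le_mul_of_nonneg_left hmono (by linarith [hb1 u] : 0 ≤ b u + 1),
      mul_le_mul_of_nonneg_right hslow (Real.exp_pos (2 * η)).le]

theorem tendsto_zero_of_tendsto_smoothed (hb : Measurable b) (hbC : ∀ u, |b u| ≤ C)
    (hb1 : ∀ u, -1 ≤ b u)
    (hslow : ∀ u v, 0 < u → u ≤ v → (b u + 1) * Real.exp (u - v) ≤ b v + 1)
    (hK : Integrable K) (hK0 : ∀ w, 0 ≤ K w) (hK1 : ∫ w, K w = 1)
    (hlim : ∀ l > 0, Tendsto (fun v ↦ ∫ w, b (v - w / l) * K w) atTop (𝓝 0)) :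
    Tendsto b atTop (𝓝 0) := by
  have hC : 0 ≤ C := (abs_nonneg _).trans (hbC 0)
  have key {η : ℝ} (hη : 0 < η) : ∀ᶠ v in atTop,
      b v + 1 ≤ Real.exp (2 * η) * (1 + (1 + 2 * C) * η) ∧
        Real.exp (-(2 * η)) * (1 - (1 + 2 * C) * η) ≤ b v + 1 := by
    obtain ⟨R, hR, htail⟩ := exists_setIntegral_lt_abs_lt hK hη
    have hl := hlim (R / η) (by positivity)
    have hupper :=
      (hl.comp (tendsto_atTop_add_const_right atTop η tendsto_id)).eventually_lt_const hη
    have hlower :=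
      (hl.comp (tendsto_atTop_add_const_right atTop (-η) tendsto_id)).eventually_const_lt
        (neg_lt_zero.2 hη)
    filter_upwards [hupper, hlower, eventually_gt_atTop (2 * η)] with v hup hlo hv
    simp only [Function.comp, id, ← sub_eq_add_neg] at hup hlo
    have h1 := exp_mul_le_smoothed hb hbC hb1 hslow hK hK0 hK1 hη hR (v := v) (by linarith)
    have h2 := smoothed_le_exp_mul hb hbC hb1 hslow hK hK0 hK1 hη hR hv
    have hCtail := mul_le_mul_of_nonneg_left htail.le hC
    rw [Real.exp_neg] at h1 ⊢
    constructor
    · rw [← div_le_iff₀' (Real.exp_pos _), div_eq_mul_inv]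
      linarith
    · rw [inv_mul_le_iff₀ (Real.exp_pos _)]
      linarith
  have hcont (a : ℝ) (s : ℝ) :
      Tendsto (fun η : ℝ ↦ Real.exp (s * η) * (1 + a * η)) (𝓝[>] 0) (𝓝 1) := by
    have : Continuous fun η : ℝ ↦ Real.exp (s * η) * (1 + a * η) := by fun_prop
    simpa using (this.tendsto 0).mono_left nhdsWithin_le_nhds
  refine tendsto_order.2 ⟨fun a ha ↦ ?_, fun a ha ↦ ?_⟩
  · obtain ⟨η, hηa, hη : 0 < η⟩ := (((hcont (-(1 + 2 * C)) (-2)).eventually_const_lt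
      (show a + 1 < 1 by linarith)).and self_mem_nhdsWithin).exists
    filter_upwards [key hη] with v hv
    simp only [neg_mul, ← sub_eq_add_neg] at hηa
    linarith [hv.2]
  · obtain ⟨η, hηa, hη : 0 < η⟩ := (((hcont (1 + 2 * C) 2).eventually_lt_const
      (show 1 < a + 1 by linarith)).and self_mem_nhdsWithin).exists
    filter_upwards [key hη] with v hv
    linarith [hv.1]

end SlowDecrease

lemma tendsto_integral_mul_fejerKernel (hb : Measurable b) (hbC : ∀ u, |b u| ≤ C)
    (hb0 : ∀ u ≤ 0, b u = 0) (hg : ContinuousOn g {z | 0 ≤ z.re})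
    (hgb : ∀ z : ℂ, 0 < z.re → g z = ∫ u in Set.Ioi (0 : ℝ), (b u : ℂ) * cexp (-z * u))
    {l : ℝ} (hl : 0 < l) :
    Tendsto (fun v ↦ ∫ w, b (v - w / l) * fejerKernel w) atTop (𝓝 0) := by
  have hlim := (tendsto_integral_Ioi_mul_fejerKernel hb hbC hg hgb hl).const_mul l
  rw [mul_zero] at hlim
  refine hlim.congr fun v ↦ ?_
  have hscale := Measure.integral_comp_mul_left (fun w ↦ b (v - w / l) * fejerKernel w) l
  simp only [mul_div_cancel_left₀ _ hl.ne'] at hscale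
  rw [setIntegral_eq_integral_of_forall_compl_eq_zero fun u hu ↦ by rw [hb0 u (not_lt.1 hu),
    zero_mul], ← integral_sub_left_eq_self (fun u ↦ b u * fejerKernel (l * (v - u))) volume v]
  simp only [sub_sub_cancel]
  rw [hscale, abs_of_pos (inv_pos.2 hl), smul_eq_mul, mul_inv_cancel_left₀ hl.ne']

/-- Wiener-Ikehara, after the substitution `x = exp u`, for functions known to be `O(x)`. -/
theorem tendsto_mul_exp_neg_of_laplace {F : ℝ → ℝ} (hF : Monotone F) (hF0 : ∀ u, 0 ≤ F u)
    (hFC : ∀ u, F u ≤ C * Real.exp u) (hg : ContinuousOn g {z | 0 ≤ z.re})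
    (hgF : ∀ z : ℂ, 0 < z.re →
      g z = ∫ u in Set.Ioi (0 : ℝ), ((F u * Real.exp (-u) - 1 : ℝ) : ℂ) * cexp (-z * u)) :
    Tendsto (fun u ↦ F u * Real.exp (-u)) atTop (𝓝 1) := by
  set b : ℝ → ℝ := (Set.Ioi 0).indicator fun u ↦ F u * Real.exp (-u) - 1
  have hb_pos {u : ℝ} (hu : 0 < u) : b u = F u * Real.exp (-u) - 1 := Set.indicator_of_mem hu _
  have hb_nonpos {u : ℝ} (hu : ¬ 0 < u) : b u = 0 := Set.indicator_of_notMem hu _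
  have hb : Measurable b :=
    ((hF.measurable.mul (by fun_prop)).sub_const 1).indicator measurableSet_Ioi
  have hbound (u : ℝ) : 0 ≤ F u * Real.exp (-u) ∧ F u * Real.exp (-u) ≤ C := by
    refine ⟨mul_nonneg (hF0 u) (Real.exp_pos _).le, ?_⟩
    rw [Real.exp_neg, ← div_eq_mul_inv, div_le_iff₀ (Real.exp_pos u)]
    exact hFC u
  have hC : 0 ≤ C := (hbound 0).1.trans (hbound 0).2
  have hbC (u : ℝ) : |b u| ≤ C + 1 := by
    by_cases hu : 0 < u
    · rw [hb_pos hu, abs_le]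
      constructor <;> linarith [hbound u]
    · rw [hb_nonpos hu, abs_zero]
      linarith
  have hb1 (u : ℝ) : -1 ≤ b u := by
    by_cases hu : 0 < u
    · linarith [hb_pos hu, (hbound u).1]
    · linarith [hb_nonpos hu]
  have hslow (u v : ℝ) (hu : 0 < u) (huv : u ≤ v) : (b u + 1) * Real.exp (u - v) ≤ b v + 1 := by
    rw [hb_pos hu, hb_pos (hu.trans_le huv), sub_add_cancel, sub_add_cancel, mul_assoc,
      ← Real.exp_add, neg_add_eq_sub, sub_sub_cancel_left]
    exact mul_le_mul_of_nonneg_right (hF huv) (Real.exp_pos _).le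
  have hgb (z : ℂ) (hz : 0 < z.re) :
      g z = ∫ u in Set.Ioi (0 : ℝ), (b u : ℂ) * cexp (-z * u) :=
    (hgF z hz).trans (setIntegral_congr_fun measurableSet_Ioi fun u hu ↦ by simp only [hb_pos hu])
  have hlim := (tendsto_zero_of_tendsto_smoothed hb hbC hb1 hslow integrable_fejerKernel
    fejerKernel_nonneg integral_fejerKernel
    fun l hl ↦ tendsto_integral_mul_fejerKernel hb hbC (fun u hu ↦ hb_nonpos hu.not_gt) hg hgb
      hl).add_const 1
  rw [zero_add] at hlim
  refine hlim.congr' ?_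
  filter_upwards [eventually_gt_atTop 0] with u hu
  rw [hb_pos hu, sub_add_cancel]

end Tauberian

section PrimeNumberTheorem

open MeasureTheory Filter Topology Complex
open scoped Chebyshev ArithmeticFunction.vonMangoldt

/-- The function `(-ζ' / ζ (s) - 1 / (s - 1) - 1) / s`, extended continuously to `1 ≤ re s`: the
Laplace transform of `ψ (exp u) * exp (-u) - 1` at `s - 1`. -/
noncomputable def psiLaplace (s : ℂ) : ℂ :=
  (ArithmeticFunction.vonMangoldt.LFunctionResidueClassAux (q := 1) 1 s - 1) / s

lemma continuousOn_psiLaplace : ContinuousOn psiLaplace {s | 1 ≤ s.re} := by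
  refine ((ArithmeticFunction.vonMangoldt.continuousOn_LFunctionResidueClassAux _).sub
    continuousOn_const).div continuousOn_id ?_
  rintro s hs rfl
  exact not_le.2 zero_lt_one (by simpa using hs)

lemma psiLaplace_eq_LSeries {s : ℂ} (hs : 1 < s.re) :
    psiLaplace s = LSeries (fun n ↦ (Λ n : ℂ)) s / s - 1 / (s - 1) := by
  have h := ArithmeticFunction.vonMangoldt.eqOn_LFunctionResidueClassAux (q := 1) (a := 1)
    isUnit_one hs
  have hres : ArithmeticFunction.vonMangoldt.residueClass (q := 1) 1 = fun n ↦ Λ n := by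
    ext n
    simp [ArithmeticFunction.vonMangoldt.residueClass, Subsingleton.elim (n : ZMod 1) 1]
  have hs0 : s ≠ 0 := by
    rintro rfl
    exact not_lt.2 zero_le_one (by simpa using hs)
  have hs1 : s - 1 ≠ 0 := by
    rw [sub_ne_zero]
    rintro rfl
    simp at hs
  simp only [hres, Nat.totient_one, Nat.cast_one, inv_one] at h
  rw [psiLaplace, h]
  field_simp
  ring

lemma LSeries_vonMangoldt_eq_mul_integral {s : ℂ} (hs : 1 < s.re) :
    LSeries (fun n ↦ (Λ n : ℂ)) s =
      s * ∫ t in Set.Ioi (1 : ℝ), (ψ t : ℂ) * (t : ℂ) ^ (-(s + 1)) := by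
  have hIcc (n : ℕ) : Finset.Icc 1 n = Finset.Ioc 0 n := by
    ext
    simp [Nat.succ_le_iff]
  have hpsi (t : ℝ) : (ψ t : ℂ) = ∑ k ∈ Finset.Icc 1 ⌊t⌋₊, (Λ k : ℂ) := by
    rw [Chebyshev.psi, hIcc, ofReal_sum]
  simp only [hpsi]
  refine LSeries_eq_mul_integral_of_nonneg (fun n ↦ Λ n) zero_le_one hs ?_
    fun _ ↦ ArithmeticFunction.vonMangoldt_nonneg
  refine .of_bound (Real.log 4 + 4) (.of_forall fun n ↦ ?_)
  have hle := Chebyshev.psi_le_const_mul_self n.cast_nonneg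
  rw [Chebyshev.psi, Nat.floor_natCast, ← hIcc] at hle
  rwa [Real.norm_of_nonneg (Finset.sum_nonneg fun _ _ ↦ ArithmeticFunction.vonMangoldt_nonneg),
    Real.rpow_one, Real.norm_natCast]

lemma integral_psi_mul_cpow (s : ℂ) :
    ∫ t in Set.Ioi (1 : ℝ), (ψ t : ℂ) * (t : ℂ) ^ (-(s + 1)) =
      ∫ u in Set.Ioi (0 : ℝ), (ψ (Real.exp u) : ℂ) * cexp (-s * u) := by
  have himage : Real.exp '' Set.Ioi 0 = Set.Ioi 1 := by
    rw [Real.image_exp_Ioi, Real.exp_zero]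
  rw [← himage, integral_image_eq_integral_abs_deriv_smul measurableSet_Ioi
    (fun x _ ↦ (Real.hasDerivAt_exp x).hasDerivWithinAt) Real.exp_injective.injOn]
  refine setIntegral_congr_fun measurableSet_Ioi fun u _ ↦ ?_
  have hcpow : (Real.exp u : ℂ) ^ (-(s + 1)) = cexp (-(s + 1) * u) := by
    rw [cpow_def_of_ne_zero (ofReal_ne_zero.2 (Real.exp_pos u).ne'),
      ← ofReal_log (Real.exp_pos u).le, Real.log_exp, mul_comm]
  have hexp : (Real.exp u : ℂ) * cexp (-(s + 1) * u) = cexp (-s * u) := by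
    rw [ofReal_exp, ← Complex.exp_add]
    ring_nf
  simp only [abs_of_pos (Real.exp_pos u), real_smul, hcpow]
  rw [mul_left_comm, hexp]

lemma integrableOn_psi_exp_mul_cexp {s : ℂ} (hs : 1 < s.re) :
    IntegrableOn (fun u : ℝ ↦ (ψ (Real.exp u) : ℂ) * cexp (-s * u)) (Set.Ioi 0) := by
  refine ((integrableOn_exp_mul_Ioi (a := 1 - s.re) (by linarith) 0).const_mul
    (Real.log 4 + 4)).mono' ?_ (.of_forall fun u ↦ ?_)
  · have : Measurable ψ := Chebyshev.psi_mono.measurable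
    fun_prop
  · have hpsi := Chebyshev.psi_le_const_mul_self (Real.exp_pos u).le
    have hre : (-s * (u : ℂ)).re = -s.re * u := by simp
    rw [norm_mul, norm_real, Real.norm_of_nonneg (Chebyshev.psi_nonneg _), norm_exp, hre]
    calc ψ (Real.exp u) * Real.exp (-s.re * u)
        ≤ (Real.log 4 + 4) * Real.exp u * Real.exp (-s.re * u) := by gcongr
      _ = (Real.log 4 + 4) * Real.exp ((1 - s.re) * u) := by
        rw [mul_assoc, ← Real.exp_add]
        ring_nf

lemma psiLaplace_add_one {z : ℂ} (hz : 0 < z.re) :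
    psiLaplace (z + 1) =
      ∫ u in Set.Ioi (0 : ℝ), ((ψ (Real.exp u) * Real.exp (-u) - 1 : ℝ) : ℂ) * cexp (-z * u) := by
  have hz1 : 1 < (z + 1).re := by simpa using hz
  have hz0 : z + 1 ≠ 0 := fun h ↦ by simp [h] at hz1; linarith
  have hexp : ∫ u in Set.Ioi (0 : ℝ), cexp (-z * u) = 1 / z := by
    rw [integral_exp_mul_complex_Ioi (by simpa using hz), neg_div_neg_eq]
    simp
  rw [psiLaplace_eq_LSeries hz1, LSeries_vonMangoldt_eq_mul_integral hz1,
    mul_div_cancel_left₀ _ hz0, integral_psi_mul_cpow, add_sub_cancel_right, ← hexp,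
    ← integral_sub (integrableOn_psi_exp_mul_cexp hz1)
      (integrableOn_exp_mul_complex_Ioi (by simpa using hz) 0)]
  refine setIntegral_congr_fun measurableSet_Ioi fun u _ ↦ ?_
  have hsplit : cexp (-(z + 1) * u) = cexp (-u) * cexp (-z * u) := by
    rw [← Complex.exp_add]
    ring_nf
  simp only [hsplit]
  push_cast
  ring

theorem tendsto_psi_div : Tendsto (fun x ↦ ψ x / x) atTop (𝓝 1) := by
  have hexp : Tendsto (fun u ↦ ψ (Real.exp u) * Real.exp (-u)) atTop (𝓝 1) := by
    refine tendsto_mul_exp_neg_of_laplace (C := Real.log 4 + 4)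
      (g := fun z ↦ psiLaplace (z + 1)) (Chebyshev.psi_mono.comp Real.exp_strictMono.monotone)
      (fun _ ↦ Chebyshev.psi_nonneg _)
      (fun u ↦ Chebyshev.psi_le_const_mul_self (Real.exp_pos u).le)
      (continuousOn_psiLaplace.comp (by fun_prop) fun z hz ↦ by simpa using hz)
      fun z hz ↦ psiLaplace_add_one hz
  refine (hexp.comp Real.tendsto_log_atTop).congr' ?_
  filter_upwards [eventually_gt_atTop 0] with x hx
  rw [Function.comp, Real.exp_neg, Real.exp_log hx, div_eq_mul_inv]

theorem tendsto_theta_div : Tendsto (fun x ↦ θ x / x) atTop (𝓝 1) := by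
  have hsqrt : Real.sqrt =o[atTop] (id : ℝ → ℝ) := by
    refine Asymptotics.isLittleO_of_tendsto (by rintro x rfl; exact Real.sqrt_zero) ?_
    simpa only [id, Real.sqrt_div_self, Function.comp_def] using
      tendsto_inv_atTop_zero.comp Real.tendsto_sqrt_atTop
  have hdiff : Tendsto (fun x ↦ (ψ x - θ x) / x) atTop (𝓝 0) :=
    (Chebyshev.isBigO_psi_sub_theta_sqrt.trans_isLittleO hsqrt).tendsto_div_nhds_zero
  simpa [← sub_div] using tendsto_psi_div.sub hdiff

end PrimeNumberTheorem

section HyperbolicIrrationality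

open MeasureTheory Filter Topology
open scoped Nat

/-- The Hermite-type integral `∫ x in -1..1, (1 - x ^ 2) ^ n * cosh (ω * x)`, normalised so that
the recurrence it satisfies has integer coefficients in `ω ^ 2`. -/
noncomputable def hermiteIntegral (ω : ℝ) (n : ℕ) : ℝ :=
  ω ^ (2 * n) / n ! * ∫ x in (-1 : ℝ)..1, (1 - x ^ 2) ^ n * Real.cosh (ω * x)

variable {ω : ℝ}

lemma intervalIntegrable_one_sub_sq_pow_mul_cosh (ω : ℝ) (n : ℕ) :
    IntervalIntegrable (fun x : ℝ ↦ (1 - x ^ 2) ^ n * Real.cosh (ω * x)) volume (-1) 1 :=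
  Continuous.intervalIntegrable (by fun_prop) _ _

lemma hasDerivAt_sinh_mul (ω x : ℝ) :
    HasDerivAt (fun x ↦ Real.sinh (ω * x)) (Real.cosh (ω * x) * ω) x := by
  simpa using ((hasDerivAt_id x).const_mul ω).sinh

lemma hasDerivAt_cosh_mul (ω x : ℝ) :
    HasDerivAt (fun x ↦ Real.cosh (ω * x)) (Real.sinh (ω * x) * ω) x := by
  simpa using ((hasDerivAt_id x).const_mul ω).cosh

lemma hasDerivAt_one_sub_sq_pow_succ (n : ℕ) (x : ℝ) :
    HasDerivAt (fun x : ℝ ↦ (1 - x ^ 2) ^ (n + 1)) (-(2 * (n + 1)) * x * (1 - x ^ 2) ^ n) x := by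
  refine (((hasDerivAt_pow 2 x).const_sub 1).pow (n + 1)).congr_deriv ?_
  rw [Nat.add_sub_cancel]
  push_cast
  ring

lemma hermiteIntegral_zero (hω : ω ≠ 0) : hermiteIntegral ω 0 = 2 * (Real.sinh ω / ω) := by
  have hderiv (x : ℝ) :
      HasDerivAt (fun x ↦ Real.sinh (ω * x) / ω) ((1 - x ^ 2) ^ 0 * Real.cosh (ω * x)) x := by
    refine ((hasDerivAt_sinh_mul ω x).div_const ω).congr_deriv ?_
    field_simp
  rw [hermiteIntegral, intervalIntegral.integral_eq_sub_of_hasDerivAt (fun x _ ↦ hderiv x)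
    (intervalIntegrable_one_sub_sq_pow_mul_cosh ω 0)]
  simp
  ring

lemma hermiteIntegral_one (hω : ω ≠ 0) :
    hermiteIntegral ω 1 = 4 * Real.cosh ω - 4 * (Real.sinh ω / ω) := by
  have hderiv (x : ℝ) : HasDerivAt (fun x ↦ (1 - x ^ 2) ^ (0 + 1) * (Real.sinh (ω * x) * ω) +
      2 * x * Real.cosh (ω * x) - 2 * Real.sinh (ω * x) / ω)
      (ω ^ 2 * ((1 - x ^ 2) ^ 1 * Real.cosh (ω * x))) x := by
    refine ((((hasDerivAt_one_sub_sq_pow_succ 0 x).mul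
      ((hasDerivAt_sinh_mul ω x).mul_const ω)).add
      (((hasDerivAt_id x).const_mul 2).mul (hasDerivAt_cosh_mul ω x))).sub
      (((hasDerivAt_sinh_mul ω x).const_mul 2).div_const ω)).congr_deriv ?_
    simp only [id]
    field_simp
    push_cast
    ring
  have hint := intervalIntegral.integral_eq_sub_of_hasDerivAt (fun x _ ↦ hderiv x)
    ((intervalIntegrable_one_sub_sq_pow_mul_cosh ω 1).const_mul _)
  rw [intervalIntegral.integral_const_mul] at hint
  rw [hermiteIntegral, Nat.factorial_one, Nat.cast_one, div_one, mul_one, hint]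
  simp
  ring

lemma integral_one_sub_sq_pow_mul_cosh_recurrence (ω : ℝ) (n : ℕ) :
    ω ^ 2 * (∫ x in (-1 : ℝ)..1, (1 - x ^ 2) ^ (n + 2) * Real.cosh (ω * x)) +
        2 * (n + 2) * (2 * n + 3) *
          (∫ x in (-1 : ℝ)..1, (1 - x ^ 2) ^ (n + 1) * Real.cosh (ω * x)) -
        4 * (n + 2) * (n + 1) * (∫ x in (-1 : ℝ)..1, (1 - x ^ 2) ^ n * Real.cosh (ω * x)) = 0 := by
  have hderiv (x : ℝ) : HasDerivAt (fun x ↦ (1 - x ^ 2) ^ (n + 1 + 1) * (Real.sinh (ω * x) * ω) +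
      2 * (n + 2) * x * ((1 - x ^ 2) ^ (n + 1) * Real.cosh (ω * x)))
      (ω ^ 2 * ((1 - x ^ 2) ^ (n + 2) * Real.cosh (ω * x)) +
        2 * (n + 2) * (2 * n + 3) * ((1 - x ^ 2) ^ (n + 1) * Real.cosh (ω * x)) -
        4 * (n + 2) * (n + 1) * ((1 - x ^ 2) ^ n * Real.cosh (ω * x))) x := by
    refine (((hasDerivAt_one_sub_sq_pow_succ (n + 1) x).mul
      ((hasDerivAt_sinh_mul ω x).mul_const ω)).add
      (((hasDerivAt_id x).const_mul (2 * ((n : ℝ) + 2))).mul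
        ((hasDerivAt_one_sub_sq_pow_succ n x).mul (hasDerivAt_cosh_mul ω x)))).congr_deriv ?_
    simp only [id, Pi.mul_apply]
    push_cast
    ring
  have hint := intervalIntegrable_one_sub_sq_pow_mul_cosh ω
  have h := intervalIntegral.integral_eq_sub_of_hasDerivAt (fun x _ ↦ hderiv x)
    ((((hint _).const_mul _).add ((hint _).const_mul _)).sub ((hint _).const_mul _))
  rw [intervalIntegral.integral_sub (((hint _).const_mul _).add ((hint _).const_mul _))
    ((hint _).const_mul _), intervalIntegral.integral_add ((hint _).const_mul _)
    ((hint _).const_mul _)] at h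
  simpa using h

lemma hermiteIntegral_add_two (ω : ℝ) (n : ℕ) :
    hermiteIntegral ω (n + 2) =
      4 * ω ^ 2 * hermiteIntegral ω n - 2 * (2 * n + 3) * hermiteIntegral ω (n + 1) := by
  have hrec := integral_one_sub_sq_pow_mul_cosh_recurrence ω n
  have hn : (n ! : ℝ) ≠ 0 := by positivity
  have hn1 : (n : ℝ) + 1 ≠ 0 := by positivity
  have hn2 : (n : ℝ) + 1 + 1 ≠ 0 := by positivity
  simp only [hermiteIntegral, Nat.factorial_succ]
  generalize (∫ x in (-1 : ℝ)..1, (1 - x ^ 2) ^ n * Real.cosh (ω * x)) = I₀ at *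
  generalize (∫ x in (-1 : ℝ)..1, (1 - x ^ 2) ^ (n + 1) * Real.cosh (ω * x)) = I₁ at *
  generalize (∫ x in (-1 : ℝ)..1, (1 - x ^ 2) ^ (n + 2) * Real.cosh (ω * x)) = I₂ at *
  push_cast
  field_simp
  linear_combination ω ^ (2 * n + 2) * hrec

lemma hermiteIntegral_pos (hω : ω ≠ 0) (n : ℕ) : 0 < hermiteIntegral ω n := by
  refine mul_pos (div_pos (even_two_mul n |>.pow_pos hω) (by positivity)) ?_
  refine intervalIntegral.intervalIntegral_pos_of_pos_on
    (intervalIntegrable_one_sub_sq_pow_mul_cosh ω n) (fun x hx ↦ ?_) (by norm_num)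
  have : 0 < 1 - x ^ 2 := by nlinarith [hx.1, hx.2]
  have := Real.cosh_pos (ω * x)
  positivity

lemma hermiteIntegral_le (ω : ℝ) (n : ℕ) :
    hermiteIntegral ω n ≤ 2 * Real.cosh ω * ((ω ^ 2) ^ n / n !) := by
  have hle : ∫ x in (-1 : ℝ)..1, (1 - x ^ 2) ^ n * Real.cosh (ω * x) ≤
      ∫ _ in (-1 : ℝ)..1, Real.cosh ω := by
    refine intervalIntegral.integral_mono_on (by norm_num)
      (intervalIntegrable_one_sub_sq_pow_mul_cosh ω n) (by simp) fun x hx ↦ ?_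
    have hx0 : 0 ≤ 1 - x ^ 2 := by nlinarith [hx.1, hx.2]
    have hcosh : Real.cosh (ω * x) ≤ Real.cosh ω := by
      rw [Real.cosh_le_cosh, abs_mul]
      exact mul_le_of_le_one_right (abs_nonneg _) (abs_le.2 hx)
    calc (1 - x ^ 2) ^ n * Real.cosh (ω * x) ≤ 1 * Real.cosh ω :=
          mul_le_mul (pow_le_one₀ hx0 (by nlinarith)) hcosh (Real.cosh_pos _).le zero_le_one
      _ = Real.cosh ω := one_mul _
  rw [intervalIntegral.integral_const, smul_eq_mul] at hle
  rw [hermiteIntegral, pow_mul, mul_comm]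
  refine mul_le_mul_of_nonneg_right (by linarith) (by positivity)

lemma exists_int_eq_mul_hermiteIntegral (hω : ω ≠ 0) {A C S : ℤ} {D N : ℕ}
    (hA : N * ω ^ 2 = A) (hC : D * Real.cosh ω = C) (hS : D * (Real.sinh ω / ω) = S) (n : ℕ) :
    ∃ m : ℤ, D * N ^ n * hermiteIntegral ω n = m := by
  induction n using Nat.twoStepInduction with
  | zero =>
    refine ⟨2 * S, ?_⟩
    rw [hermiteIntegral_zero hω]
    push_cast
    linear_combination 2 * hS
  | one =>
    refine ⟨N * (4 * C - 4 * S), ?_⟩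
    rw [hermiteIntegral_one hω]
    push_cast
    linear_combination 4 * N * (hC - hS)
  | more n ih ih' =>
    obtain ⟨m, hm⟩ := ih
    obtain ⟨m', hm'⟩ := ih'
    refine ⟨4 * N * A * m - 2 * (2 * n + 3) * N * m', ?_⟩
    rw [hermiteIntegral_add_two]
    push_cast
    rw [← hm, ← hm', ← hA]
    ring

theorem not_rational_sq_cosh_sinh_div (hω : ω ≠ 0) (a c s : ℚ) :
    ¬ (ω ^ 2 = a ∧ Real.cosh ω = c ∧ Real.sinh ω / ω = s) := by
  rintro ⟨ha, hc, hs⟩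
  have hden (q : ℚ) : (q.den : ℝ) * q = q.num := by exact_mod_cast q.den_mul_eq_num
  have hintegral := exists_int_eq_mul_hermiteIntegral (A := a.num) (C := s.den * c.num)
    (S := c.den * s.num) (D := c.den * s.den) (N := a.den) hω (by rw [ha, hden])
    (by rw [hc]; push_cast; linear_combination (s.den : ℝ) * hden c)
    (by rw [hs]; push_cast; linear_combination (c.den : ℝ) * hden s)
  set D := c.den * s.den
  have hlim : Tendsto (fun n : ℕ ↦ D * (2 * Real.cosh ω) * ((a.den * ω ^ 2) ^ n / n !))
      atTop (𝓝 0) := by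
    simpa using (FloorSemiring.tendsto_pow_div_factorial_atTop (a.den * ω ^ 2)).const_mul
      (D * (2 * Real.cosh ω))
  obtain ⟨n, hn⟩ := (hlim.eventually_lt_const one_pos).exists
  obtain ⟨m, hm⟩ := hintegral n
  have hpos : (0 : ℝ) < m := by
    have := hermiteIntegral_pos hω n
    have : 0 < D := Nat.mul_pos c.den_pos s.den_pos
    have := a.den_pos
    rw [← hm]
    positivity
  have hlt : (m : ℝ) < 1 := by
    rw [← hm]
    calc D * a.den ^ n * hermiteIntegral ω n
        ≤ D * a.den ^ n * (2 * Real.cosh ω * ((ω ^ 2) ^ n / n !)) := by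
          gcongr
          exact hermiteIntegral_le ω n
      _ = D * (2 * Real.cosh ω) * ((a.den * ω ^ 2) ^ n / n !) := by rw [mul_pow]; ring
      _ < 1 := hn
  exact absurd hpos (not_lt.2 (by exact_mod_cast Int.lt_add_one_iff.1 (by exact_mod_cast hlt)))

end HyperbolicIrrationality

section ChooseDeriv

open Polynomial
open scoped Nat

/-- The derivative at `x` of the binomial polynomial `x ↦ x (x - 1) ⋯ (x - m + 1) / m !`. -/
noncomputable def chooseDeriv (x m : ℕ) : ℝ := (descPochhammer ℝ m).derivative.eval (x : ℝ) / m !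

lemma chooseDeriv_zero_right (x : ℕ) : chooseDeriv x 0 = 0 := by simp [chooseDeriv]

lemma descPochhammer_succ_comp_X_add_one (m : ℕ) :
    (descPochhammer ℝ (m + 1)).comp (X + 1) =
      descPochhammer ℝ (m + 1) + C ((m : ℝ) + 1) * descPochhammer ℝ m := by
  have h := congrArg (fun p ↦ p.comp (X + 1 : ℝ[X])) (descPochhammer_succ_comp_X_sub_one ℝ m)
  simp only [comp_assoc, sub_comp, smul_eq_mul, mul_comp, X_comp, one_comp, add_comp,
    natCast_comp, add_sub_cancel_right, comp_X] at h
  rw [eq_sub_iff_add_eq] at h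
  rw [← h]
  simp

lemma chooseDeriv_succ_succ (x m : ℕ) :
    chooseDeriv (x + 1) (m + 1) = chooseDeriv x (m + 1) + chooseDeriv x m := by
  have h := congrArg (fun p ↦ p.derivative.eval (x : ℝ)) (descPochhammer_succ_comp_X_add_one m)
  simp only [derivative_comp, derivative_add, derivative_X, derivative_one, add_zero, one_mul,
    derivative_mul, derivative_C, zero_mul, zero_add, eval_add, eval_mul, eval_C, eval_comp,
    eval_X, eval_one] at h
  simp only [chooseDeriv, Nat.cast_succ, h, Nat.factorial_succ, Nat.cast_mul]
  field_simp

lemma eval_neg_one_descPochhammer (m : ℕ) : (descPochhammer ℝ m).eval (-1) = (-1) ^ m * m ! := by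
  induction m with
  | zero => simp
  | succ m ih =>
    rw [descPochhammer_succ_eval, ih, Nat.factorial_succ]
    push_cast
    ring

lemma chooseDeriv_zero_succ (m : ℕ) : chooseDeriv 0 (m + 1) = (-1) ^ m / (m + 1) := by
  rw [chooseDeriv, descPochhammer_succ_left]
  simp only [derivative_mul, derivative_X, derivative_comp, Nat.cast_zero, eval_add, eval_mul,
    eval_comp, eval_X, eval_sub, eval_one, eval_neg_one_descPochhammer, Nat.factorial_succ,
    zero_sub, zero_mul, add_zero, one_mul, Nat.cast_mul, Nat.cast_succ]
  field_simp

lemma chooseDeriv_eq_sum (x m : ℕ) :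
    chooseDeriv x m = ∑ j ∈ Finset.range m, (-1) ^ j / ((j : ℝ) + 1) * x.choose (m - 1 - j) := by
  induction x generalizing m with
  | zero =>
    cases m with
    | zero => simp [chooseDeriv_zero_right]
    | succ m =>
      rw [chooseDeriv_zero_succ, Finset.sum_range_succ, Finset.sum_eq_zero]
      · simp
      · intro j hj
        rw [Nat.choose_eq_zero_of_lt (by have := Finset.mem_range.1 hj; omega), Nat.cast_zero,
          mul_zero]
  | succ x ih =>
    cases m with
    | zero => simp [chooseDeriv_zero_right]
    | succ m =>
      rw [chooseDeriv_succ_succ, ih, ih, Finset.sum_range_succ, Finset.sum_range_succ,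
        add_right_comm, ← Finset.sum_add_distrib]
      congr 1
      · refine Finset.sum_congr rfl fun j hj ↦ ?_
        have := Finset.mem_range.1 hj
        rw [show m + 1 - 1 - j = m - 1 - j + 1 by omega, Nat.choose_succ_succ]
        push_cast
        ring
      · simp

lemma prime_dvd_choose_of_mod_lt {p x m : ℕ} (hp : p.Prime) (h : x % p < m % p) :
    p ∣ x.choose m := by
  have := Fact.mk hp
  have hlucas := Choose.choose_modEq_choose_mod_mul_choose_div_nat (n := x) (k := m) (p := p)
  rw [Nat.choose_eq_zero_of_lt h, zero_mul] at hlucas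
  exact Nat.modEq_zero_iff_dvd.1 hlucas

lemma dvd_lcmUpto {d M : ℕ} (hd : 0 < d) (hM : d ≤ M) : d ∣ Nat.lcmUpto M :=
  Finset.dvd_lcm (f := id) (Finset.mem_Icc.2 ⟨hd, hM⟩)

theorem exists_int_lcmUpto_mul_chooseDeriv {m M : ℕ} (hm : m ≤ M) (x : ℕ) :
    ∃ v : ℤ, Nat.lcmUpto M * chooseDeriv x m = v ∧
      ∀ p : ℕ, p.Prime → p ∣ Nat.lcmUpto M → x % p < m % p → (p : ℤ) ∣ v := by
  have hdvd (j : ℕ) (hj : j ∈ Finset.range m) : j + 1 ∣ Nat.lcmUpto M :=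
    dvd_lcmUpto j.succ_pos ((Finset.mem_range.1 hj).trans_le hm)
  refine ⟨∑ j ∈ Finset.range m, (-1) ^ j * ((Nat.lcmUpto M / (j + 1) : ℕ) : ℤ) *
    (x.choose (m - 1 - j) : ℤ), ?_, fun p hp hpM hx ↦ Finset.dvd_sum fun j hj ↦ ?_⟩
  · rw [chooseDeriv_eq_sum, Finset.mul_sum, Int.cast_sum]
    refine Finset.sum_congr rfl fun j hj ↦ ?_
    simp only [Int.cast_mul, Int.cast_natCast, Int.cast_pow, Int.cast_neg, Int.cast_one]
    rw [Nat.cast_div (hdvd j hj) (by positivity)]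
    push_cast
    field_simp
  · by_cases hpj : p ∣ j + 1
    -- Lowering `m` by a multiple of `p` does not change its last digit in base `p`.
    · refine (Int.natCast_dvd_natCast.2 (prime_dvd_choose_of_mod_lt hp ?_)).mul_left _
      obtain ⟨c, hc⟩ := hpj
      have hm_eq : m = m - 1 - j + p * c := by have := Finset.mem_range.1 hj; omega
      rwa [hm_eq, Nat.add_mul_mod_self_left] at hx
    · have hmul : p ∣ (j + 1) * (Nat.lcmUpto M / (j + 1)) := by
        rwa [Nat.mul_div_cancel' (hdvd j hj)]
      have hquot := (hp.dvd_mul.1 hmul).resolve_left hpj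
      exact ((Int.natCast_dvd_natCast.2 hquot).mul_left _).mul_right _

end ChooseDeriv

section CentralChoose

open Polynomial
open scoped Nat

/-- The polynomial `∏ i < n, (X - (i + 1 / 2) ^ 2) / (2 * n)!`: evaluated at `(t + 1 / 2) ^ 2` it
is the binomial coefficient `(t + n).choose (2 * n)`. -/
noncomputable def centralChoose (n : ℕ) : ℝ[X] :=
  C ((2 * n)! : ℝ)⁻¹ * ∏ i ∈ Finset.range n, (X - C (((i : ℝ) + 1 / 2) ^ 2))

lemma prod_X_sub_sq_comp_X_sq (n : ℕ) :
    (∏ i ∈ Finset.range n, (X - C (((i : ℝ) + 1 / 2) ^ 2))).comp (X ^ 2) =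
      (descPochhammer ℝ (2 * n)).comp (X + C ((n : ℝ) - 1 / 2)) := by
  induction n with
  | zero => simp
  | succ n ih =>
    rw [Finset.prod_range_succ, mul_comp, ih, show 2 * (n + 1) = 2 * n + 1 + 1 by ring,
      descPochhammer_succ_left, descPochhammer_succ_right]
    simp only [mul_comp, sub_comp, X_comp, C_comp, comp_assoc, natCast_comp, one_comp]
    have hshift : (X + C (((n + 1 : ℕ) : ℝ) - 1 / 2) - 1 : ℝ[X]) = X + C ((n : ℝ) - 1 / 2) := by
      rw [add_sub_assoc, ← C_1, ← C_sub]
      push_cast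
      ring_nf
    have hfactor : (X ^ 2 - C (((n : ℝ) + 1 / 2) ^ 2) : ℝ[X]) =
        (X + C (((n + 1 : ℕ) : ℝ) - 1 / 2)) * (X + C ((n : ℝ) - 1 / 2) - ((2 * n : ℕ) : ℝ[X])) := by
      rw [← C_eq_natCast, add_sub_assoc, ← C_sub,
        show ((n + 1 : ℕ) : ℝ) - 1 / 2 = n + 1 / 2 by push_cast; ring,
        show (n : ℝ) - 1 / 2 - ((2 * n : ℕ) : ℝ) = -(n + 1 / 2) by push_cast; ring, C_neg, C_pow]
      ring
    rw [hshift, hfactor]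
    ring

lemma centralChoose_comp_X_sq (n : ℕ) :
    (centralChoose n).comp (X ^ 2) =
      C ((2 * n)! : ℝ)⁻¹ * (descPochhammer ℝ (2 * n)).comp (X + C ((n : ℝ) - 1 / 2)) := by
  rw [centralChoose, mul_comp, C_comp, prod_X_sub_sq_comp_X_sq]

lemma eval_centralChoose_sq (n t : ℕ) :
    (centralChoose n).eval (((t : ℝ) + 1 / 2) ^ 2) = (t + n).choose (2 * n) := by
  have h := congrArg (fun p ↦ p.eval ((t : ℝ) + 1 / 2)) (centralChoose_comp_X_sq n)
  simp only [eval_comp, eval_pow, eval_X, eval_add, eval_C, eval_mul] at h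
  rw [h, show (t : ℝ) + 1 / 2 + (n - 1 / 2) = (t + n : ℕ) by push_cast; ring,
    descPochhammer_eval_eq_descFactorial, Nat.descFactorial_eq_factorial_mul_choose]
  push_cast
  field_simp

lemma eval_derivative_centralChoose_comp (n t : ℕ) :
    ((centralChoose n).comp (X ^ 2)).derivative.eval ((t : ℝ) + 1 / 2) =
      chooseDeriv (t + n) (2 * n) := by
  rw [centralChoose_comp_X_sq, derivative_mul, derivative_comp]
  simp only [derivative_add, derivative_X, derivative_C, add_zero, one_mul, eval_comp, eval_add,
    eval_X, eval_C, eval_mul, zero_mul, zero_add]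
  rw [show (t : ℝ) + 1 / 2 + (n - 1 / 2) = (t + n : ℕ) by push_cast; ring, chooseDeriv]
  ring

lemma natDegree_centralChoose (n : ℕ) : (centralChoose n).natDegree = n := by
  rw [centralChoose, natDegree_C_mul (by positivity),
    natDegree_prod_of_monic _ _ fun i _ ↦ monic_X_sub_C _]
  simp only [natDegree_X_sub_C, Finset.sum_const, Finset.card_range, smul_eq_mul, mul_one]

lemma centralChoose_ne_zero (n : ℕ) : centralChoose n ≠ 0 :=
  mul_ne_zero (C_ne_zero.2 (by positivity))
    (Finset.prod_ne_zero_iff.2 fun _ _ ↦ (monic_X_sub_C _).ne_zero)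

lemma exists_eq_sum_C_mul_centralChoose {N : ℕ} {q : ℝ[X]} (hq : q.natDegree ≤ N) :
    ∃ e : ℕ → ℝ, q = ∑ j ∈ Finset.range (N + 1), C (e j) * centralChoose j := by
  let S : Sequence ℝ := ⟨centralChoose, fun j ↦ by
    rw [degree_eq_natDegree (centralChoose_ne_zero j), natDegree_centralChoose]⟩
  have hspan := S.span_degreeLT (m := N + 1) fun j _ ↦
    (leadingCoeff_ne_zero.2 (centralChoose_ne_zero j)).isUnit
  have hmem : q ∈ Submodule.span ℝ (S '' Finset.range (N + 1)) := by
    rw [Finset.coe_range, hspan, mem_degreeLT]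
    exact (degree_le_of_natDegree_le hq).trans_lt (by exact_mod_cast N.lt_succ_self)
  obtain ⟨e, he⟩ := (Submodule.mem_span_image_finset_iff_exists_fun' ℝ).1 hmem
  exact ⟨e, by simp only [← smul_eq_C_mul]; exact he.symm⟩

lemma two_mul_add_one_mul_choose (t j : ℕ) :
    (2 * (t : ℝ) + 1) * (t + j).choose (2 * j) =
      (2 * j + 1) * ((t + j + 1).choose (2 * j + 1) + (t + j).choose (2 * j + 1)) := by
  have hup : ((t + j + 1).choose (2 * j + 1) : ℝ) * (2 * j + 1) =
      (t + j + 1) * (t + j).choose (2 * j) := by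
    exact_mod_cast (Nat.add_one_mul_choose_eq (t + j) (2 * j)).symm
  have hright : ((t + j).choose (2 * j + 1) : ℝ) * (2 * j + 1) =
      (t + j).choose (2 * j) * (t - j) := by
    rcases le_or_gt j t with h | h
    · have hnat := Nat.choose_succ_right_eq (t + j) (2 * j)
      rw [show t + j - 2 * j = t - j by omega] at hnat
      have hcast := congrArg (Nat.cast (R := ℝ)) hnat
      push_cast [Nat.cast_sub h] at hcast
      exact hcast
    · rw [Nat.choose_eq_zero_of_lt (by omega : t + j < 2 * j + 1),
        Nat.choose_eq_zero_of_lt (by omega : t + j < 2 * j)]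
      simp
  linear_combination -hup - hright

end CentralChoose

section ChooseProd

open Polynomial

variable {ι : Type*} [Fintype ι]

/-- The integer `∏ i, (t + h i).choose (2 * h i)`; the approximations to the logarithm are built
from its generating function in `t`. -/
def chooseProd (h : ι → ℕ) (t : ℕ) : ℕ := ∏ i, (t + h i).choose (2 * h i)

/-- The polynomial taking the value `chooseProd h t` at `(t + 1 / 2) ^ 2`. -/
noncomputable def chooseProdPoly (h : ι → ℕ) : ℝ[X] := ∏ i, centralChoose (h i)

/-- The derivative with respect to `t` of `chooseProd h t`, as a polynomial in `t`. -/
noncomputable def chooseProdDeriv (h : ι → ℕ) (t : ℕ) : ℝ :=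
  ((chooseProdPoly h).comp (X ^ 2)).derivative.eval ((t : ℝ) + 1 / 2)

variable (h : ι → ℕ)

lemma eval_chooseProdPoly_sq (t : ℕ) :
    (chooseProdPoly h).eval (((t : ℝ) + 1 / 2) ^ 2) = chooseProd h t := by
  simp only [chooseProdPoly, chooseProd, eval_prod, eval_centralChoose_sq, Nat.cast_prod]

lemma natDegree_chooseProdPoly_le : (chooseProdPoly h).natDegree ≤ ∑ i, h i :=
  (natDegree_prod_le _ _).trans_eq (by simp only [natDegree_centralChoose])

lemma chooseProdDeriv_eq_sum [DecidableEq ι] (t : ℕ) :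
    chooseProdDeriv h t = ∑ i, (∏ j ∈ Finset.univ.erase i, ((t + h j).choose (2 * h j) : ℝ)) *
      chooseDeriv (t + h i) (2 * h i) := by
  simp only [chooseProdDeriv, chooseProdPoly, prod_comp, derivative_prod_finset, eval_finsetSum,
    eval_mul, eval_prod, eval_derivative_centralChoose_comp]
  simp only [eval_comp, eval_pow, eval_X, eval_centralChoose_sq]

lemma exists_chooseProd_eq_sum :
    ∃ e : ℕ → ℝ, ∀ t, (chooseProd h t : ℝ) =
      ∑ j ∈ Finset.range (∑ i, h i + 1), e j * (t + j).choose (2 * j) := by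
  obtain ⟨e, he⟩ := exists_eq_sum_C_mul_centralChoose (natDegree_chooseProdPoly_le h)
  refine ⟨e, fun t ↦ ?_⟩
  rw [← eval_chooseProdPoly_sq, he, eval_finsetSum]
  simp only [eval_mul, eval_C, eval_centralChoose_sq]

lemma exists_chooseProdDeriv_eq_sum :
    ∃ e : ℕ → ℝ, ∀ t, chooseProdDeriv h t = ∑ j ∈ Finset.range (∑ i, h i + 1),
      e j * ((t + j + 1).choose (2 * j + 1) + (t + j).choose (2 * j + 1)) := by
  obtain ⟨e, he⟩ := exists_eq_sum_C_mul_centralChoose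
    ((natDegree_derivative_le _).trans ((Nat.sub_le _ 1).trans (natDegree_chooseProdPoly_le h)))
  refine ⟨fun j ↦ (2 * j + 1) * e j, fun t ↦ ?_⟩
  rw [chooseProdDeriv, derivative_comp, eval_mul, eval_comp, he]
  simp only [derivative_X_pow, eval_finsetSum, eval_mul, eval_C, eval_pow, eval_X,
    eval_centralChoose_sq, Finset.mul_sum]
  refine Finset.sum_congr rfl fun j _ ↦ ?_
  simp only [Nat.cast_ofNat, Nat.add_one_sub_one, pow_one]
  linear_combination e j * two_mul_add_one_mul_choose t j

variable {h}

lemma chooseProd_eq_zero {i : ι} {t : ℕ} (hi : t < h i) : chooseProd h t = 0 :=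
  Finset.prod_eq_zero (Finset.mem_univ i) (Nat.choose_eq_zero_of_lt (by omega))

lemma chooseProdDeriv_eq_zero {i j : ι} {t : ℕ} (hij : i ≠ j) (hi : t < h i) (hj : t < h j) :
    chooseProdDeriv h t = 0 := by
  classical
  have hzero {l : ι} (hl : t < h l) : ((t + h l).choose (2 * h l) : ℝ) = 0 := by
    rw [Nat.choose_eq_zero_of_lt (by omega), Nat.cast_zero]
  rw [chooseProdDeriv_eq_sum]
  refine Finset.sum_eq_zero fun l _ ↦ mul_eq_zero_of_left ?_ _
  rcases eq_or_ne l i with rfl | hli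
  · exact Finset.prod_eq_zero (Finset.mem_erase.2 ⟨hij.symm, Finset.mem_univ j⟩) (hzero hj)
  · exact Finset.prod_eq_zero (Finset.mem_erase.2 ⟨hli.symm, Finset.mem_univ i⟩) (hzero hi)

end ChooseProd

section Unitriangular

theorem mem_of_forall_sum_unitriangular_mem {A : Type*} [AddCommGroup A] (S : AddSubgroup A)
    {b : ℕ → ℕ → ℤ} (hdiag : ∀ t, b t t = 1) (hupper : ∀ t j, t < j → b t j = 0)
    {e : ℕ → A} {N j : ℕ} (hj : j ≤ N)
    (hmem : ∀ t ≤ j, ∑ i ∈ Finset.range (N + 1), b t i • e i ∈ S) : e j ∈ S := by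
  induction j using Nat.strong_induction_on with
  | _ j ih =>
    have hrow : ∑ i ∈ Finset.range (N + 1), b j i • e i =
        ∑ i ∈ Finset.range j, b j i • e i + e j := by
      rw [← Finset.sum_subset (Finset.range_mono (by omega : j + 1 ≤ N + 1)),
        Finset.sum_range_succ, hdiag, one_smul]
      intro i _ hi
      rw [hupper j i (by simpa using hi), zero_smul]
    have hlow : ∑ i ∈ Finset.range j, b j i • e i ∈ S := by
      refine S.sum_mem fun i hi ↦ S.zsmul_mem (ih i ?_ ?_ fun t ht ↦ hmem t ?_) _
      all_goals
        have := Finset.mem_range.1 hi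
        omega
    have hsum := hmem j le_rfl
    rw [hrow] at hsum
    exact (S.add_mem_cancel_left hlow).1 hsum

variable {B : ℕ → ℕ → ℤ} {e f : ℕ → ℝ} {z c : ℝ} {a b : ℤ} {N T : ℕ}

lemma exists_int_mul_div_pow_eq (hb : b ≠ 0) {P x : ℝ} {j : ℕ} (hT : T ≤ j) (hN : j ≤ N)
    (hx : x ∈ AddSubgroup.zmultiples P) :
    ∃ X : ℤ, x * (a / b : ℝ) ^ j = a ^ T * P / b ^ N * X := by
  obtain ⟨v, rfl⟩ := AddSubgroup.mem_zmultiples_iff.1 hx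
  obtain ⟨r, rfl⟩ := Nat.exists_eq_add_of_le hT
  obtain ⟨s, rfl⟩ := Nat.exists_eq_add_of_le hN
  have : (b : ℝ) ≠ 0 := by exact_mod_cast hb
  refine ⟨v * b ^ s * a ^ r, ?_⟩
  rw [zsmul_eq_mul, div_pow]
  push_cast
  field_simp
  ring

/-- If the columns of a unitriangular matrix have generating functions `c * (a / b) ^ j`, then
divisibility and vanishing of an integral combination `f` of them pass to its generating
function: the coefficients inherit both, and only the powers `T ≤ j ≤ N` of `a / b` occur. -/
theorem exists_int_hasSum_of_unitriangular (hb : b ≠ 0) (hdiag : ∀ t, B t t = 1)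
    (hupper : ∀ t j, t < j → B t j = 0)
    (hB : ∀ j, HasSum (fun t ↦ B t j * z ^ t) (c * (a / b : ℝ) ^ j))
    (hf : ∀ t, f t = ∑ j ∈ Finset.range (N + 1), e j * B t j) {P : ℝ}
    (hP : ∀ t, f t ∈ AddSubgroup.zmultiples P) (hT : ∀ t < T, f t = 0) :
    ∃ X : ℤ, HasSum (fun t ↦ f t * z ^ t) (c * (a ^ T * P / b ^ N) * X) := by
  have hsmul (t : ℕ) : ∑ j ∈ Finset.range (N + 1), B t j • e j = f t := by
    simp only [hf, zsmul_eq_mul, mul_comm]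
  have hcoeff : ∀ j ∈ Finset.range (N + 1),
      ∃ X : ℤ, e j * (a / b : ℝ) ^ j = a ^ T * P / b ^ N * X := by
    intro j hj
    have hjN : j ≤ N := Nat.lt_succ_iff.1 (Finset.mem_range.1 hj)
    rcases lt_or_ge j T with hjT | hjT
    · have hzero : e j ∈ (⊥ : AddSubgroup ℝ) :=
        mem_of_forall_sum_unitriangular_mem ⊥ hdiag hupper hjN fun t ht ↦ by
          rw [hsmul, hT t (by omega)]
          exact AddSubgroup.zero_mem _
      exact ⟨0, by rw [AddSubgroup.mem_bot.1 hzero, zero_mul, Int.cast_zero, mul_zero]⟩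
    · exact exists_int_mul_div_pow_eq hb hjT hjN
        (mem_of_forall_sum_unitriangular_mem _ hdiag hupper hjN fun t _ ↦ by
          rw [hsmul]
          exact hP t)
  choose! X hX using hcoeff
  refine ⟨∑ j ∈ Finset.range (N + 1), X j, ?_⟩
  have hsum := hasSum_sum fun j (_ : j ∈ Finset.range (N + 1)) ↦ (hB j).mul_left (e j)
  have hvalue : c * (a ^ T * P / b ^ N) * (∑ j ∈ Finset.range (N + 1), X j : ℤ) =
      ∑ j ∈ Finset.range (N + 1), e j * (c * (a / b : ℝ) ^ j) := by
    rw [Int.cast_sum, mul_assoc, Finset.mul_sum, Finset.mul_sum]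
    refine Finset.sum_congr rfl fun j hj ↦ ?_
    rw [← hX j hj, mul_left_comm]
  simpa only [hf, Finset.sum_mul, mul_assoc, hvalue] using hsum

end Unitriangular

section GeneratingFunction

variable {z : ℝ}

lemma hasSum_choose_add_mul_pow (hz0 : 0 ≤ z) (hz1 : z < 1) {j m : ℕ} (hj : j ≤ m) :
    HasSum (fun t : ℕ ↦ ((t + j).choose m : ℝ) * z ^ t) (z ^ (m - j) / (1 - z) ^ (m + 1)) := by
  have hgeom := (hasSum_choose_mul_geometric_of_norm_lt_one m (r := z)
    (by rwa [Real.norm_of_nonneg hz0])).mul_left (z ^ (m - j))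
  rw [mul_one_div] at hgeom
  rw [← hasSum_nat_add_iff' (m - j), Finset.sum_eq_zero, sub_zero]
  · have hterm (t : ℕ) : ((t + (m - j) + j).choose m : ℝ) * z ^ (t + (m - j)) =
        z ^ (m - j) * ((t + m).choose m * z ^ t) := by
      rw [show t + (m - j) + j = t + m by omega, pow_add]
      ring
    simpa only [hterm] using hgeom
  · intro t ht
    rw [Nat.choose_eq_zero_of_lt (by have := Finset.mem_range.1 ht; omega), Nat.cast_zero,
      zero_mul]

lemma hasSum_choose_two_mul (hz0 : 0 ≤ z) (hz1 : z < 1) (j : ℕ) :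
    HasSum (fun t : ℕ ↦ ((t + j).choose (2 * j) : ℝ) * z ^ t)
      ((1 - z)⁻¹ * (z / (1 - z) ^ 2) ^ j) := by
  have : 1 - z ≠ 0 := by linarith
  have hvalue : (1 - z)⁻¹ * (z / (1 - z) ^ 2) ^ j =
      z ^ (2 * j - j) / (1 - z) ^ (2 * j + 1) := by
    rw [show 2 * j - j = j by omega, div_pow, ← pow_mul, pow_succ]
    field_simp
  rw [hvalue]
  exact hasSum_choose_add_mul_pow hz0 hz1 (by omega)

lemma hasSum_choose_two_mul_add_one (hz0 : 0 ≤ z) (hz1 : z < 1) (j : ℕ) :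
    HasSum (fun t : ℕ ↦
        (((t + j + 1).choose (2 * j + 1) : ℝ) + (t + j).choose (2 * j + 1)) * z ^ t)
      ((1 + z) / (1 - z) ^ 2 * (z / (1 - z) ^ 2) ^ j) := by
  have hsum := (hasSum_choose_add_mul_pow hz0 hz1 (by omega : j + 1 ≤ 2 * j + 1)).add
    (hasSum_choose_add_mul_pow hz0 hz1 (by omega : j ≤ 2 * j + 1))
  have : 1 - z ≠ 0 := by linarith
  have hvalue : (1 + z) / (1 - z) ^ 2 * (z / (1 - z) ^ 2) ^ j =
      z ^ (2 * j + 1 - (j + 1)) / (1 - z) ^ (2 * j + 1 + 1) +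
        z ^ (2 * j + 1 - j) / (1 - z) ^ (2 * j + 1 + 1) := by
    rw [show 2 * j + 1 - (j + 1) = j by omega, show 2 * j + 1 - j = j + 1 by omega, div_pow,
      ← pow_mul]
    field_simp
    ring
  simpa only [hvalue, add_mul, add_assoc] using hsum

variable {ι : Type*} [Fintype ι] (h : ι → ℕ)

theorem summable_chooseProd (hz0 : 0 ≤ z) (hz1 : z < 1) :
    Summable fun t ↦ (chooseProd h t : ℝ) * z ^ t := by
  obtain ⟨e, he⟩ := exists_chooseProd_eq_sum h
  simp only [he, Finset.sum_mul, mul_assoc]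
  exact summable_sum fun j _ ↦ (hasSum_choose_two_mul hz0 hz1 j).summable.mul_left (e j)

theorem summable_chooseProdDeriv (hz0 : 0 ≤ z) (hz1 : z < 1) :
    Summable fun t ↦ chooseProdDeriv h t * z ^ t := by
  obtain ⟨e, he⟩ := exists_chooseProdDeriv_eq_sum h
  simp only [he, Finset.sum_mul, mul_assoc]
  exact summable_sum fun j _ ↦ (hasSum_choose_two_mul_add_one hz0 hz1 j).summable.mul_left (e j)

variable {h} {a b : ℤ} {d P : ℝ} {T : ℕ}

theorem exists_int_hasSum_chooseProd (hz0 : 0 ≤ z) (hz1 : z < 1) (hb : b ≠ 0)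
    (hab : z / (1 - z) ^ 2 = a / b) (hP : ∀ t, d * chooseProd h t ∈ AddSubgroup.zmultiples P)
    {i : ι} (hT : T ≤ h i) :
    ∃ X : ℤ, HasSum (fun t ↦ d * chooseProd h t * z ^ t)
      ((1 - z)⁻¹ * (a ^ T * P / b ^ (∑ i, h i)) * X) := by
  obtain ⟨e, he⟩ := exists_chooseProd_eq_sum h
  refine exists_int_hasSum_of_unitriangular (B := fun t j ↦ (t + j).choose (2 * j))
    (e := fun j ↦ d * e j) hb (fun t ↦ by simp [← two_mul])
    (fun t j htj ↦ by rw [Nat.choose_eq_zero_of_lt (by omega), Nat.cast_zero])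
    (fun j ↦ by rw [← hab]; exact mod_cast hasSum_choose_two_mul hz0 hz1 j)
    (fun t ↦ ?_) hP fun t ht ↦ ?_
  · simp only [he, Finset.mul_sum, mul_assoc, Int.cast_natCast]
  · rw [chooseProd_eq_zero (ht.trans_le hT), Nat.cast_zero, mul_zero]

theorem exists_int_hasSum_chooseProdDeriv (hz0 : 0 ≤ z) (hz1 : z < 1) (hb : b ≠ 0)
    (hab : z / (1 - z) ^ 2 = a / b) (hP : ∀ t, d * chooseProdDeriv h t ∈ AddSubgroup.zmultiples P)
    {i j : ι} (hij : i ≠ j) (hTi : T ≤ h i) (hTj : T ≤ h j) :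
    ∃ X : ℤ, HasSum (fun t ↦ d * chooseProdDeriv h t * z ^ t)
      ((1 + z) / (1 - z) ^ 2 * (a ^ T * P / b ^ (∑ i, h i)) * X) := by
  obtain ⟨e, he⟩ := exists_chooseProdDeriv_eq_sum h
  refine exists_int_hasSum_of_unitriangular
    (B := fun t j ↦ (t + j + 1).choose (2 * j + 1) + (t + j).choose (2 * j + 1))
    (e := fun j ↦ d * e j) hb (fun t ↦ by simp [← two_mul]) (fun t j htj ↦ ?_)
    (fun j ↦ by rw [← hab]; exact mod_cast hasSum_choose_two_mul_add_one hz0 hz1 j)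
    (fun t ↦ ?_) hP fun t ht ↦ ?_
  · rw [Nat.choose_eq_zero_of_lt (by omega), Nat.choose_eq_zero_of_lt (by omega)]
    rfl
  · push_cast
    simp only [he, Finset.mul_sum, mul_assoc]
  · rw [chooseProdDeriv_eq_zero hij (ht.trans_le hTi) (ht.trans_le hTj), mul_zero]

end GeneratingFunction

section WindowPrimes

open Filter Topology
open scoped Chebyshev

/-- The primes `p` with `N / p ∈ [a, b)`. -/
noncomputable def windowPrimes (N a b : ℝ) : Finset ℕ :=
  (Finset.Ioc ⌊N / b⌋₊ ⌊N / a⌋₊).filter Nat.Prime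

lemma mem_windowPrimes {N a b : ℝ} (hN : 0 ≤ N) (ha : 0 < a) (hb : 0 < b) {p : ℕ} :
    p ∈ windowPrimes N a b ↔ p.Prime ∧ N / p ∈ Set.Ico a b := by
  rw [windowPrimes, Finset.mem_filter, and_comm]
  refine and_congr_right fun hp ↦ ?_
  have hp0 : (0 : ℝ) < p := by exact_mod_cast hp.pos
  rw [Finset.mem_Ioc, Set.mem_Ico, Nat.le_floor_iff (by positivity),
    Nat.floor_lt (by positivity), le_div_iff₀ ha, le_div_iff₀ hp0, div_lt_iff₀ hb,
    div_lt_iff₀ hp0, mul_comm a, mul_comm b, and_comm]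

lemma sum_log_windowPrimes {N a b : ℝ} (hN : 0 ≤ N) (ha : 0 < a) (hab : a ≤ b) :
    ∑ p ∈ windowPrimes N a b, Real.log p = θ (N / a) - θ (N / b) := by
  have hfloor : ⌊N / b⌋₊ ≤ ⌊N / a⌋₊ := Nat.floor_mono (by gcongr)
  rw [windowPrimes, Finset.sum_filter, Chebyshev.theta, Chebyshev.theta, Finset.sum_filter,
    Finset.sum_filter, eq_sub_iff_add_eq, add_comm,
    Finset.sum_Ioc_consecutive _ (Nat.zero_le _) hfloor]

variable {ι : Type*}

/-- The product of the primes `p` for which `N / p` lies in one of the windows `[a i, b i)`. -/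
noncomputable def windowPrimorial (s : Finset ι) (a b : ι → ℝ) (N : ℝ) : ℕ :=
  ∏ p ∈ s.biUnion fun i ↦ windowPrimes N (a i) (b i), p

variable {s : Finset ι} {a b : ι → ℝ} {N : ℝ}

lemma prime_of_mem_biUnion_windowPrimes {p : ℕ}
    (hp : p ∈ s.biUnion fun i ↦ windowPrimes N (a i) (b i)) : p.Prime := by
  obtain ⟨i, -, hi⟩ := Finset.mem_biUnion.1 hp
  exact (Finset.mem_filter.1 hi).2

lemma windowPrimorial_pos : 0 < windowPrimorial s a b N :=
  Finset.prod_pos fun _ hp ↦ (prime_of_mem_biUnion_windowPrimes hp).pos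

lemma windowPrimorial_dvd (hN : 0 ≤ N) (ha : ∀ i, 0 < a i) (hab : ∀ i, a i ≤ b i) {v : ℤ}
    (hv : ∀ p : ℕ, p.Prime → (∃ i, N / p ∈ Set.Ico (a i) (b i)) → (p : ℤ) ∣ v) :
    (windowPrimorial s a b N : ℤ) ∣ v := by
  rw [Int.natCast_dvd]
  refine Finset.prod_primes_dvd _
    (fun p hp ↦ (prime_of_mem_biUnion_windowPrimes hp).prime) fun p hp ↦ ?_
  obtain ⟨i, -, hi⟩ := Finset.mem_biUnion.1 hp
  obtain ⟨hprime, hmem⟩ := (mem_windowPrimes hN (ha i) ((ha i).trans_le (hab i))).1 hi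
  exact Int.natCast_dvd.1 (hv p hprime ⟨i, hmem⟩)

lemma log_windowPrimorial (hN : 0 ≤ N) (ha : ∀ i, 0 < a i) (hab : ∀ i, a i ≤ b i)
    (hdisj : Pairwise fun i j ↦ Disjoint (Set.Ico (a i) (b i)) (Set.Ico (a j) (b j))) :
    Real.log (windowPrimorial s a b N) = ∑ i ∈ s, (θ (N / a i) - θ (N / b i)) := by
  have hwindows : Pairwise fun i j ↦
      Disjoint (windowPrimes N (a i) (b i)) (windowPrimes N (a j) (b j)) := by
    intro i j hij
    rw [Finset.disjoint_left]
    intro p hi hj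
    have hmem (i : ι) := mem_windowPrimes (p := p) hN (ha i) ((ha i).trans_le (hab i))
    exact Set.disjoint_left.1 (hdisj hij) ((hmem i).1 hi).2 ((hmem j).1 hj).2
  rw [windowPrimorial, Nat.cast_prod, Real.log_prod fun p hp ↦
      Nat.cast_ne_zero.2 (prime_of_mem_biUnion_windowPrimes hp).ne_zero,
    Finset.sum_biUnion (hwindows.set_pairwise _)]
  exact Finset.sum_congr rfl fun i _ ↦ sum_log_windowPrimes hN (ha i) (hab i)

lemma tendsto_theta_div_div {c : ℝ} (hc : 0 < c) :
    Tendsto (fun N ↦ θ (N / c) / N) atTop (𝓝 (1 / c)) := by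
  have hlim := (tendsto_theta_div.comp (tendsto_id.atTop_div_const hc)).mul_const (1 / c)
  rw [one_mul] at hlim
  refine hlim.congr fun N ↦ ?_
  simp only [Function.comp_apply, id]
  field_simp

theorem tendsto_log_windowPrimorial_div (ha : ∀ i, 0 < a i) (hab : ∀ i, a i ≤ b i)
    (hdisj : Pairwise fun i j ↦ Disjoint (Set.Ico (a i) (b i)) (Set.Ico (a j) (b j))) :
    Tendsto (fun N ↦ Real.log (windowPrimorial s a b N) / N) atTop
      (𝓝 (∑ i ∈ s, (1 / a i - 1 / b i))) := by
  have hlim : Tendsto (fun N ↦ ∑ i ∈ s, (θ (N / a i) / N - θ (N / b i) / N)) atTop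
      (𝓝 (∑ i ∈ s, (1 / a i - 1 / b i))) :=
    tendsto_finsetSum _ fun i _ ↦ (tendsto_theta_div_div (ha i)).sub
      (tendsto_theta_div_div ((ha i).trans_le (hab i)))
  refine hlim.congr' ?_
  filter_upwards [eventually_ge_atTop 0] with N hN
  rw [log_windowPrimorial hN ha hab hdisj, Finset.sum_div]
  simp only [sub_div]

theorem tendsto_log_lcmUpto_div {c : ℕ} (hc : 0 < c) :
    Tendsto (fun m : ℕ ↦ Real.log (Nat.lcmUpto (c * m)) / m) atTop (𝓝 c) := by
  have hcm : Tendsto (fun m : ℕ ↦ (c : ℝ) * m) atTop atTop :=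
    tendsto_natCast_atTop_atTop.const_mul_atTop (by exact_mod_cast hc)
  have hlim := (tendsto_psi_div.comp hcm).mul_const (c : ℝ)
  rw [one_mul] at hlim
  refine hlim.congr fun m ↦ ?_
  have : (c : ℝ) ≠ 0 := by exact_mod_cast hc.ne'
  rw [← Chebyshev.psi_eq_log_lcmUpto, Nat.cast_mul]
  simp only [Function.comp_apply]
  field_simp

end WindowPrimes

section Carry

open Filter Topology

variable {ι : Type*} [Fintype ι] {h : ι → ℕ}

theorem exists_int_lcmUpto_mul_chooseProdDeriv {M : ℕ} (hM : ∀ i, 2 * h i ≤ M) (t : ℕ) :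
    ∃ v : ℤ, Nat.lcmUpto M * chooseProdDeriv h t = v ∧
      ∀ p : ℕ, p.Prime → p ∣ Nat.lcmUpto M → (∃ i, (t + h i) % p < (2 * h i) % p) →
        (p : ℤ) ∣ v := by
  classical
  choose V hV hdvd using fun i ↦ exists_int_lcmUpto_mul_chooseDeriv (hM i) (t + h i)
  refine ⟨∑ i, (∏ j ∈ Finset.univ.erase i, ((t + h j).choose (2 * h j) : ℤ)) * V i, ?_, ?_⟩
  · push_cast
    simp only [chooseProdDeriv_eq_sum, Finset.mul_sum, ← hV, mul_left_comm]
  · rintro p hp hpM ⟨i, hi⟩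
    refine Finset.dvd_sum fun j _ ↦ ?_
    rcases eq_or_ne i j with rfl | hij
    · exact (hdvd i p hp hpM hi).mul_left _
    · refine Dvd.dvd.mul_right ?_ _
      exact (Int.natCast_dvd_natCast.2 (prime_dvd_choose_of_mod_lt hp hi)).trans
        (Finset.dvd_prod_of_mem _ (Finset.mem_erase.2 ⟨hij, Finset.mem_univ i⟩))

/-- The half-lengths `7 * m, 5 * m, 3 * m` of the three binomial factors of the construction. -/
def heights (m : ℕ) : Fin 3 → ℕ := ![7 * m, 5 * m, 3 * m]

/-- Left end points of the windows for the quotients `2 * m / p` that force a carry at `p` in one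
of the binomial coefficients with `heights m`; see `exists_mod_lt_of_mem_window`. -/
noncomputable def windowLeft (x : ℕ × Fin 3) : ℝ := x.1 + ![1 / 6, 1 / 2, 3 / 4] x.2

/-- Right end points of the windows with left end points `windowLeft`. -/
noncomputable def windowRight (x : ℕ × Fin 3) : ℝ := x.1 + ![3 / 7, 5 / 7, 6 / 7] x.2

lemma div_six_le_windowLeft (x : ℕ × Fin 3) : 1 / 6 ≤ windowLeft x := by
  obtain ⟨i, c⟩ := x
  have : (0 : ℝ) ≤ i := i.cast_nonneg
  fin_cases c <;> simp [windowLeft] <;> linarith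

lemma windowLeft_pos (x : ℕ × Fin 3) : 0 < windowLeft x :=
  lt_of_lt_of_le (by norm_num) (div_six_le_windowLeft x)

lemma windowLeft_le_windowRight (x : ℕ × Fin 3) : windowLeft x ≤ windowRight x := by
  obtain ⟨i, c⟩ := x
  fin_cases c <;> simp [windowLeft, windowRight] <;> norm_num

lemma floor_eq_of_mem_window {x : ℕ × Fin 3} {y : ℝ}
    (hy : y ∈ Set.Ico (windowLeft x) (windowRight x)) : ⌊y⌋₊ = x.1 := by
  obtain ⟨i, c⟩ := x
  obtain ⟨hleft, hright⟩ := hy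
  have : (0 : ℝ) ≤ i := i.cast_nonneg
  rw [Nat.floor_eq_iff (((windowLeft_pos _).le).trans hleft)]
  fin_cases c <;> simp [windowLeft, windowRight] at hleft hright ⊢ <;> constructor <;> linarith

lemma pairwise_disjoint_windows : Pairwise fun x y ↦
    Disjoint (Set.Ico (windowLeft x) (windowRight x)) (Set.Ico (windowLeft y) (windowRight y)) := by
  rintro ⟨i, c⟩ ⟨j, d⟩ hne
  rw [Set.disjoint_left]
  intro y hc hd
  obtain rfl : i = j := (floor_eq_of_mem_window hc).symm.trans (floor_eq_of_mem_window hd)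
  have hcd : c ≠ d := fun hcd ↦ hne (by rw [hcd])
  obtain ⟨hc_left, hc_right⟩ := hc
  obtain ⟨hd_left, hd_right⟩ := hd
  fin_cases c <;> fin_cases d <;> simp [windowLeft, windowRight] at * <;> linarith

lemma mod_lt_of_residue_mem_window {p r y : ℕ} (hr : r < p) (hy : y < p)
    (hwindow : (p ≤ 6 * r ∧ 7 * r < 3 * p) ∨ (p ≤ 2 * r ∧ 7 * r < 5 * p) ∨
      (3 * p ≤ 4 * r ∧ 7 * r < 6 * p)) :
    (y + 2 * r) % p < (7 * r) % p ∨ (y + r) % p < (5 * r) % p ∨ y < (3 * r) % p := by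
  have hp : 0 < p := by omega
  have hmod (x c : ℕ) (hx : x < c * p) : ∃ q < c, x = q * p + x % p ∧ x % p < p :=
    ⟨x / p, (Nat.div_lt_iff_lt_mul hp).2 hx, (Nat.div_add_mod' x p).symm, Nat.mod_lt _ hp⟩
  by_contra! hcarry
  obtain ⟨q₃, hq₃, hdiv₃, hlt₃⟩ := hmod (3 * r) 3 (by omega)
  obtain ⟨q₅, hq₅, hdiv₅, hlt₅⟩ := hmod (5 * r) 5 (by omega)
  obtain ⟨q₇, hq₇, hdiv₇, hlt₇⟩ := hmod (7 * r) 7 (by omega)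
  obtain ⟨u, hu, hdivu, hltu⟩ := hmod (y + r) 2 (by omega)
  obtain ⟨w, hw, hdivw, hltw⟩ := hmod (y + 2 * r) 3 (by omega)
  generalize (3 * r) % p = s₃ at *
  generalize (5 * r) % p = s₅ at *
  generalize (7 * r) % p = s₇ at *
  generalize (y + r) % p = s₁ at *
  generalize (y + 2 * r) % p = s₂ at *
  rcases hwindow with hwindow | hwindow | hwindow <;>
    interval_cases q₃ <;> (try omega) <;> interval_cases q₅ <;> (try omega) <;>
    interval_cases q₇ <;> (try omega) <;> interval_cases u <;> (try omega) <;>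
    interval_cases w <;> omega

lemma residue_mem_window {p n : ℕ} (hp : 0 < p) {x : ℕ × Fin 3}
    (hx : (n / p : ℝ) ∈ Set.Ico (windowLeft x) (windowRight x)) :
    (p ≤ 6 * (n % p) ∧ 7 * (n % p) < 3 * p) ∨ (p ≤ 2 * (n % p) ∧ 7 * (n % p) < 5 * p) ∨
      (3 * p ≤ 4 * (n % p) ∧ 7 * (n % p) < 6 * p) := by
  have hfloor : n / p = x.1 := by rw [← floor_eq_of_mem_window hx, Nat.floor_div_eq_div]
  have hp0 : (0 : ℝ) < p := by exact_mod_cast hp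
  obtain ⟨hleft, hright⟩ := hx
  have hn : (n : ℝ) = x.1 * p + (n % p : ℕ) := by
    exact_mod_cast hfloor ▸ (Nat.div_add_mod' n p).symm
  rw [le_div_iff₀ hp0, hn] at hleft
  rw [div_lt_iff₀ hp0, hn] at hright
  obtain ⟨i, c⟩ := x
  generalize n % p = r at *
  rify
  fin_cases c <;> simp [windowLeft, windowRight] at hleft hright
  · exact .inl ⟨by linarith, by linarith⟩
  · exact .inr (.inl ⟨by linarith, by linarith⟩)
  · exact .inr (.inr ⟨by linarith, by linarith⟩)

theorem exists_mod_lt_of_mem_window {p m : ℕ} (hp : 0 < p) {x : ℕ × Fin 3}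
    (hx : (2 * m / p : ℝ) ∈ Set.Ico (windowLeft x) (windowRight x)) (t : ℕ) :
    ∃ i, (t + heights m i) % p < (2 * heights m i) % p := by
  have hwindow := residue_mem_window (n := 2 * m) hp (by exact_mod_cast hx)
  have hcarry := mod_lt_of_residue_mem_window (Nat.mod_lt (2 * m) hp)
    (Nat.mod_lt (t + 3 * m) hp) hwindow
  have hn := Nat.mod_modEq (2 * m) p
  have ht := Nat.mod_modEq (t + 3 * m) p
  rw [ht.add (hn.mul_left 2), ht.add hn, hn.mul_left 7, hn.mul_left 5, hn.mul_left 3] at hcarry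
  have h₀ : heights m 0 = 7 * m := rfl
  have h₁ : heights m 1 = 5 * m := rfl
  have h₂ : heights m 2 = 3 * m := rfl
  rcases hcarry with h7 | h5 | h3
  · exact ⟨0, by convert h7 using 2 <;> omega⟩
  · exact ⟨1, by convert h5 using 2 <;> omega⟩
  · exact ⟨2, by convert h3 using 2 <;> omega⟩

/-- The primes at which every value of the binomial product with `heights m`, and every value of
its derivative, gains a factor; `K` bounds the quotients `2 * m / p` that are taken into account. -/
noncomputable def carryPrimorial (K m : ℕ) : ℕ :=
  windowPrimorial (Finset.range K ×ˢ Finset.univ) windowLeft windowRight (2 * m)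

lemma carryPrimorial_pos (K m : ℕ) : 0 < carryPrimorial K m := windowPrimorial_pos

/-- The exponential growth rate of `carryPrimorial K m` in `m`. -/
noncomputable def carryRate (K : ℕ) : ℝ :=
  2 * ∑ x ∈ Finset.range K ×ˢ Finset.univ, (1 / windowLeft x - 1 / windowRight x)

theorem tendsto_log_carryPrimorial_div (K : ℕ) :
    Tendsto (fun m : ℕ ↦ Real.log (carryPrimorial K m) / m) atTop (𝓝 (carryRate K)) := by
  have h2m : Tendsto (fun m : ℕ ↦ 2 * (m : ℝ)) atTop atTop :=
    tendsto_natCast_atTop_atTop.const_mul_atTop two_pos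
  have hlim := ((tendsto_log_windowPrimorial_div (s := Finset.range K ×ˢ Finset.univ)
    windowLeft_pos windowLeft_le_windowRight pairwise_disjoint_windows).comp h2m).const_mul 2
  refine hlim.congr fun m ↦ ?_
  simp only [Function.comp_apply, carryPrimorial]
  field_simp

lemma heights_le (m : ℕ) (i : Fin 3) : heights m i ≤ 7 * m := by
  fin_cases i <;> simp [heights] <;> omega

lemma carryPrimorial_dvd {K m : ℕ} {v : ℤ}
    (hv : ∀ p : ℕ, p.Prime → p ∣ Nat.lcmUpto (14 * m) →
      (∀ t, ∃ i, (t + heights m i) % p < (2 * heights m i) % p) → (p : ℤ) ∣ v) :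
    (carryPrimorial K m : ℤ) ∣ v := by
  refine windowPrimorial_dvd (by positivity) windowLeft_pos windowLeft_le_windowRight ?_
  rintro p hp ⟨x, hx⟩
  refine hv p hp (dvd_lcmUpto hp.pos ?_) (exists_mod_lt_of_mem_window hp.pos hx)
  have hle := (div_six_le_windowLeft x).trans hx.1
  rw [le_div_iff₀ (by exact_mod_cast hp.pos)] at hle
  have : (p : ℝ) ≤ 14 * m := by linarith [m.cast_nonneg (α := ℝ)]
  exact_mod_cast this

theorem lcmUpto_mul_chooseProd_mem_zmultiples (K m t : ℕ) :
    (Nat.lcmUpto (14 * m) : ℝ) * chooseProd (heights m) t ∈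
      AddSubgroup.zmultiples (carryPrimorial K m : ℝ) := by
  obtain ⟨v, hv⟩ : (carryPrimorial K m : ℤ) ∣
      (Nat.lcmUpto (14 * m) * chooseProd (heights m) t : ℕ) :=
    carryPrimorial_dvd fun p _ hpM _ ↦ Int.natCast_dvd_natCast.2 (hpM.mul_right _)
  refine AddSubgroup.mem_zmultiples_iff.2 ⟨v, ?_⟩
  rw [zsmul_eq_mul, mul_comm]
  exact_mod_cast hv.symm

theorem lcmUpto_mul_chooseProdDeriv_mem_zmultiples (K m t : ℕ) :
    (Nat.lcmUpto (14 * m) : ℝ) * chooseProdDeriv (heights m) t ∈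
      AddSubgroup.zmultiples (carryPrimorial K m : ℝ) := by
  obtain ⟨w, hw, hdvd⟩ := exists_int_lcmUpto_mul_chooseProdDeriv (h := heights m) (M := 14 * m)
    (fun i ↦ by have := heights_le m i; omega) t
  obtain ⟨v, hv⟩ : (carryPrimorial K m : ℤ) ∣ w :=
    carryPrimorial_dvd fun p hp hpM hcarry ↦ hdvd p hp hpM (hcarry t)
  refine AddSubgroup.mem_zmultiples_iff.2 ⟨v, ?_⟩
  rw [zsmul_eq_mul, mul_comm, hw, hv, Int.cast_mul, Int.cast_natCast]

end Carry

section LineIntegral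

open MeasureTheory Filter Topology Complex

/-- The normalized logit `log (x / (1 - x)) / (2 * π)`: it maps `(0, 1)` onto the real line, and
turns integrals against the density `1 / cosh ^ 2 (π * y)` into integrals over `(0, 1)`. -/
noncomputable def normLogit (x : ℝ) : ℝ := (Real.log x - Real.log (1 - x)) / (2 * Real.pi)

lemma measurable_normLogit : Measurable normLogit := by
  unfold normLogit
  fun_prop

lemma betaIntegral_one_add_one_sub {a : ℂ} (ha : |a.re| < 1) (ha0 : a ≠ 0) :
    betaIntegral (1 + a) (1 - a) = Real.pi * a / sin (Real.pi * a) := by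
  obtain ⟨hlo, hhi⟩ := abs_lt.1 ha
  have hadd : 0 < (1 + a).re := by rw [add_re, one_re]; linarith
  have hsub : 0 < (1 - a).re := by rw [sub_re, one_re]; linarith
  have hbeta := Gamma_mul_Gamma_eq_betaIntegral hadd hsub
  rw [add_add_sub_cancel, one_add_one_eq_two, Gamma_ofNat_eq_factorial] at hbeta
  rw [Nat.factorial_one, Nat.cast_one, one_mul, add_comm 1 a, Gamma_add_one a ha0, mul_assoc,
    Gamma_mul_Gamma_one_sub] at hbeta
  rw [add_comm 1 a, ← hbeta]
  ring

lemma integral_cexp_normLogit_eq_betaIntegral (l : ℝ) :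
    ∫ x in Set.Ioo (0 : ℝ) 1, cexp (normLogit x * I * l) =
      betaIntegral (1 + l / (2 * Real.pi) * I) (1 - l / (2 * Real.pi) * I) := by
  rw [betaIntegral, intervalIntegral.integral_of_le zero_le_one, integral_Ioc_eq_integral_Ioo]
  refine setIntegral_congr_fun measurableSet_Ioo fun x hx ↦ ?_
  have hsub : 0 < 1 - x := sub_pos.2 hx.2
  have hpi : (Real.pi : ℂ) ≠ 0 := ofReal_ne_zero.2 Real.pi_ne_zero
  rw [← ofReal_one, ← ofReal_sub, cpow_def_of_ne_zero (ofReal_ne_zero.2 hx.1.ne'),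
    cpow_def_of_ne_zero (ofReal_ne_zero.2 hsub.ne'), ← exp_add, ← ofReal_log hx.1.le,
    ← ofReal_log hsub.le, normLogit]
  congr 1
  push_cast
  field_simp
  ring

lemma half_div_sinh_half {l : ℝ} (hl : l < 0) :
    l / 2 / Real.sinh (l / 2) = -l * (Real.exp (l / 2) / (1 - Real.exp l)) := by
  have hsq : Real.exp l = Real.exp (l / 2) ^ 2 := by rw [← Real.exp_nat_mul]; ring_nf
  have hlt : Real.exp (l / 2) < 1 := by rw [Real.exp_lt_one_iff]; linarith
  have hpos := Real.exp_pos (l / 2)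
  rw [Real.sinh_eq, Real.exp_neg, hsq]
  generalize Real.exp (l / 2) = E at *
  have : 1 - E ^ 2 ≠ 0 := by nlinarith
  have : E ^ 2 - 1 ≠ 0 := by nlinarith
  field_simp
  ring

lemma integral_cexp_normLogit {l : ℝ} (hl : l < 0) :
    ∫ x in Set.Ioo (0 : ℝ) 1, cexp (normLogit x * I * l) =
      (-l * (Real.exp (l / 2) / (1 - Real.exp l)) : ℝ) := by
  have hpi : (Real.pi : ℂ) ≠ 0 := ofReal_ne_zero.2 Real.pi_ne_zero
  have hl0 : (l : ℂ) ≠ 0 := ofReal_ne_zero.2 hl.ne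
  have harg : (Real.pi : ℂ) * (l / (2 * Real.pi) * I) = (l / 2 : ℝ) * I := by
    push_cast
    field_simp
  have hre : ((l : ℂ) / (2 * Real.pi) * I).re = 0 := by
    rw [show (l : ℂ) / (2 * Real.pi) = (l / (2 * Real.pi) : ℝ) by push_cast; rfl, re_ofReal_mul,
      I_re, mul_zero]
  rw [integral_cexp_normLogit_eq_betaIntegral, betaIntegral_one_add_one_sub (by simp [hre])
    (by simp [hl0, hpi]), harg, sin_mul_I, mul_div_mul_right _ _ I_ne_zero, ← ofReal_sinh,
    ← ofReal_div, half_div_sinh_half hl]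

lemma integrableOn_one_sub_rpow {c : ℝ} (hc : -1 < c) :
    IntegrableOn (fun x : ℝ ↦ (1 - x) ^ c) (Set.Ioo 0 1) := by
  have hint := (intervalIntegral.intervalIntegrable_rpow' (a := 0) (b := 1) hc).comp_sub_left 1
  rw [sub_zero, sub_self] at hint
  rw [← integrableOn_Ioc_iff_integrableOn_Ioo]
  exact (intervalIntegrable_iff_integrableOn_Ioc_of_le zero_le_one).1 hint.symm

lemma exp_mul_abs_normLogit_le {b x : ℝ} (hb : 0 ≤ b) (hx : x ∈ Set.Ioo (0 : ℝ) 1) :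
    Real.exp (b * |normLogit x|) ≤
      x ^ (-(b / (2 * Real.pi))) + (1 - x) ^ (-(b / (2 * Real.pi))) := by
  have := Real.pi_pos
  have hsub : 0 < 1 - x := sub_pos.2 hx.2
  have hlog : Real.log x ≤ 0 := Real.log_nonpos hx.1.le hx.2.le
  have hlog' : Real.log (1 - x) ≤ 0 := Real.log_nonpos hsub.le (by linarith [hx.1])
  have hc : 0 ≤ b / (2 * Real.pi) := by positivity
  have hmul : b * |normLogit x| = b / (2 * Real.pi) * |Real.log x - Real.log (1 - x)| := by
    rw [normLogit, abs_div, abs_of_pos (by positivity : 0 < 2 * Real.pi)]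
    ring
  rw [hmul, Real.rpow_def_of_pos hx.1, Real.rpow_def_of_pos hsub]
  generalize b / (2 * Real.pi) = c at hc
  rcases abs_cases (Real.log x - Real.log (1 - x)) with ⟨habs, -⟩ | ⟨habs, -⟩
  · refine le_add_of_nonneg_of_le (Real.exp_pos _).le (Real.exp_le_exp.2 ?_)
    rw [habs]
    nlinarith
  · refine le_add_of_le_of_nonneg (Real.exp_le_exp.2 ?_) (Real.exp_pos _).le
    rw [habs]
    nlinarith

lemma integrableOn_exp_mul_abs_normLogit {b : ℝ} (hb0 : 0 ≤ b) (hb : b < 2 * Real.pi) :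
    IntegrableOn (fun x ↦ Real.exp (b * |normLogit x|)) (Set.Ioo 0 1) := by
  have := Real.pi_pos
  have hc : -1 < -(b / (2 * Real.pi)) := by
    rw [neg_lt_neg_iff, div_lt_one (by positivity)]
    exact hb
  have hx : IntegrableOn (fun x : ℝ ↦ x ^ (-(b / (2 * Real.pi)))) (Set.Ioo 0 1) := by
    rw [← integrableOn_Ioc_iff_integrableOn_Ioo]
    exact (intervalIntegrable_iff_integrableOn_Ioc_of_le zero_le_one).1
      (intervalIntegral.intervalIntegrable_rpow' hc)
  refine Integrable.mono' (hx.add (integrableOn_one_sub_rpow hc))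
    (Real.measurable_exp.comp
      (measurable_const.mul measurable_normLogit.abs)).aestronglyMeasurable ?_
  refine (ae_restrict_iff' measurableSet_Ioo).2 (.of_forall fun x hx ↦ ?_)
  rw [Real.norm_of_nonneg (Real.exp_pos _).le]
  exact exp_mul_abs_normLogit_le hb0 hx

/-- The parametrization of the vertical line through `σ` by the interval `(0, 1)`. -/
noncomputable def linePoint (σ x : ℝ) : ℂ := σ + normLogit x * I

lemma measurable_linePoint (σ : ℝ) : Measurable (linePoint σ) :=
  measurable_const.add ((measurable_ofReal.comp measurable_normLogit).mul_const _)

lemma linePoint_re (σ x : ℝ) : (linePoint σ x).re = σ := by simp [linePoint]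

lemma integrableOn_norm_linePoint_pow (σ : ℝ) (j : ℕ) :
    IntegrableOn (fun x ↦ ‖linePoint σ x‖ ^ j) (Set.Ioo 0 1) := by
  have hexp := (integrableOn_exp_mul_abs_normLogit zero_le_one
    (by linarith [Real.pi_gt_three])).const_mul (j.factorial * Real.exp |σ|)
  refine Integrable.mono' hexp ((measurable_linePoint σ).norm.pow_const j).aestronglyMeasurable
    (.of_forall fun x ↦ ?_)
  have hnorm : ‖linePoint σ x‖ ≤ |σ| + |normLogit x| :=
    (norm_add_le _ _).trans (by simp)
  have hpow := Real.pow_div_factorial_le_exp (|σ| + |normLogit x|) (by positivity) j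
  rw [div_le_iff₀' (by positivity)] at hpow
  rw [Real.norm_of_nonneg (by positivity), one_mul, mul_assoc, ← Real.exp_add]
  exact (pow_le_pow_left₀ (norm_nonneg _) hnorm j).trans hpow

/-- The integral of `s ^ j * exp (s * l)` over the vertical line through `σ` against the logistic
density. -/
noncomputable def lineMoment (σ : ℝ) (j : ℕ) (l : ℝ) : ℂ :=
  ∫ x in Set.Ioo (0 : ℝ) 1, linePoint σ x ^ j * cexp (linePoint σ x * l)

variable {σ : ℝ} {l : ℝ}

lemma measurable_linePoint_pow_mul_cexp (σ : ℝ) (j : ℕ) (l : ℝ) :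
    Measurable fun x ↦ linePoint σ x ^ j * cexp (linePoint σ x * l) :=
  ((measurable_linePoint σ).pow_const j).mul
    (measurable_exp.comp ((measurable_linePoint σ).mul_const _))

lemma norm_linePoint_pow_mul_cexp_le (hσ : 0 ≤ σ) (hl : l ≤ 0) (j : ℕ) (x : ℝ) :
    ‖linePoint σ x ^ j * cexp (linePoint σ x * l)‖ ≤ ‖linePoint σ x‖ ^ j := by
  rw [norm_mul, norm_pow, norm_exp, re_mul_ofReal, linePoint_re]
  exact mul_le_of_le_one_right (by positivity)
    (Real.exp_le_one_iff.2 (mul_nonpos_of_nonneg_of_nonpos hσ hl))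

lemma integrableOn_linePoint_pow_mul_cexp (hσ : 0 ≤ σ) (hl : l ≤ 0) (j : ℕ) :
    IntegrableOn (fun x ↦ linePoint σ x ^ j * cexp (linePoint σ x * l)) (Set.Ioo 0 1) :=
  (integrableOn_norm_linePoint_pow σ j).mono'
    (measurable_linePoint_pow_mul_cexp σ j l).aestronglyMeasurable
    (.of_forall (norm_linePoint_pow_mul_cexp_le hσ hl j))

lemma hasDerivAt_lineMoment (hσ : 0 ≤ σ) (hl : l < 0) (j : ℕ) :
    HasDerivAt (lineMoment σ j) (lineMoment σ (j + 1) l) l := by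
  refine (hasDerivAt_integral_of_dominated_loc_of_deriv_le (Iio_mem_nhds hl)
    (.of_forall fun l ↦ (measurable_linePoint_pow_mul_cexp σ j l).aestronglyMeasurable)
    (integrableOn_linePoint_pow_mul_cexp hσ hl.le j)
    (measurable_linePoint_pow_mul_cexp σ (j + 1) l).aestronglyMeasurable
    (.of_forall fun x l hl ↦ norm_linePoint_pow_mul_cexp_le hσ (le_of_lt hl) (j + 1) x)
    (integrableOn_norm_linePoint_pow σ (j + 1)) (.of_forall fun x l _ ↦ ?_)).2
  have hlin : HasDerivAt (fun l : ℝ ↦ linePoint σ x * (l : ℂ)) (linePoint σ x) l := by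
    simpa using (ofRealCLM.hasDerivAt (x := l)).const_mul (linePoint σ x)
  exact (hlin.cexp.const_mul (linePoint σ x ^ j)).congr_deriv (by ring)

/-- The sum of `s ^ j * exp (s * l)` over the points `s = t + σ + 1 / 2` with `t : ℕ`. -/
noncomputable def poleMoment (σ : ℝ) (j : ℕ) (l : ℝ) : ℝ :=
  ∑' t : ℕ, (t + σ + 1 / 2) ^ j * Real.exp ((t + σ + 1 / 2) * l)

lemma poleMoment_zero (σ : ℝ) (hl : l < 0) :
    poleMoment σ 0 l = Real.exp (σ * l) * (Real.exp (l / 2) / (1 - Real.exp l)) := by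
  have hterm (t : ℕ) : ((t : ℝ) + σ + 1 / 2) ^ 0 * Real.exp ((t + σ + 1 / 2) * l) =
      Real.exp (σ * l) * Real.exp (l / 2) * Real.exp l ^ t := by
    rw [pow_zero, one_mul, ← Real.exp_nat_mul, ← Real.exp_add, ← Real.exp_add]
    ring_nf
  simp only [poleMoment, hterm]
  rw [tsum_mul_left, tsum_geometric_of_lt_one (Real.exp_pos _).le (Real.exp_lt_one_iff.2 hl)]
  ring

lemma summable_poleMoment (hσ : 0 ≤ σ) (hl : l < 0) (j : ℕ) :
    Summable fun t : ℕ ↦ (t + σ + 1 / 2) ^ j * Real.exp ((t + σ + 1 / 2) * l) := by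
  obtain ⟨m, hm⟩ := exists_nat_ge (σ + 1 / 2)
  have hgeom : ‖Real.exp l‖ < 1 := by
    rwa [Real.norm_of_nonneg (Real.exp_pos _).le, Real.exp_lt_one_iff]
  have hsum : Summable fun t : ℕ ↦ ((t + m : ℕ) : ℝ) ^ j * Real.exp l ^ (t + m) :=
    (summable_nat_add_iff m (f := fun t : ℕ ↦ (t : ℝ) ^ j * Real.exp l ^ t)).2
      (summable_pow_mul_geometric_of_norm_lt_one j hgeom)
  refine (hsum.mul_left (Real.exp ((σ + 1 / 2 - m) * l))).of_nonneg_of_le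
    (fun t ↦ by positivity) fun t ↦ ?_
  have hexp : Real.exp ((t + σ + 1 / 2) * l) =
      Real.exp ((σ + 1 / 2 - m) * l) * Real.exp l ^ (t + m) := by
    rw [← Real.exp_nat_mul, ← Real.exp_add, Nat.cast_add]
    ring_nf
  have hle : (t : ℝ) + σ + 1 / 2 ≤ t + m := by linarith
  rw [hexp, mul_left_comm, Nat.cast_add]
  exact mul_le_mul_of_nonneg_left (mul_le_mul_of_nonneg_right
    (pow_le_pow_left₀ (by positivity) hle j) (by positivity)) (Real.exp_pos _).le

lemma hasDerivAt_poleMoment (hσ : 0 ≤ σ) (hl : l < 0) (j : ℕ) :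
    HasDerivAt (poleMoment σ j) (poleMoment σ (j + 1) l) l := by
  refine hasDerivAt_tsum_of_isPreconnected (t := Set.Iio (l / 2)) (y₀ := l)
    (g := fun (t : ℕ) l ↦ ((t : ℝ) + σ + 1 / 2) ^ j * Real.exp ((t + σ + 1 / 2) * l))
    (g' := fun (t : ℕ) l ↦ ((t : ℝ) + σ + 1 / 2) ^ (j + 1) * Real.exp ((t + σ + 1 / 2) * l))
    (summable_poleMoment hσ (by linarith : l / 2 < 0) (j + 1)) isOpen_Iio isPreconnected_Iio
    (fun t y _ ↦ ?_) (fun t y hy ↦ ?_) (by rw [Set.mem_Iio]; linarith)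
    (summable_poleMoment hσ hl j) (by rw [Set.mem_Iio]; linarith)
  · have hlin : HasDerivAt (fun l : ℝ ↦ ((t : ℝ) + σ + 1 / 2) * l) (t + σ + 1 / 2) y := by
      simpa using (hasDerivAt_id y).const_mul ((t : ℝ) + σ + 1 / 2)
    exact (hlin.exp.const_mul _).congr_deriv (by ring)
  · have hle : y ≤ l / 2 := le_of_lt hy
    rw [Real.norm_of_nonneg (by positivity)]
    gcongr

lemma lineMoment_zero (hl : l < 0) : lineMoment σ 0 l = (-(l * poleMoment σ 0 l) : ℝ) := by
  have hfactor : lineMoment σ 0 l =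
      cexp (σ * l) * ∫ x in Set.Ioo (0 : ℝ) 1, cexp (normLogit x * I * l) := by
    rw [lineMoment, ← integral_const_mul]
    simp only [pow_zero, one_mul, linePoint, add_mul, exp_add]
  rw [hfactor, integral_cexp_normLogit hl, poleMoment_zero σ hl]
  push_cast
  ring

/-- Both sides for `j + 1` are the derivatives of both sides for `j` with respect to `l`. -/
theorem lineMoment_eq (hσ : 0 ≤ σ) (j : ℕ) :
    ∀ l < 0, lineMoment σ j l = (-(l * poleMoment σ j l + j * poleMoment σ (j - 1) l) : ℝ) := by
  induction j with
  | zero =>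
    intro l hl
    rw [lineMoment_zero hl, Nat.cast_zero, zero_mul, add_zero]
  | succ j ih =>
    intro l hl
    have hpole : HasDerivAt (fun l ↦ j * poleMoment σ (j - 1) l) (j * poleMoment σ j l) l := by
      cases j with
      | zero => simpa using hasDerivAt_const l (0 : ℝ)
      | succ i => exact (hasDerivAt_poleMoment hσ hl i).const_mul _
    have hderiv := (((hasDerivAt_id l).mul (hasDerivAt_poleMoment hσ hl j)).add
      hpole).neg.ofReal_comp
    have heq : lineMoment σ j =ᶠ[𝓝 l]
        fun l ↦ ((-(l * poleMoment σ j l + j * poleMoment σ (j - 1) l) : ℝ) : ℂ) := by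
      filter_upwards [Iio_mem_nhds hl] with y hy using ih y hy
    rw [(hasDerivAt_lineMoment hσ hl j).unique (hderiv.congr_of_eventuallyEq heq)]
    congr 1
    simp only [id, Nat.cast_succ, Nat.add_sub_cancel]
    ring

open Polynomial in
theorem integral_aeval_linePoint_mul_cexp (hσ : 0 ≤ σ) (hl : l < 0) (P : ℝ[X]) :
    ∫ x in Set.Ioo (0 : ℝ) 1, aeval (linePoint σ x) P * cexp (linePoint σ x * l) =
      (-(l * ∑' t : ℕ, P.eval (t + σ + 1 / 2) * Real.exp ((t + σ + 1 / 2) * l) +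
        ∑' t : ℕ, P.derivative.eval (t + σ + 1 / 2) * Real.exp ((t + σ + 1 / 2) * l)) : ℝ) := by
  have hP : ∑' t : ℕ, P.eval (t + σ + 1 / 2) * Real.exp ((t + σ + 1 / 2) * l) =
      ∑ j ∈ Finset.range (P.natDegree + 1), P.coeff j * poleMoment σ j l := by
    simp only [eval_eq_sum_range, Finset.sum_mul, mul_assoc, poleMoment, ← tsum_mul_left]
    exact Summable.tsum_finsetSum fun j _ ↦ (summable_poleMoment hσ hl j).mul_left _
  have hP' : ∑' t : ℕ, P.derivative.eval (t + σ + 1 / 2) * Real.exp ((t + σ + 1 / 2) * l) =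
      ∑ j ∈ Finset.range (P.natDegree + 1), P.coeff j * (j * poleMoment σ (j - 1) l) := by
    have heval (x : ℝ) : P.derivative.eval x =
        ∑ j ∈ Finset.range (P.natDegree + 1), P.coeff j * (j * x ^ (j - 1)) := by
      rw [derivative_eval, sum_over_range P (by simp)]
      simp only [mul_assoc]
    simp only [heval, Finset.sum_mul, mul_assoc, poleMoment, ← tsum_mul_left]
    exact Summable.tsum_finsetSum fun j _ ↦
      ((summable_poleMoment hσ hl (j - 1)).mul_left _).mul_left _
  have hintegrand (x : ℝ) : aeval (linePoint σ x) P * cexp (linePoint σ x * l) =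
      ∑ j ∈ Finset.range (P.natDegree + 1),
        (P.coeff j : ℂ) * (linePoint σ x ^ j * cexp (linePoint σ x * l)) := by
    simp only [aeval_eq_sum_range, Finset.sum_mul, real_smul, mul_assoc]
  simp only [hintegrand]
  rw [integral_finsetSum _ fun j _ ↦
    (integrableOn_linePoint_pow_mul_cexp hσ hl.le j).const_mul _, hP, hP']
  have hmoment (j : ℕ) := lineMoment_eq hσ j l hl
  simp only [lineMoment] at hmoment
  simp only [integral_const_mul, hmoment]
  push_cast
  rw [Finset.mul_sum, ← Finset.sum_add_distrib, ← Finset.sum_neg_distrib]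
  exact Finset.sum_congr rfl fun j _ ↦ by ring

end LineIntegral

section ExpGrowth

open Filter Topology

/-- The sequence `f` grows at most like `exp (a * k)` on the exponential scale. -/
def ExpGrowthLE (f : ℕ → ℝ) (a : ℝ) : Prop :=
  ∀ ρ > a, ∀ᶠ k : ℕ in atTop, f k ≤ Real.exp (ρ * k)

/-- The sequence `f` grows at least like `exp (a * k)` on the exponential scale. -/
def ExpGrowthGE (f : ℕ → ℝ) (a : ℝ) : Prop :=
  ∀ ρ < a, ∀ᶠ k : ℕ in atTop, Real.exp (ρ * k) ≤ f k

variable {f g : ℕ → ℝ} {a b : ℝ}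

lemma ExpGrowthLE.of_tendsto (hg : Tendsto (fun k ↦ g k / k) atTop (𝓝 a))
    (hf : ∀ᶠ k in atTop, f k ≤ Real.exp (g k)) : ExpGrowthLE f a := by
  intro ρ hρ
  filter_upwards [hf, hg.eventually_lt_const hρ, eventually_gt_atTop 0] with k hfk hgk hk
  exact hfk.trans (Real.exp_le_exp.2 ((div_lt_iff₀ (by positivity)).1 hgk).le)

lemma ExpGrowthGE.of_tendsto (hg : Tendsto (fun k ↦ g k / k) atTop (𝓝 a))
    (hf : ∀ᶠ k in atTop, Real.exp (g k) ≤ f k) : ExpGrowthGE f a := by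
  intro ρ hρ
  filter_upwards [hf, hg.eventually_const_lt hρ, eventually_gt_atTop 0] with k hfk hgk hk
  exact (Real.exp_le_exp.2 ((lt_div_iff₀ (by positivity)).1 hgk).le).trans hfk

lemma ExpGrowthLE.mul (hf : ExpGrowthLE f a) (hg : ExpGrowthLE g b) (hg0 : ∀ k, 0 ≤ g k) :
    ExpGrowthLE (fun k ↦ f k * g k) (a + b) := by
  intro ρ hρ
  filter_upwards [hf (a + (ρ - a - b) / 2) (by linarith),
    hg (b + (ρ - a - b) / 2) (by linarith)] with k hfk hgk
  refine (mul_le_mul hfk hgk (hg0 k) (Real.exp_pos _).le).trans_eq ?_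
  rw [← Real.exp_add]
  ring_nf

lemma ExpGrowthGE.mul (hf : ExpGrowthGE f a) (hg : ExpGrowthGE g b) :
    ExpGrowthGE (fun k ↦ f k * g k) (a + b) := by
  intro ρ hρ
  filter_upwards [hf (a - (a + b - ρ) / 2) (by linarith),
    hg (b - (a + b - ρ) / 2) (by linarith)] with k hfk hgk
  refine Eq.trans_le ?_
    (mul_le_mul hfk hgk (Real.exp_pos _).le ((Real.exp_pos _).le.trans hfk))
  rw [← Real.exp_add]
  ring_nf

lemma tendsto_log_add_one_div : Tendsto (fun k : ℕ ↦ Real.log (k + 1) / k) atTop (𝓝 0) := by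
  have hsucc : Tendsto (fun k : ℕ ↦ (k : ℝ) + 1) atTop atTop :=
    tendsto_atTop_add_const_right atTop 1 tendsto_natCast_atTop_atTop
  refine ((Real.isLittleO_log_id_atTop.comp_tendsto hsucc).trans_isBigO
    (.of_bound 2 ?_)).tendsto_div_nhds_zero
  filter_upwards [eventually_ge_atTop 1] with k hk
  have hk' : (1 : ℝ) ≤ k := Nat.one_le_cast.2 hk
  rw [Function.comp_apply, id, Real.norm_of_nonneg (by positivity),
    Real.norm_of_nonneg (by positivity)]
  linarith

end ExpGrowth

section LogModulus

open MeasureTheory Filter Topology Complex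

/-- The function equal to `∫ t in 0..A, log |t + y * I|`. -/
noncomputable def logModulusIntegral (A y : ℝ) : ℝ :=
  A * Real.log (A ^ 2 + y ^ 2) / 2 - A + y * Real.arctan (A / y)

variable {A B y : ℝ}

lemma hasDerivAt_logModulusIntegral_left (A : ℝ) (hy : 0 < y) :
    HasDerivAt (fun A ↦ logModulusIntegral A y) (Real.log (A ^ 2 + y ^ 2) / 2) A := by
  have hsq : HasDerivAt (fun A : ℝ ↦ A ^ 2 + y ^ 2) (2 * A) A := by
    simpa using ((hasDerivAt_id A).pow 2).add_const (y ^ 2)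
  refine (((((hasDerivAt_id A).mul (hsq.log (by positivity))).div_const 2).sub
    (hasDerivAt_id A)).add
      ((((hasDerivAt_id A).div_const y).arctan).const_mul y)).congr_deriv ?_
  have : y ^ 2 + A ^ 2 ≠ 0 := by positivity
  have hone : 1 + (A / y) ^ 2 = (y ^ 2 + A ^ 2) / y ^ 2 := by field_simp
  simp only [id, hone]
  field_simp
  ring

lemma hasDerivAt_logModulusIntegral_right (A : ℝ) (hy : 0 < y) :
    HasDerivAt (logModulusIntegral A) (Real.arctan (A / y)) y := by
  have hsq : HasDerivAt (fun y : ℝ ↦ A ^ 2 + y ^ 2) (2 * y) y := by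
    simpa using ((hasDerivAt_id y).pow 2).const_add (A ^ 2)
  have hdiv : HasDerivAt (fun y : ℝ ↦ A / y) (-A / y ^ 2) y := by
    simpa using (hasDerivAt_const y A).fun_div (hasDerivAt_id y) hy.ne'
  refine (((((hsq.log (by positivity)).const_mul A).div_const 2).sub_const A).add
    ((hasDerivAt_id y).mul hdiv.arctan)).congr_deriv ?_
  have : y ^ 2 + A ^ 2 ≠ 0 := by positivity
  have hone : 1 + (A / y) ^ 2 = (y ^ 2 + A ^ 2) / y ^ 2 := by field_simp
  simp only [id, hone]
  field_simp
  ring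

lemma add_mul_sub_le_of_hasDerivAt_of_monotoneOn {S : Set ℝ} {f f' : ℝ → ℝ} {x y : ℝ}
    (hS : Convex ℝ S) (hf : ∀ x ∈ S, HasDerivAt f (f' x) x) (hf' : MonotoneOn f' S)
    (hx : x ∈ S) (hy : y ∈ S) : f x + f' x * (y - x) ≤ f y := by
  have hconv : ConvexOn ℝ S f := by
    refine MonotoneOn.convexOn_of_deriv hS
      (fun z hz ↦ (hf z hz).continuousAt.continuousWithinAt)
      (fun z hz ↦ (hf z (interior_subset hz)).differentiableAt.differentiableWithinAt) ?_
    exact (hf'.mono interior_subset).congr fun z hz ↦ (hf z (interior_subset hz)).deriv.symm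
  rcases lt_trichotomy x y with hxy | rfl | hxy
  · have h := hconv.le_slope_of_hasDerivAt hx hy hxy (hf x hx)
    rw [slope_def_field, le_div_iff₀ (sub_pos.2 hxy)] at h
    linarith
  · simp
  · have h := hconv.slope_le_of_hasDerivAt hy hx hxy (hf x hx)
    rw [slope_def_field, div_le_iff₀ (sub_pos.2 hxy)] at h
    linarith

lemma logModulusIntegral_add_mul_le (hA : 0 ≤ A) (hB : 0 ≤ B) (hy : 0 < y) :
    logModulusIntegral A y + Real.log (A ^ 2 + y ^ 2) / 2 * (B - A) ≤ logModulusIntegral B y := by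
  refine add_mul_sub_le_of_hasDerivAt_of_monotoneOn (convex_Ici (0 : ℝ))
    (fun x _ ↦ hasDerivAt_logModulusIntegral_left x hy) (fun x hx x' _ hxx' ↦ ?_) hA hB
  have hx0 : (0 : ℝ) ≤ x := hx
  exact div_le_div_of_nonneg_right (Real.log_le_log (by positivity) (by gcongr)) zero_le_two

lemma logModulusIntegral_le_logModulusIntegral (hA : 0 ≤ A) (hAB : A ≤ B) (hy : 1 ≤ y) :
    logModulusIntegral A y ≤ logModulusIntegral B y := by
  have hlog : 0 ≤ Real.log (A ^ 2 + y ^ 2) := Real.log_nonneg (by nlinarith)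
  exact (le_add_of_nonneg_right (mul_nonneg (div_nonneg hlog zero_le_two) (sub_nonneg.2 hAB))).trans
    (logModulusIntegral_add_mul_le hA (hA.trans hAB) (by linarith))

lemma logModulusIntegral_le_tangent {y' : ℝ} (hA : 0 ≤ A) (hy : 0 < y) (hy' : 0 < y') :
    logModulusIntegral A y ≤ logModulusIntegral A y' + (y - y') * Real.arctan (A / y') := by
  have h := add_mul_sub_le_of_hasDerivAt_of_monotoneOn (convex_Ioi (0 : ℝ))
    (fun x hx ↦ (hasDerivAt_logModulusIntegral_right A hx).neg) (fun x hx x' _ hxx' ↦ ?_) hy' hy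
  · simp only [Pi.neg_apply] at h
    linarith
  · have : (0 : ℝ) < x := hx
    exact neg_le_neg (Real.arctan_mono (by gcongr))

/-- The product of the moduli `|j + 1 / 2 + y * I|` for `j < K`. -/
noncomputable def halfIntModulusProd (K : ℕ) (y : ℝ) : ℝ :=
  ∏ j ∈ Finset.range K, √((j + 1 / 2) ^ 2 + y ^ 2)

lemma halfIntModulusProd_nonneg (K : ℕ) (y : ℝ) : 0 ≤ halfIntModulusProd K y :=
  Finset.prod_nonneg fun _ _ ↦ Real.sqrt_nonneg _

lemma halfIntModulusProd_le_of_abs_le (K : ℕ) {y' : ℝ} (h : |y| ≤ y') :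
    halfIntModulusProd K y ≤ halfIntModulusProd K y' := by
  refine Finset.prod_le_prod (fun _ _ ↦ Real.sqrt_nonneg _) fun j _ ↦ Real.sqrt_le_sqrt ?_
  gcongr 1
  exact sq_le_sq' (abs_le.1 h).1 (abs_le.1 h).2

lemma halfIntModulusProd_le_exp_logModulusIntegral (K : ℕ) (hy : 1 ≤ y) :
    halfIntModulusProd K y ≤ Real.exp (logModulusIntegral (K + 1 / 2) y + 1) := by
  induction K with
  | zero =>
    have hlog : 0 ≤ Real.log ((1 / 2) ^ 2 + y ^ 2) := Real.log_nonneg (by nlinarith)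
    have harctan : 0 ≤ y * Real.arctan (1 / 2 / y) :=
      mul_nonneg (by linarith) (Real.arctan_nonneg.2 (by positivity))
    rw [halfIntModulusProd, Finset.prod_range_zero, Real.one_le_exp_iff, logModulusIntegral,
      Nat.cast_zero, zero_add]
    linarith
  | succ K ih =>
    have hstep := logModulusIntegral_add_mul_le (A := K + 1 / 2) (B := (K + 1 : ℕ) + 1 / 2)
      (by positivity) (by positivity) (by linarith : 0 < y)
    have hfactor : √(((K : ℝ) + 1 / 2) ^ 2 + y ^ 2) ≤
        Real.exp (logModulusIntegral ((K + 1 : ℕ) + 1 / 2) y -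
          logModulusIntegral (K + 1 / 2) y) := by
      rw [Real.sqrt_eq_rpow, Real.rpow_def_of_pos (by positivity), Real.exp_le_exp]
      push_cast at hstep ⊢
      linarith
    rw [halfIntModulusProd, Finset.prod_range_succ, ← halfIntModulusProd]
    refine (mul_le_mul ih hfactor (Real.sqrt_nonneg _) (Real.exp_pos _).le).trans_eq ?_
    rw [← Real.exp_add]
    ring_nf

lemma logModulusIntegral_mul_mul {N a η : ℝ} (hN : 0 < N) (hη : 0 < η) :
    logModulusIntegral (a * N) (η * N) = N * logModulusIntegral a η + a * (N * Real.log N) := by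
  have hsq : (a * N) ^ 2 + (η * N) ^ 2 = (a ^ 2 + η ^ 2) * N ^ 2 := by ring
  rw [logModulusIntegral, logModulusIntegral, mul_div_mul_right _ _ hN.ne', hsq,
    Real.log_mul (by positivity) (by positivity), Real.log_pow, Nat.cast_ofNat]
  ring

/-- The tangent at `η * N` replaces the unbounded variable `|y|` by a linear function of it. -/
lemma halfIntModulusProd_le_exp {K : ℕ} {N a η : ℝ} (y : ℝ) (ha : 0 < a) (hη : 0 < η) (hN : 0 < N)
    (hK : (K : ℝ) + 1 / 2 ≤ a * N) :
    halfIntModulusProd K y ≤ Real.exp (N * (a * Real.log (a ^ 2 + η ^ 2) / 2 - a) +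
      a * (N * Real.log N) + (|y| + 1) * Real.arctan (a / η) + 1) := by
  have hy : 1 ≤ |y| + 1 := by linarith [abs_nonneg y]
  refine (halfIntModulusProd_le_of_abs_le K (by linarith : |y| ≤ |y| + 1)).trans
    ((halfIntModulusProd_le_exp_logModulusIntegral K hy).trans (Real.exp_le_exp.2 ?_))
  have htangent := logModulusIntegral_le_tangent (A := a * N) (y := |y| + 1) (y' := η * N)
    (by positivity) (by linarith) (by positivity)
  have hmono := logModulusIntegral_le_logModulusIntegral (by positivity) hK hy
  rw [logModulusIntegral_mul_mul hN hη, mul_div_mul_right _ _ hN.ne', logModulusIntegral.eq_1 a]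
    at htangent
  linarith

end LogModulus

section LineIntegralDecay

open Filter MeasureTheory Topology Complex Polynomial
open scoped Nat

lemma mul_log_sub_le_log_factorial (n : ℕ) : n * Real.log n - n ≤ Real.log n ! := by
  rcases eq_or_ne n 0 with rfl | hn
  · simp
  · have hlog : 0 ≤ Real.log (2 * Real.pi) := Real.log_nonneg (by linarith [Real.pi_gt_three])
    linarith [Stirling.le_log_factorial_stirling hn, Real.log_natCast_nonneg n]

lemma norm_aeval_centralChoose {h m : ℕ} (hm : m ≤ h) (y : ℝ) :
    ‖aeval ((m + y * I : ℂ) ^ 2) (centralChoose h)‖ =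
      halfIntModulusProd (h + m) y * halfIntModulusProd (h - m) y / (2 * h)! := by
  obtain ⟨d, rfl⟩ := Nat.exists_eq_add_of_le hm
  have hmodulus (a : ℝ) : ‖(a + y * I : ℂ)‖ = √(a ^ 2 + y ^ 2) := norm_add_mul_I a y
  have hfactor (i : ℕ) : ‖(m + y * I : ℂ) ^ 2 - ((i + 1 / 2 : ℝ) ^ 2 : ℝ)‖ =
      √(((m + i : ℕ) + 1 / 2 : ℝ) ^ 2 + y ^ 2) * √((m - i - 1 / 2 : ℝ) ^ 2 + y ^ 2) := by
    rw [← hmodulus, ← hmodulus, ← norm_mul]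
    push_cast
    ring_nf
  have hreflect : ∏ i ∈ Finset.range m, √((m - i - 1 / 2 : ℝ) ^ 2 + y ^ 2) =
      halfIntModulusProd m y := by
    rw [halfIntModulusProd, ← Finset.prod_range_reflect]
    refine Finset.prod_congr rfl fun i hi ↦ ?_
    have hi' := Finset.mem_range.1 hi
    rw [Nat.sub_sub, Nat.cast_sub (by omega), Nat.cast_add, Nat.cast_one]
    ring_nf
  have htail : ∏ i ∈ Finset.range d, √((m - (m + i : ℕ) - 1 / 2 : ℝ) ^ 2 + y ^ 2) =
      halfIntModulusProd d y :=
    Finset.prod_congr rfl fun i _ ↦ by push_cast; ring_nf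
  have hshift : halfIntModulusProd m y *
      ∏ i ∈ Finset.range (m + d), √(((m + i : ℕ) + 1 / 2 : ℝ) ^ 2 + y ^ 2) =
        halfIntModulusProd (m + d + m) y := by
    rw [add_comm (m + d) m]
    exact (Finset.prod_range_add (fun j : ℕ ↦ √((j + 1 / 2 : ℝ) ^ 2 + y ^ 2)) m (m + d)).symm
  rw [centralChoose, map_mul, aeval_C, map_prod, norm_mul, norm_prod]
  simp only [map_sub, aeval_X, aeval_C, coe_algebraMap, hfactor]
  rw [Finset.prod_mul_distrib, Finset.prod_range_add (fun i ↦ √((m - i - 1 / 2 : ℝ) ^ 2 + y ^ 2)),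
    hreflect, htail, ← hshift, Nat.add_sub_cancel_left, norm_real, norm_inv,
    Real.norm_natCast]
  ring

/-- The contribution of a factor of height `h` to `lineRate`. -/
noncomputable def factorRate (h m : ℕ) (η : ℝ) : ℝ :=
  ((h + m) * Real.log ((h + m) ^ 2 + η ^ 2) + (h - m) * Real.log ((h - m) ^ 2 + η ^ 2)) / 2 -
    2 * h * Real.log (2 * h)

/-- The contribution of a factor of height `h` to `lineAngle`. -/
noncomputable def factorAngle (h m : ℕ) (η : ℝ) : ℝ :=
  Real.arctan ((h + m) / η) + Real.arctan ((h - m) / η)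

lemma add_one_mul_log_sub_le {x : ℝ} (hx : 0 < x) :
    (x + 1) * Real.log (x + 1) - x * Real.log x ≤ Real.log (x + 1) + 1 := by
  have hlog := Real.log_le_sub_one_of_pos (by positivity : 0 < (x + 1) / x)
  have hsub : (x + 1) / x - 1 = 1 / x := by field_simp; ring
  rw [Real.log_div (by positivity) hx.ne', hsub, le_div_iff₀ hx] at hlog
  linarith

/-- The scale `k + 1` leaves room for the shift by `1 / 2` of the half-integers. -/
lemma norm_aeval_centralChoose_mul_le {h m k : ℕ} (hm : m < h) {η : ℝ} (hη : 0 < η) (hk : 0 < k)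
    (y : ℝ) :
    ‖aeval (((k * m : ℕ) + y * I : ℂ) ^ 2) (centralChoose (k * h))‖ ≤
      Real.exp (k * factorRate h m η + 2 * h * Real.log (k + 1) + factorAngle h m η * |y| +
        (factorRate h m η + 2 * h * Real.log (2 * h) + factorAngle h m η + 2)) := by
  have hmh : (m : ℝ) + 1 ≤ h := by exact_mod_cast hm
  have hk' : (0 : ℝ) < k := Nat.cast_pos.2 hk
  have hh : (0 : ℝ) < h := Nat.cast_pos.2 (by omega)
  have hadd := halfIntModulusProd_le_exp (K := k * h + k * m) (N := k + 1) (a := h + m) y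
    (by positivity) hη (by positivity) (by push_cast; linarith)
  have hsub := halfIntModulusProd_le_exp (K := k * h - k * m) (N := k + 1) (a := h - m) y
    (by linarith) hη (by positivity) (by
      rw [Nat.cast_sub (Nat.mul_le_mul_left k hm.le)]
      push_cast
      linarith)
  have hfact : Real.exp (2 * (k * h) * (Real.log (2 * h) + Real.log k) - 2 * (k * h)) ≤
      (2 * (k * h))! := by
    rw [← Real.le_log_iff_exp_le (by positivity), ← Real.log_mul (by positivity) (by positivity)]
    refine le_trans (le_of_eq ?_) (mul_log_sub_le_log_factorial _)
    push_cast
    ring_nf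
  rw [norm_aeval_centralChoose (Nat.mul_le_mul_left k hm.le), div_eq_mul_inv]
  refine (mul_le_mul (mul_le_mul hadd hsub (halfIntModulusProd_nonneg _ _) (Real.exp_pos _).le)
    (inv_anti₀ (Real.exp_pos _) hfact) (by positivity) (by positivity)).trans ?_
  rw [← Real.exp_neg, ← Real.exp_add, ← Real.exp_add, Real.exp_le_exp, factorRate, factorAngle]
  have := mul_le_mul_of_nonneg_left (add_one_mul_log_sub_le hk') (by positivity : 0 ≤ 2 * (h : ℝ))
  linarith

variable {ι : Type*} [Fintype ι] {h : ι → ℕ} {m : ℕ} {η : ℝ}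

/-- The exponential growth rate in `k` of `chooseProdPoly (k • h)` at the square of `k * m`, found
by comparing `log |k * m + y * I|` with its tangent at `y = k * η`. -/
noncomputable def lineRate (h : ι → ℕ) (m : ℕ) (η : ℝ) : ℝ := ∑ i, factorRate (h i) m η

/-- The slope in `|y|` of the bound for `log |chooseProdPoly (k • h)|` at `(k * m + y * I) ^ 2`. -/
noncomputable def lineAngle (h : ι → ℕ) (m : ℕ) (η : ℝ) : ℝ := ∑ i, factorAngle (h i) m η

lemma lineAngle_nonneg (hm : ∀ i, m < h i) (hη : 0 < η) : 0 ≤ lineAngle h m η :=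
  Finset.sum_nonneg fun i _ ↦ by
    have : (m : ℝ) ≤ h i := Nat.cast_le.2 (hm i).le
    exact add_nonneg (Real.arctan_nonneg.2 (by positivity))
      (Real.arctan_nonneg.2 (div_nonneg (sub_nonneg.2 this) hη.le))

lemma exists_norm_aeval_chooseProdPoly_le (hm : ∀ i, m < h i) (hη : 0 < η) :
    ∃ r c : ℝ, ∀ k : ℕ, 0 < k → ∀ y : ℝ,
      ‖aeval (((k * m : ℕ) + y * I : ℂ) ^ 2) (chooseProdPoly (k • h))‖ ≤
        Real.exp (k * lineRate h m η + r * Real.log (k + 1) + lineAngle h m η * |y| + c) := by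
  refine ⟨∑ i, 2 * (h i : ℝ), ∑ i, (factorRate (h i) m η + 2 * h i * Real.log (2 * h i) +
    factorAngle (h i) m η + 2), fun k hk y ↦ ?_⟩
  rw [chooseProdPoly, map_prod, norm_prod, lineRate, lineAngle, Finset.mul_sum, Finset.sum_mul,
    Finset.sum_mul, ← Finset.sum_add_distrib, ← Finset.sum_add_distrib, ← Finset.sum_add_distrib,
    Real.exp_sum]
  exact Finset.prod_le_prod (fun _ _ ↦ norm_nonneg _) fun i _ ↦
    norm_aeval_centralChoose_mul_le (hm i) hη hk y

/-- The integral over the line `re s = m` of `chooseProdPoly h (s ^ 2) * exp (s * l)` against the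
logistic density, up to normalization. -/
noncomputable def chooseProdIntegral (h : ι → ℕ) (m : ℕ) (l : ℝ) : ℂ :=
  ∫ x in Set.Ioo (0 : ℝ) 1,
    aeval (linePoint m x) ((chooseProdPoly h).comp (X ^ 2)) * cexp (linePoint m x * l)

theorem expGrowthLE_norm_chooseProdIntegral (hm : ∀ i, m < h i) (hη : 0 < η)
    (hangle : lineAngle h m η < 2 * Real.pi) (l : ℝ) :
    ExpGrowthLE (fun k ↦ ‖chooseProdIntegral (k • h) (k * m) l‖) (lineRate h m η + m * l) := by
  obtain ⟨r, c, hbound⟩ := exists_norm_aeval_chooseProdPoly_le hm hη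
  have hint := integrableOn_exp_mul_abs_normLogit (lineAngle_nonneg hm hη) hangle
  set J := ∫ x in Set.Ioo (0 : ℝ) 1, Real.exp (lineAngle h m η * |normLogit x|)
  refine .of_tendsto (g := fun k ↦ k * (lineRate h m η + m * l) + r * Real.log (k + 1) + (c + J))
    ?_ ?_
  · have hlim := ((tendsto_log_add_one_div.const_mul r).const_add
      (lineRate h m η + m * l)).add (tendsto_const_div_atTop_nhds_zero_nat (c + J))
    rw [mul_zero, add_zero, add_zero] at hlim
    refine hlim.congr' ?_
    filter_upwards [eventually_gt_atTop 0] with k hk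
    field_simp
  · filter_upwards [eventually_gt_atTop 0] with k hk
    have hnorm (x : ℝ) : ‖aeval (linePoint (k * m : ℕ) x) ((chooseProdPoly (k • h)).comp (X ^ 2)) *
        cexp (linePoint (k * m : ℕ) x * l)‖ ≤
          Real.exp (k * (lineRate h m η + m * l) + r * Real.log (k + 1) + c) *
            Real.exp (lineAngle h m η * |normLogit x|) := by
      rw [norm_mul, norm_exp, re_mul_ofReal, linePoint_re, aeval_comp, map_pow, aeval_X,
        linePoint, ofReal_natCast]
      refine (mul_le_mul_of_nonneg_right (hbound k hk _) (Real.exp_pos _).le).trans_eq ?_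
      rw [← Real.exp_add, ← Real.exp_add, Nat.cast_mul]
      ring_nf
    refine (norm_integral_le_of_norm_le (hint.const_mul _) (.of_forall hnorm)).trans ?_
    rw [integral_const_mul, ← add_assoc, Real.exp_add _ J]
    exact mul_le_mul_of_nonneg_left (by linarith [Real.add_one_le_exp J]) (Real.exp_pos _).le

end LineIntegralDecay

section SeriesAsymptotics

open Filter Topology Polynomial Real
open scoped Nat

lemma tendsto_log_factorial_mul_div (N : ℕ) :
    Tendsto (fun k : ℕ ↦ log (k * N)! / k - N * log k) atTop (𝓝 (-negMulLog N - N)) := by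
  rcases N.eq_zero_or_pos with rfl | hN
  · simp
  have hmul : Tendsto (fun k : ℕ ↦ k * N) atTop atTop := tendsto_id.atTop_mul_const' hN
  have hstirling : Tendsto (fun k : ℕ ↦ log (Stirling.stirlingSeq (k * N)) / k) atTop (𝓝 0) :=
    (((continuousAt_log (sqrt_pos.2 pi_pos).ne').tendsto.comp
      Stirling.tendsto_stirlingSeq_sqrt_pi).comp hmul).div_atTop tendsto_natCast_atTop_atTop
  have hlog : Tendsto (fun k : ℕ ↦ log k / k) atTop (𝓝 0) :=
    (isLittleO_log_id_atTop.comp_tendsto tendsto_natCast_atTop_atTop).tendsto_div_nhds_zero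
  have hlim := ((hstirling.add (hlog.div_const 2)).add
    (tendsto_const_div_atTop_nhds_zero_nat (log (2 * N) / 2))).add_const (-negMulLog N - N)
  rw [zero_div, zero_add, zero_add, zero_add] at hlim
  refine hlim.congr' ?_
  filter_upwards [eventually_gt_atTop 0] with k hk
  rw [Stirling.log_stirlingSeq_formula, Nat.cast_mul, log_div (by positivity) (exp_ne_zero 1),
    log_mul two_ne_zero (by positivity), log_mul two_ne_zero (by positivity),
    log_mul (by positivity) (by positivity), log_exp, negMulLog]
  field_simp
  ring

lemma tendsto_log_choose_mul_div {N K : ℕ} (h : K ≤ N) :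
    Tendsto (fun k : ℕ ↦ log ((k * N).choose (k * K)) / k) atTop
      (𝓝 (negMulLog K + negMulLog (N - K) - negMulLog N)) := by
  have hlim := ((tendsto_log_factorial_mul_div N).sub (tendsto_log_factorial_mul_div K)).sub
    (tendsto_log_factorial_mul_div (N - K))
  rw [Nat.cast_sub h] at hlim
  refine (hlim.congr fun k ↦ ?_).trans_eq ?_
  · rw [Nat.cast_choose ℝ (Nat.mul_le_mul_left k h), ← Nat.mul_sub,
      log_div (by positivity) (by positivity), log_mul (by positivity) (by positivity)]
    ring
  · ring_nf

lemma choose_le_one_add_pow_mul_inv (N K : ℕ) {l : ℝ} (hl : 0 < l) :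
    (N.choose K : ℝ) ≤ (1 + l) ^ N * (l ^ K)⁻¹ := by
  rw [← div_eq_mul_inv, le_div_iff₀ (by positivity)]
  rcases le_or_gt K N with h | h
  · have hterm := Finset.single_le_sum (f := fun m ↦ l ^ m * 1 ^ (N - m) * (N.choose m : ℝ))
      (fun _ _ ↦ by positivity) (Finset.mem_range.2 (Nat.lt_succ_of_le h))
    rw [← add_pow, one_pow, mul_one, add_comm l] at hterm
    rwa [mul_comm]
  · rw [Nat.choose_eq_zero_of_lt h, Nat.cast_zero, zero_mul]
    positivity

variable {ι : Type*} [Fintype ι] {h : ι → ℕ} {z : ℝ} {l : ι → ℝ}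

lemma tsum_chooseProd_mul_pow_le (h : ι → ℕ) (hz : 0 ≤ z) (hl : ∀ i, 0 < l i)
    (hlz : (∏ i, (1 + l i)) * z < 1) :
    ∑' t : ℕ, (chooseProd h t : ℝ) * z ^ t ≤
      (∏ i, (1 + l i) ^ h i * (l i ^ (2 * h i))⁻¹) * (1 - (∏ i, (1 + l i)) * z)⁻¹ := by
  have hprod : 1 ≤ ∏ i, (1 + l i) := Finset.one_le_prod fun i _ ↦ by linarith [hl i]
  have hz1 : z < 1 := by nlinarith
  have hgeom := (hasSum_geometric_of_lt_one (by positivity) hlz).mul_left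
    (∏ i, (1 + l i) ^ h i * (l i ^ (2 * h i))⁻¹)
  rw [← hgeom.tsum_eq]
  refine (summable_chooseProd h hz hz1).tsum_le_tsum (fun t ↦ ?_) hgeom.summable
  have hterm : (chooseProd h t : ℝ) ≤ ∏ i, (1 + l i) ^ (t + h i) * (l i ^ (2 * h i))⁻¹ := by
    rw [chooseProd, Nat.cast_prod]
    exact Finset.prod_le_prod (fun _ _ ↦ Nat.cast_nonneg _) fun i _ ↦
      choose_le_one_add_pow_mul_inv _ _ (hl i)
  refine (mul_le_mul_of_nonneg_right hterm (by positivity)).trans_eq ?_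
  simp only [pow_add, mul_pow, Finset.prod_mul_distrib, Finset.prod_pow]
  ring

theorem expGrowthLE_tsum_chooseProd (h : ι → ℕ) (hz : 0 ≤ z) (hl : ∀ i, 0 < l i)
    (hlz : (∏ i, (1 + l i)) * z < 1) :
    ExpGrowthLE (fun k ↦ ∑' t : ℕ, (chooseProd (k • h) t : ℝ) * z ^ t)
      (∑ i, (h i * log (1 + l i) - 2 * h i * log (l i))) := by
  set R := ∑ i, (h i * log (1 + l i) - 2 * h i * log (l i))
  set c := (1 - (∏ i, (1 + l i)) * z)⁻¹
  have hc : 0 < c := inv_pos.2 (sub_pos.2 hlz)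
  refine .of_tendsto (g := fun k ↦ k * R + log c) ?_ (.of_forall fun k ↦ ?_)
  · have hlim := (tendsto_const_div_atTop_nhds_zero_nat (log c)).const_add R
    rw [add_zero] at hlim
    refine hlim.congr' ?_
    filter_upwards [eventually_gt_atTop 0] with k hk
    field_simp
  · refine (tsum_chooseProd_mul_pow_le (k • h) hz hl hlz).trans_eq ?_
    rw [exp_add, exp_log hc, Finset.mul_sum, exp_sum]
    congr 1
    refine Finset.prod_congr rfl fun i _ ↦ ?_
    have hi := hl i
    rw [← exp_log (by positivity : 0 < (1 + l i) ^ (k • h) i * (l i ^ (2 * (k • h) i))⁻¹),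
      log_mul (by positivity) (by positivity), log_inv, log_pow, log_pow, Pi.smul_apply,
      smul_eq_mul]
    push_cast
    ring_nf

theorem expGrowthGE_tsum_chooseProd {t : ℕ} (ht : ∀ i, h i ≤ t) (hz0 : 0 < z) (hz1 : z < 1) :
    ExpGrowthGE (fun k ↦ ∑' t : ℕ, (chooseProd (k • h) t : ℝ) * z ^ t)
      (∑ i, (negMulLog (2 * h i) + negMulLog (t - h i) - negMulLog (t + h i)) + t * log z) := by
  have hpos (k : ℕ) : 0 < (chooseProd (k • h) (k * t) : ℝ) * z ^ (k * t) := by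
    refine mul_pos (Nat.cast_pos.2 (Finset.prod_pos fun i _ ↦ Nat.choose_pos ?_)) (pow_pos hz0 _)
    have := Nat.mul_le_mul_left k (ht i)
    rw [Pi.smul_apply, smul_eq_mul]
    omega
  refine .of_tendsto (g := fun k ↦ log ((chooseProd (k • h) (k * t) : ℝ) * z ^ (k * t))) ?_
    (.of_forall fun k ↦ ?_)
  · have hlim := (tendsto_finsetSum Finset.univ fun i _ ↦ tendsto_log_choose_mul_div
      (by have := ht i; omega : 2 * h i ≤ t + h i)).add_const (t * log z)
    have hlimit (i : ι) : ((t + h i : ℕ) : ℝ) - (2 * h i : ℕ) = t - h i := by push_cast; ring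
    simp only [hlimit] at hlim
    push_cast at hlim
    refine hlim.congr' ?_
    filter_upwards [eventually_gt_atTop 0] with k hk
    have hne := hpos k
    rw [log_mul (left_ne_zero_of_mul hne.ne') (right_ne_zero_of_mul hne.ne'), log_pow, chooseProd,
      Nat.cast_prod, log_prod fun i _ ↦ ?_, add_div, Finset.sum_div]
    · congr 1
      · refine Finset.sum_congr rfl fun i _ ↦ ?_
        rw [Pi.smul_apply, smul_eq_mul, Nat.mul_add, Nat.mul_left_comm]
      · push_cast
        field_simp
    · have hprod := left_ne_zero_of_mul hne.ne'
      rw [chooseProd, Nat.cast_prod] at hprod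
      exact Finset.prod_ne_zero_iff.1 hprod i (Finset.mem_univ i)
  · rw [exp_log (hpos k)]
    exact (summable_chooseProd (k • h) hz0.le hz1).le_tsum _ fun t _ ↦ by positivity

lemma tsum_nat_add_eq_of_forall_lt {f : ℕ → ℝ} {m : ℕ} (hf : Summable f)
    (hzero : ∀ t < m, f t = 0) : ∑' t, f (t + m) = ∑' t, f t := by
  rw [← hf.sum_add_tsum_nat_add m,
    Finset.sum_eq_zero fun t ht ↦ hzero t (Finset.mem_range.1 ht), zero_add]

theorem chooseProdIntegral_log {i j : ι} {m : ℕ} (hij : i ≠ j) (hi : m ≤ h i) (hj : m ≤ h j)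
    (hz0 : 0 < z) (hz1 : z < 1) :
    chooseProdIntegral h m (log z) = (-(√z * (log z * ∑' t : ℕ, (chooseProd h t : ℝ) * z ^ t +
      ∑' t : ℕ, chooseProdDeriv h t * z ^ t)) : ℝ) := by
  have hshift (t : ℕ) : (t : ℝ) + m + 1 / 2 = (t + m : ℕ) + 1 / 2 := by push_cast; ring
  have hexp (t : ℕ) : exp (((t : ℕ) + 1 / 2) * log z) = √z * z ^ t := by
    rw [sqrt_eq_rpow, ← rpow_natCast, ← rpow_add hz0, rpow_def_of_pos hz0]
    ring_nf
  have hU := tsum_nat_add_eq_of_forall_lt (m := m) (summable_chooseProd h hz0.le hz1) fun t ht ↦ by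
    rw [chooseProd_eq_zero (ht.trans_le hi), Nat.cast_zero, zero_mul]
  have hV := tsum_nat_add_eq_of_forall_lt (m := m) (summable_chooseProdDeriv h hz0.le hz1)
    fun t ht ↦ by
      rw [chooseProdDeriv_eq_zero hij (ht.trans_le hi) (ht.trans_le hj), zero_mul]
  have hline := integral_aeval_linePoint_mul_cexp m.cast_nonneg (log_neg hz0 hz1)
    ((chooseProdPoly h).comp (X ^ 2))
  rw [chooseProdIntegral, hline, ← hU, ← hV]
  simp only [hshift, hexp, eval_comp, eval_pow, eval_X, eval_chooseProdPoly_sq, chooseProdDeriv,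
    mul_left_comm _ (√z), tsum_mul_left]
  push_cast
  ring

end SeriesAsymptotics

section RationalApproximation

open Filter Topology Real

variable {α : ℝ}

lemma finite_setOf_abs_sub_div_lt_of_lt {κ : ℝ} (hκ : 0 ≤ κ) {Q : ℕ}
    (hQ : ∀ (a : ℤ) (b : ℕ), 0 < b → |α - a / b| < (b : ℝ) ^ (-κ) → b < Q) :
    {r : ℤ × ℕ+ | |α - (r.1 : ℝ) / ((r.2 : ℕ) : ℝ)| < ((r.2 : ℕ) : ℝ) ^ (-κ)}.Finite := by
  set B := ⌈(|α| + 1) * Q⌉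
  refine ((Set.finite_Icc (-B) B).prod (Set.finite_Iic Q.succPNat)).subset ?_
  rintro ⟨a, b⟩ (hab : |α - a / (b : ℕ)| < ((b : ℕ) : ℝ) ^ (-κ))
  have hb : (1 : ℝ) ≤ (b : ℕ) := by exact_mod_cast b.pos
  have hbQ := hQ a b b.pos hab
  have hle : ((b : ℕ) : ℝ) ^ (-κ) ≤ 1 := rpow_le_one_of_one_le_of_nonpos hb (by linarith)
  have hquot : |(a : ℝ) / (b : ℕ)| ≤ |α| + 1 := by
    have hsub := abs_sub_abs_le_abs_sub ((a : ℝ) / (b : ℕ)) α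
    rw [abs_sub_comm] at hsub
    linarith
  rw [abs_div, Nat.abs_cast, div_le_iff₀ (by linarith)] at hquot
  have haB : |(a : ℝ)| ≤ B := by
    refine (hquot.trans ?_).trans (Int.le_ceil _)
    gcongr
  refine ⟨abs_le.1 (by exact_mod_cast haB), ?_⟩
  rw [Set.mem_Iic, ← PNat.coe_le_coe, Nat.succPNat_coe]
  exact hbQ.le.trans Q.le_succ

lemma mul_abs_sub_div_eq {p q a : ℤ} {b : ℕ} (hb : 0 < b) (hq : (0 : ℝ) < q)
    (heq : p * b = a * q) : q * |α - a / b| = |q * α - p| := by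
  have heq' : (p : ℝ) * b = a * q := by exact_mod_cast heq
  have hdiff : (q : ℝ) * α - p = q * (α - a / b) := by
    field_simp
    linarith
  rw [hdiff, abs_mul, abs_of_pos hq]

lemma one_le_two_mul_mul_abs_sub_div {p q a : ℤ} {b : ℕ} (hb : 0 < b) (hq : (0 : ℝ) < q)
    (hne : p * b ≠ a * q) (hsmall : 2 * b * |q * α - p| < 1) :
    1 ≤ 2 * b * q * |α - a / b| := by
  have hdet : (1 : ℝ) ≤ |(p : ℝ) * b - a * q| := by
    exact_mod_cast Int.one_le_abs (sub_ne_zero.2 hne)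
  have hsplit : (p : ℝ) * b - a * q = b * q * (α - a / b) - b * (q * α - p) := by
    field_simp
    ring
  have htri := abs_sub (b * q * (α - a / b)) (b * (q * α - p))
  rw [← hsplit, abs_mul, abs_mul, abs_mul, abs_of_pos hq, Nat.abs_cast] at htri
  linarith

variable {p q : ℕ → ℤ} {σ s τ κ : ℝ} {k₀ : ℕ} {a : ℤ} {b : ℕ}

lemma abs_sub_div_le_exp (hb : 0 < b) {k : ℕ} (hqs : exp (s * k) ≤ q k)
    (hτ : |q k * α - p k| ≤ exp (-τ * k)) (heq : p k * b = a * q k) :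
    |α - a / b| ≤ exp (-(τ + s) * k) := by
  rw [← mul_abs_sub_div_eq hb ((exp_pos _).trans_le hqs) heq] at hτ
  have hle := (mul_le_mul_of_nonneg_right hqs (abs_nonneg (α - a / b))).trans hτ
  rwa [← le_div_iff₀' (exp_pos _), ← exp_sub, ← sub_mul, ← neg_add'] at hle

lemma tendsto_exp_neg_mul_natCast {c : ℝ} (hc : 0 < c) :
    Tendsto (fun k : ℕ ↦ exp (-c * k)) atTop (𝓝 0) := by
  simp only [neg_mul]
  exact tendsto_exp_neg_atTop_nhds_zero.comp (tendsto_natCast_atTop_atTop.const_mul_atTop hc)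

/-- The last index at which `p k / q k` is useless for bounding `|α - a / b|` from below, either
because it equals `a / b` or because it is not close enough to `α`. -/
lemma exists_useless_succ_useful (hα : Irrational α) (hτ : 0 < τ) (hτs : 0 < τ + s)
    (hqs : ∀ k ≥ k₀, exp (s * k) ≤ q k) (hp : ∀ k ≥ k₀, |q k * α - p k| ≤ exp (-τ * k))
    (hb : 0 < b) (hb' : 1 ≤ 2 * b * exp (-τ * k₀)) :
    ∃ n ≥ k₀, (p n * b = a * q n ∨ 1 ≤ 2 * b * exp (-τ * n)) ∧
      p (n + 1) * b ≠ a * q (n + 1) ∧ 2 * b * exp (-τ * (n + 1 : ℕ)) < 1 := by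
  by_contra! hall
  have huseless (k : ℕ) (hk : k₀ ≤ k) : p k * b = a * q k ∨ 1 ≤ 2 * b * exp (-τ * k) := by
    induction k, hk using Nat.le_induction with
    | base => exact .inr hb'
    | succ k hk ih => exact or_iff_not_imp_left.2 (hall k hk ih)
  have hne : 0 < |α - a / b| := by
    rw [abs_pos, sub_ne_zero]
    rintro rfl
    exact hα ⟨a / b, by push_cast; rfl⟩
  have hsmall := (tendsto_exp_neg_mul_natCast hτ).const_mul (2 * b : ℝ)
  rw [mul_zero] at hsmall
  obtain ⟨k, hk, hk1, hk2⟩ := ((eventually_ge_atTop k₀).and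
    ((hsmall.eventually_lt_const one_pos).and
      ((tendsto_exp_neg_mul_natCast hτs).eventually_lt_const hne))).exists
  rcases huseless k hk with heq | hlarge
  · exact hk2.not_ge (abs_sub_div_le_exp hb (hqs k hk) (hp k hk) heq)
  · exact hk1.not_ge hlarge

lemma sub_one_mul_log_le (hα : Irrational α) (hs : s ≤ σ) (hD : 0 < τ - (σ - s)) (hσ : 0 ≤ σ)
    (hqs : ∀ k ≥ k₀, exp (s * k) ≤ q k) (hqσ : ∀ k ≥ k₀, (q k : ℝ) ≤ exp (σ * k))
    (hp : ∀ k ≥ k₀, |q k * α - p k| ≤ exp (-τ * k)) (hb : 0 < b)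
    (hb' : 1 ≤ 2 * b * exp (-τ * k₀)) (hab : |α - a / b| < (b : ℝ) ^ (-κ)) :
    (κ - 1) * log b ≤ log 2 + σ * (1 + (log 2 + log b + σ) / (τ - (σ - s))) := by
  obtain ⟨n, hn, huseless, hne, hsmall⟩ := exists_useless_succ_useful (a := a) hα
    (by linarith) (by linarith) hqs hp hb hb'
  have hbR : (0 : ℝ) < b := Nat.cast_pos.2 hb
  have hlog {x y : ℝ} (h : 1 ≤ 2 * b * exp x * exp y) : 0 ≤ log 2 + log b + x + y := by
    have hlog := log_nonneg h
    rwa [log_mul (by positivity) (exp_ne_zero _), log_mul (by positivity) (exp_ne_zero _),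
      log_mul two_ne_zero hbR.ne', log_exp, log_exp] at hlog
  have hn1 : k₀ ≤ n + 1 := hn.trans n.le_succ
  have hlower : 1 ≤ 2 * b * exp (σ * (n + 1 : ℕ)) * |α - a / b| := by
    refine (one_le_two_mul_mul_abs_sub_div (α := α) hb ((exp_pos _).trans_le (hqs _ hn1)) hne
      (lt_of_le_of_lt ?_ hsmall)).trans ?_
    · gcongr
      exact hp _ hn1
    · gcongr
      exact hqσ _ hn1
  have hnle : (n : ℝ) ≤ (log 2 + log b + σ) / (τ - (σ - s)) := by
    rw [le_div_iff₀ hD]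
    rcases huseless with heq | hlarge
    · have hle := abs_sub_div_le_exp hb (hqs n hn) (hp n hn) heq
      have := hlog (hlower.trans (mul_le_mul_of_nonneg_left hle (by positivity)))
      push_cast at this
      linarith
    · have := hlog (x := -τ * n) (y := 0) (by rwa [exp_zero, mul_one])
      nlinarith [(Nat.cast_nonneg n : (0 : ℝ) ≤ n)]
  have hupper : 1 ≤ 2 * b * exp (σ * (n + 1 : ℕ)) * exp (-κ * log b) := by
    rw [neg_mul, mul_comm κ, ← mul_neg, ← rpow_def_of_pos hbR]
    exact hlower.trans (mul_le_mul_of_nonneg_left hab.le (by positivity))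
  have := hlog hupper
  push_cast at this
  linarith [mul_le_mul_of_nonneg_left hnle hσ]

lemma finite_setOf_abs_sub_div_lt_of_eventually (hα : Irrational α)
    (hqs : ∀ᶠ k : ℕ in atTop, exp (s * k) ≤ q k) (hqσ : ∀ᶠ k : ℕ in atTop, q k ≤ exp (σ * k))
    (hp : ∀ᶠ k : ℕ in atTop, |q k * α - p k| ≤ exp (-τ * k)) (hD : 0 < τ - (σ - s))
    (hκ : 1 + σ / (τ - (σ - s)) < κ) :
    {r : ℤ × ℕ+ | |α - (r.1 : ℝ) / ((r.2 : ℕ) : ℝ)| < ((r.2 : ℕ) : ℝ) ^ (-κ)}.Finite := by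
  obtain ⟨k₀, hk₀⟩ := eventually_atTop.1 ((hqs.and hqσ).and hp)
  obtain ⟨hs1, hσ1⟩ := (hk₀ (k₀ + 1) k₀.le_succ).1
  have hk1 : (0 : ℝ) < (k₀ + 1 : ℕ) := by positivity
  have hs : s ≤ σ := le_of_mul_le_mul_right (exp_le_exp.1 (hs1.trans hσ1)) hk1
  have hσ : 0 ≤ σ := by
    have hq0 : 0 < q (k₀ + 1) := by exact_mod_cast (exp_pos _).trans_le hs1
    have hq1 : (1 : ℝ) ≤ q (k₀ + 1) := by exact_mod_cast hq0
    exact nonneg_of_mul_nonneg_left (one_le_exp_iff.1 (hq1.trans hσ1)) hk1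
  set D := τ - (σ - s) with hDdef
  have hκ0 : 0 ≤ κ := by linarith [div_nonneg hσ hD.le]
  have hlog : Tendsto (fun b : ℕ ↦ (κ - 1 - σ / D) * log b) atTop atTop :=
    (tendsto_log_atTop.comp tendsto_natCast_atTop_atTop).const_mul_atTop (by linarith)
  have hlin : Tendsto (fun b : ℕ ↦ 2 * (b : ℝ) * exp (-τ * k₀)) atTop atTop :=
    (tendsto_natCast_atTop_atTop.const_mul_atTop two_pos).atTop_mul_const (exp_pos _)
  obtain ⟨Q, hQ⟩ := eventually_atTop.1 ((hlog.eventually_gt_atTop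
    (log 2 + σ * (1 + (log 2 + σ) / D))).and (hlin.eventually_ge_atTop 1))
  refine finite_setOf_abs_sub_div_lt_of_lt hκ0 (Q := Q) fun a b hb hab ↦ ?_
  by_contra! hQb
  obtain ⟨hlarge, hb'⟩ := hQ b hQb
  have hle := sub_one_mul_log_le hα hs hD hσ (fun k hk ↦ (hk₀ k hk).1.1)
    (fun k hk ↦ (hk₀ k hk).1.2) (fun k hk ↦ (hk₀ k hk).2) hb hb' hab
  rw [← hDdef] at hle
  have hsplit : σ * (1 + (log 2 + log b + σ) / D) =
      σ * (1 + (log 2 + σ) / D) + σ / D * log b := by ring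
  linarith

theorem finite_setOf_abs_sub_div_lt (hα : Irrational α)
    (hqs : ExpGrowthGE (fun k ↦ (q k : ℝ)) s) (hqσ : ExpGrowthLE (fun k ↦ (q k : ℝ)) σ)
    (hp : ExpGrowthLE (fun k ↦ |q k * α - p k|) (-τ)) (hD : 0 < τ - (σ - s))
    (hκ : 1 + σ / (τ - (σ - s)) < κ) :
    {r : ℤ × ℕ+ | |α - (r.1 : ℝ) / ((r.2 : ℕ) : ℝ)| < ((r.2 : ℕ) : ℝ) ^ (-κ)}.Finite := by
  have hden : ContinuousAt (fun ε : ℝ ↦ τ - ε - ((σ + ε) - (s - ε))) 0 := by fun_prop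
  have hquot : ContinuousAt (fun ε : ℝ ↦ 1 + (σ + ε) / (τ - ε - ((σ + ε) - (s - ε)))) 0 := by
    refine continuousAt_const.add (ContinuousAt.div₀ (by fun_prop) hden ?_)
    simpa using hD.ne'
  obtain ⟨ε, ⟨hD', hκ'⟩, hε⟩ := (((hden.eventually_const_lt (u := 0) (by simpa using hD)).and
    (hquot.eventually_lt_const (u := κ) (by simpa using hκ))).filter_mono nhdsWithin_le_nhds
      |>.and (eventually_mem_nhdsWithin (s := Set.Ioi 0))).exists
  have hε0 : 0 < ε := hε
  refine finite_setOf_abs_sub_div_lt_of_eventually hα (hqs (s - ε) (by linarith))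
    (hqσ (σ + ε) (by linarith)) (hp (-(τ - ε)) (by linarith)) hD' hκ'

end RationalApproximation

section SqrtRatio

open Real

/-- The argument of the logarithm in the number `√d * log ((√d - 1) / (√d + 1))`. -/
noncomputable def sqrtRatio (d : ℝ) : ℝ := (√d - 1) / (√d + 1)

variable {d : ℝ}

lemma sqrtRatio_pos (hd : 1 < d) : 0 < sqrtRatio d := by
  have : 1 < √d := Real.lt_sqrt_of_sq_lt (by simpa using hd)
  exact div_pos (by linarith) (by linarith)

lemma one_sub_sqrtRatio (d : ℝ) : 1 - sqrtRatio d = 2 / (√d + 1) := by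
  have : √d + 1 ≠ 0 := by positivity
  rw [sqrtRatio]
  field_simp
  ring

lemma one_add_sqrtRatio (d : ℝ) : 1 + sqrtRatio d = 2 * √d / (√d + 1) := by
  have : √d + 1 ≠ 0 := by positivity
  rw [sqrtRatio]
  field_simp
  ring

lemma sqrtRatio_lt_one (d : ℝ) : sqrtRatio d < 1 := by
  have : 0 < 1 - sqrtRatio d := by rw [one_sub_sqrtRatio]; positivity
  linarith

lemma sqrtRatio_div_sq (hd : 0 ≤ d) : sqrtRatio d / (1 - sqrtRatio d) ^ 2 = (d - 1) / 4 := by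
  have : √d + 1 ≠ 0 := by positivity
  rw [one_sub_sqrtRatio, sqrtRatio]
  field_simp
  linear_combination 4 * sq_sqrt hd

lemma cosh_log_sqrtRatio (hd : 1 < d) : cosh (log (sqrtRatio d)) = (d + 1) / (d - 1) := by
  have hs : 1 < √d := Real.lt_sqrt_of_sq_lt (by simpa using hd)
  have : √d - 1 ≠ 0 := by linarith
  have : √d + 1 ≠ 0 := by linarith
  have : d - 1 ≠ 0 := by linarith
  rw [cosh_log (sqrtRatio_pos hd), sqrtRatio]
  field_simp
  linear_combination -4 * sq_sqrt (by linarith : 0 ≤ d)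

lemma sinh_log_sqrtRatio (hd : 1 < d) : sinh (log (sqrtRatio d)) = -(2 * √d / (d - 1)) := by
  have hs : 1 < √d := Real.lt_sqrt_of_sq_lt (by simpa using hd)
  have : √d - 1 ≠ 0 := by linarith
  have : √d + 1 ≠ 0 := by linarith
  have : d - 1 ≠ 0 := by linarith
  rw [sinh_log (sqrtRatio_pos hd), sqrtRatio]
  field_simp
  linear_combination 4 * √d * sq_sqrt (by linarith : 0 ≤ d)

lemma one_sub_sqrtRatio_sq_div (hd : 0 < d) :
    (1 - sqrtRatio d) ^ 2 / (1 + sqrtRatio d) * d = (1 - sqrtRatio d) * √d := by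
  have : √d ≠ 0 := (sqrt_pos.2 hd).ne'
  have : √d + 1 ≠ 0 := by positivity
  rw [one_sub_sqrtRatio, one_add_sqrtRatio]
  field_simp
  linear_combination -sq_sqrt hd.le

theorem irrational_sqrt_mul_log_sqrtRatio {d : ℚ} (hd : 1 < d) :
    Irrational (√d * log (sqrtRatio d)) := by
  rintro ⟨r, hr⟩
  have hd' : (1 : ℝ) < d := by exact_mod_cast hd
  have hsq : √(d : ℝ) ^ 2 = d := sq_sqrt (by linarith)
  have hd0 : (d : ℝ) ≠ 0 := by linarith
  have hω : log (sqrtRatio d) ≠ 0 := (log_neg (sqrtRatio_pos hd') (sqrtRatio_lt_one _)).ne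
  refine not_rational_sq_cosh_sinh_div hω (r ^ 2 / d) ((d + 1) / (d - 1))
    (-(2 * d / ((d - 1) * r))) ⟨?_, ?_, ?_⟩
  · push_cast
    rw [hr, mul_pow, hsq]
    field_simp
  · exact_mod_cast cosh_log_sqrtRatio hd'
  · have : √(d : ℝ) ≠ 0 := by positivity
    have : (d : ℝ) - 1 ≠ 0 := by linarith
    push_cast
    rw [sinh_log_sqrtRatio hd', hr, neg_div, div_div, ← mul_assoc]
    field_simp
    linear_combination -hsq

end SqrtRatio

section LinearForms

open Filter Topology Real

variable {a b d : ℕ}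

/-- The factor that turns `(1 - z) * ∑ t, chooseProd (heights m) t * z ^ t` into an integer when
`z / (1 - z) ^ 2 = a / b`. -/
noncomputable def clearingFactor (a b K m : ℕ) : ℝ :=
  Nat.lcmUpto (14 * m) * b ^ (15 * m) / (a ^ (5 * m) * carryPrimorial K m)

/-- The exponential growth rate of `clearingFactor a b K m` in `m`. -/
noncomputable def clearingRate (a b K : ℕ) : ℝ :=
  14 + 15 * log b - 5 * log a - carryRate K

lemma clearingFactor_pos (ha : 0 < a) (hb : 0 < b) (K m : ℕ) : 0 < clearingFactor a b K m := by
  have := Nat.pos_of_ne_zero (Nat.lcmUpto_ne_zero (14 * m))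
  have := carryPrimorial_pos K m
  unfold clearingFactor
  positivity

lemma tendsto_log_clearingFactor_div (ha : 0 < a) (hb : 0 < b) (K : ℕ) :
    Tendsto (fun m : ℕ ↦ log (clearingFactor a b K m) / m) atTop (𝓝 (clearingRate a b K)) := by
  have hlim := (((tendsto_log_lcmUpto_div (c := 14) (by norm_num)).add_const
    (15 * log b)).sub_const (5 * log a)).sub (tendsto_log_carryPrimorial_div K)
  refine hlim.congr' ?_
  filter_upwards [eventually_gt_atTop 0] with m hm
  have := Nat.pos_of_ne_zero (Nat.lcmUpto_ne_zero (14 * m))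
  have := carryPrimorial_pos K m
  rw [clearingFactor, log_div (by positivity) (by positivity), log_mul (by positivity)
    (by positivity), log_mul (by positivity) (by positivity), log_pow, log_pow]
  push_cast
  field_simp
  ring

lemma tendsto_log_const_mul_clearingFactor_div (ha : 0 < a) (hb : 0 < b) (K : ℕ) {n : ℕ}
    (hn : 0 < n) {C : ℝ} (hC : 0 < C) :
    Tendsto (fun k : ℕ ↦ log (C * clearingFactor a b K (n * k)) / k) atTop
      (𝓝 (n * clearingRate a b K)) := by
  have hlim := ((tendsto_const_div_atTop_nhds_zero_nat (log C)).add
    (((tendsto_log_clearingFactor_div ha hb K).comp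
      (tendsto_id.const_mul_atTop' hn)).const_mul (n : ℝ)))
  rw [zero_add] at hlim
  refine hlim.congr fun k ↦ ?_
  rw [log_mul hC.ne' (clearingFactor_pos ha hb K _).ne', Function.comp_apply, id, Nat.cast_mul]
  field_simp

lemma exists_int_clearingFactor_mul_tsum (ha : 0 < a) (hb : 0 < b) {z : ℝ} (hz0 : 0 < z)
    (hz1 : z < 1) (hab : z / (1 - z) ^ 2 = a / b) (K m : ℕ) :
    ∃ X Y : ℤ, X = (1 - z) * clearingFactor a b K m *
        ∑' t : ℕ, (chooseProd (heights m) t : ℝ) * z ^ t ∧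
      Y = (1 - z) ^ 2 / (1 + z) * clearingFactor a b K m *
        ∑' t : ℕ, chooseProdDeriv (heights m) t * z ^ t := by
  have h₀ : 5 * m ≤ heights m 0 := Nat.mul_le_mul_right m (by norm_num)
  have h₁ : 5 * m ≤ heights m 1 := le_rfl
  have hsum : ∑ i, heights m i = 15 * m := by simp [Fin.sum_univ_three, heights]; ring
  have hb' : (b : ℤ) ≠ 0 := by exact_mod_cast hb.ne'
  obtain ⟨X, hX⟩ := exists_int_hasSum_chooseProd (a := a) hz0.le hz1 hb' (by simpa using hab)
    (lcmUpto_mul_chooseProd_mem_zmultiples K m) h₁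
  obtain ⟨Y, hY⟩ := exists_int_hasSum_chooseProdDeriv (a := a) hz0.le hz1 hb' (by simpa using hab)
    (lcmUpto_mul_chooseProdDeriv_mem_zmultiples K m) (by decide : (0 : Fin 3) ≠ 1) h₀ h₁
  have hU := hX.tsum_eq
  have hV := hY.tsum_eq
  simp only [mul_assoc, tsum_mul_left, hsum, Int.cast_natCast] at hU hV
  have := carryPrimorial_pos K m
  have : 1 - z ≠ 0 := by linarith
  refine ⟨X, Y, ?_, ?_⟩ <;> rw [clearingFactor] <;> field_simp at hU hV ⊢
  exacts [hU.symm, hV.symm]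

theorem exists_int_linearForm (hd : 1 < d) (ha : 0 < a) (hb : 0 < b)
    (hab : (d - 1 : ℝ) / 4 = a / b) (K : ℕ) {m l : ℕ} (hl : l ≤ 5 * m) :
    ∃ p q : ℤ, q = (1 - sqrtRatio d) * clearingFactor a b K m *
        ∑' t : ℕ, (chooseProd (heights m) t : ℝ) * sqrtRatio d ^ t ∧
      |q * (√d * log (sqrtRatio d)) - p| =
        (1 - sqrtRatio d) * √d / √(sqrtRatio d) * clearingFactor a b K m *
          ‖chooseProdIntegral (heights m) l (log (sqrtRatio d))‖ := by
  have hd' : (1 : ℝ) < d := by exact_mod_cast hd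
  have hz0 := sqrtRatio_pos hd'
  have hz1 := sqrtRatio_lt_one (d : ℝ)
  have hsqrt := one_sub_sqrtRatio_sq_div (d := d) (by positivity)
  obtain ⟨X, Y, hX, hY⟩ := exists_int_clearingFactor_mul_tsum ha hb hz0 hz1
    ((sqrtRatio_div_sq (d := d) (by positivity)).trans hab) K m
  have hintegral := chooseProdIntegral_log (h := heights m) (i := 0) (j := 1) (m := l) (by decide)
    (hl.trans (Nat.mul_le_mul_right m (by norm_num))) hl hz0 hz1
  have hc := clearingFactor_pos ha hb K m
  set z := sqrtRatio d
  refine ⟨-d * Y, X, hX, ?_⟩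
  have hform : X * (√d * log z) - (-d * Y : ℤ) = (1 - z) * √d * clearingFactor a b K m *
      (log z * ∑' t : ℕ, (chooseProd (heights m) t : ℝ) * z ^ t +
        ∑' t : ℕ, chooseProdDeriv (heights m) t * z ^ t) := by
    push_cast
    rw [hX, hY]
    linear_combination clearingFactor a b K m *
      (∑' t : ℕ, chooseProdDeriv (heights m) t * z ^ t) * hsqrt
  have hcoeff : 0 < (1 - z) * √d * clearingFactor a b K m :=
    mul_pos (mul_pos (by linarith) (by positivity)) hc
  have : √z ≠ 0 := by positivity
  rw [hform, hintegral, Complex.norm_real, norm_neg, norm_mul, Real.norm_of_nonneg (sqrt_nonneg z),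
    Real.norm_eq_abs, abs_mul, abs_of_pos hcoeff]
  field_simp

lemma heights_mul (n k : ℕ) : heights (n * k) = k • heights n := by
  ext i
  fin_cases i <;> simp [heights] <;> ring

end LinearForms

section SaddlePoint

open Real

variable {ι : Type*} [Fintype ι] {h : ι → ℕ} {z : ℝ}

/-- The exponential growth rate of `∑ t, chooseProd (k • h) t * z ^ t` in terms of the point `T`
such that the terms with `t` near `k * T` dominate. -/
noncomputable def saddleRate (h : ι → ℕ) (T : ℝ) : ℝ :=
  ∑ i, h i * log ((T ^ 2 - h i ^ 2) / (4 * h i ^ 2))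

/-- The limit, as `k → ∞`, of the quotients of consecutive terms near `t = k * T` of the series
`∑ t, chooseProd (k • h) t * z ^ t`; the saddle point is where it equals `1`. -/
noncomputable def termQuotient (h : ι → ℕ) (z T : ℝ) : ℝ :=
  z * ∏ i, (T + h i) / (T - h i)

theorem expGrowthLE_tsum_chooseProd_saddleRate {T : ℝ} (hz : 0 ≤ z) (hh : ∀ i, 0 < h i)
    (hT : ∀ i, h i < T) (hlt : termQuotient h z T < 1) :
    ExpGrowthLE (fun k ↦ ∑' t : ℕ, (chooseProd (k • h) t : ℝ) * z ^ t) (saddleRate h T) := by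
  have hsub (i) : 0 < T - h i := sub_pos.2 (hT i)
  have hadd (i) : 1 + 2 * h i / (T - h i) = (T + h i) / (T - h i) := by
    have := (hsub i).ne'
    field_simp
    ring
  convert expGrowthLE_tsum_chooseProd h (l := fun i ↦ 2 * h i / (T - h i)) hz
    (fun i ↦ div_pos (by have := hh i; positivity) (hsub i))
    (by simpa only [hadd] using (mul_comm _ z).trans_lt hlt) using 1
  refine Finset.sum_congr rfl fun i _ ↦ ?_
  have := hsub i
  have := hh i
  have hTi : 0 < T + h i := by linarith [(h i).cast_nonneg (α := ℝ)]
  rw [hadd, log_div hTi.ne' (hsub i).ne', log_div (by positivity) (hsub i).ne', sq_sub_sq,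
    show (4 : ℝ) * h i ^ 2 = (2 * h i) ^ 2 by ring, log_div (by positivity) (by positivity),
    log_mul hTi.ne' (hsub i).ne', log_pow]
  push_cast
  ring

theorem expGrowthGE_tsum_chooseProd_saddleRate {T : ℕ} (hz0 : 0 < z) (hz1 : z < 1)
    (hh : ∀ i, 0 < h i) (hT : ∀ i, h i < T) :
    ExpGrowthGE (fun k ↦ ∑' t : ℕ, (chooseProd (k • h) t : ℝ) * z ^ t)
      (saddleRate h T + T * log (termQuotient h z T)) := by
  have hsub (i) : 0 < (T : ℝ) - h i := sub_pos.2 (by exact_mod_cast hT i)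
  have hadd (i) : 0 < (T : ℝ) + h i := by have := hh i; positivity
  convert expGrowthGE_tsum_chooseProd (fun i ↦ (hT i).le) hz0 hz1 using 1
  rw [saddleRate, termQuotient, log_mul hz0.ne'
    (Finset.prod_pos fun i _ ↦ div_pos (hadd i) (hsub i)).ne',
    log_prod fun i _ ↦ (div_pos (hadd i) (hsub i)).ne', mul_add, ← add_assoc, add_right_comm,
    Finset.mul_sum, ← Finset.sum_add_distrib]
  congr 1
  refine Finset.sum_congr rfl fun i _ ↦ ?_
  have := hh i
  rw [log_div (hadd i).ne' (hsub i).ne', sq_sub_sq,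
    show (4 : ℝ) * h i ^ 2 = (2 * h i) ^ 2 by ring,
    log_div (mul_pos (hadd i) (hsub i)).ne' (by positivity),
    log_mul (hadd i).ne' (hsub i).ne', log_pow]
  simp only [negMulLog]
  push_cast
  ring

end SaddlePoint

section Criterion

open Filter Topology Real

variable {a b d : ℕ}

/-- If `q k` denotes the coefficient of `√d * log (sqrtRatio d)` in the linear form obtained from
`heights (n * k)`, then `log (q k) / k` is asymptotically between `s` and `σ`, and `τ` is the rate
at which the linear form decays. -/
theorem finite_setOf_abs_sqrt_mul_log_sub_div_lt (hd : 1 < d) (ha : 0 < a) (hb : 0 < b)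
    (hab : (d - 1 : ℝ) / 4 = a / b) (K : ℕ) {n l T : ℕ} {η : ℝ} (hn : 0 < n) (hl : l < 3 * n)
    (hT : 7 * n < T) (hη : 0 < η) (hquot : termQuotient (heights n) (sqrtRatio d) T < 1)
    (hangle : lineAngle (heights n) l η < 2 * π) {s σ τ κ : ℝ}
    (hσ : σ = n * clearingRate a b K + saddleRate (heights n) T)
    (hs : s = σ + T * log (termQuotient (heights n) (sqrtRatio d) T))
    (hτ : τ = -(n * clearingRate a b K +
      (lineRate (heights n) l η + l * log (sqrtRatio d))))
    (hD : 0 < τ - (σ - s)) (hκ : 1 + σ / (τ - (σ - s)) < κ) :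
    {r : ℤ × ℕ+ | |√d * log (sqrtRatio d) - (r.1 : ℝ) / ((r.2 : ℕ) : ℝ)| <
      ((r.2 : ℕ) : ℝ) ^ (-κ)}.Finite := by
  have hd' : (1 : ℝ) < d := by exact_mod_cast hd
  have hz0 := sqrtRatio_pos hd'
  have hz1 := sqrtRatio_lt_one (d : ℝ)
  have hlower (i) : 3 * n ≤ heights n i := by fin_cases i <;> simp [heights] <;> omega
  have hpos (i) : 0 < heights n i := by have := hlower i; omega
  choose p q hq hp using fun k : ℕ ↦
    exists_int_linearForm hd ha hb hab K (m := n * k) (l := k * l) (by nlinarith)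
  have hgrowth {C : ℝ} (hC : 0 < C) := tendsto_log_const_mul_clearingFactor_div ha hb K hn hC
  have hexp {C : ℝ} (hC : 0 < C) (k : ℕ) :=
    exp_log (mul_pos hC (clearingFactor_pos ha hb K (n * k)))
  have hU0 (k : ℕ) : 0 ≤ ∑' t : ℕ, (chooseProd (k • heights n) t : ℝ) * sqrtRatio d ^ t :=
    tsum_nonneg fun t ↦ by positivity
  have hT' (i) : heights n i < T := (heights_le n i).trans_lt hT
  simp only [heights_mul] at hq hp
  have hα : Irrational (√d * log (sqrtRatio d)) := by
    exact_mod_cast irrational_sqrt_mul_log_sqrtRatio (d := d) (by exact_mod_cast hd)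
  refine finite_setOf_abs_sub_div_lt (p := p) (q := q) hα ?_ ?_ ?_ hD hκ
  · simp only [hq]
    rw [hs, hσ, add_assoc]
    exact (ExpGrowthGE.of_tendsto (hgrowth (sub_pos.2 hz1))
      (.of_forall fun k ↦ (hexp (sub_pos.2 hz1) k).le)).mul
      (expGrowthGE_tsum_chooseProd_saddleRate hz0 hz1 hpos hT')
  · simp only [hq]
    rw [hσ]
    exact (ExpGrowthLE.of_tendsto (hgrowth (sub_pos.2 hz1))
      (.of_forall fun k ↦ (hexp (sub_pos.2 hz1) k).ge)).mul
      (expGrowthLE_tsum_chooseProd_saddleRate hz0.le hpos (by exact_mod_cast hT') hquot) hU0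
  · simp only [hp]
    rw [hτ, neg_neg]
    have hC : 0 < (1 - sqrtRatio d) * √d / √(sqrtRatio d) :=
      div_pos (mul_pos (sub_pos.2 hz1) (by positivity)) (sqrt_pos.2 hz0)
    exact (ExpGrowthLE.of_tendsto (hgrowth hC) (.of_forall fun k ↦ (hexp hC k).ge)).mul
      (expGrowthLE_norm_chooseProdIntegral (fun i ↦ hl.trans_le (hlower i)) hη hangle _)
      fun k ↦ norm_nonneg _

end Criterion

section LogBounds

open Real

/-- Used with `x` just above `(u - 1) / (u + 1)`, where `u = r / 2 ^ j` is close to `1`. -/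
lemma log_le_of_le_two_zpow_mul {r x : ℝ} (hr : 0 < r) (j : ℤ) (n : ℕ) (hx0 : 0 ≤ x) (hx1 : x < 1)
    (hrx : r ≤ 2 ^ j * ((1 + x) / (1 - x))) :
    log r ≤ j * log 2 + 2 * (∑ i ∈ Finset.range n, x ^ (2 * i + 1) / (2 * i + 1) +
      x ^ (2 * n + 1) / (1 - x ^ 2)) := by
  have hquot : 0 < (1 + x) / (1 - x) := div_pos (by linarith) (by linarith)
  calc log r ≤ log (2 ^ j * ((1 + x) / (1 - x))) := log_le_log hr hrx
    _ = j * log 2 + log ((1 + x) / (1 - x)) := by rw [log_mul (by positivity) hquot.ne', log_zpow]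
    _ ≤ _ := by linarith [log_div_le_sum_range_add hx0 hx1 n]

lemma factorRate_eq {h m : ℕ} (hm : m < h) {η : ℝ} (hη : 0 < η) :
    factorRate h m η = (h + m) / 2 * log (((h + m) ^ 2 + η ^ 2) / (4 * h ^ 2)) +
      (h - m) / 2 * log (((h - m) ^ 2 + η ^ 2) / (4 * h ^ 2)) := by
  have : 0 < h := by omega
  rw [factorRate, log_div (by positivity) (by positivity), log_div (by positivity) (by positivity),
    show (4 : ℝ) * h ^ 2 = (2 * h) ^ 2 by ring, log_pow]
  push_cast
  ring

end LogBounds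

section CarryBound

open Real

/-- A telescoping lower bound for the part of `carryRate` beyond `k`: over each window the function
`1 / (x - 1 / 2 + δ)` has differences just below `1 / x ^ 2`. -/
noncomputable def carryTail (δ : ℝ) (k : ℕ) : ℝ :=
  2 * ∑ i, (windowRight (k, i) - windowLeft (k, i)) /
    ((windowLeft (k, i) + windowRight (k, i)) / 2 + δ - 1 / 2)

lemma div_sub_div_le_one_div_sub_one_div {x y δ : ℝ} (hx : 0 < x) (hxy : x ≤ y) (hδ : 0 < δ)
    (hδx : 1 ≤ 8 * δ * x) :
    (y - x) / ((x + y) / 2 + δ - 1 / 2) - (y - x) / ((x + y) / 2 + δ + 1 / 2) ≤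
      1 / x - 1 / y := by
  have hy := hx.trans_le hxy
  set c := (x + y) / 2 + δ with hc
  have : 0 < c := by positivity
  have hxy_le : x * y ≤ c ^ 2 - 1 / 4 := by
    rw [hc]
    nlinarith [sq_nonneg (x - y), sq_nonneg δ, mul_le_mul_of_nonneg_left hxy hδ.le]
  have hc_half : 1 / 2 < c := by nlinarith [mul_pos hx hy]
  calc (y - x) / (c - 1 / 2) - (y - x) / (c + 1 / 2) = (y - x) / (c ^ 2 - 1 / 4) := by
        rw [div_sub_div _ _ (by linarith) (by linarith)]
        ring
    _ ≤ (y - x) / (x * y) :=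
        div_le_div_of_nonneg_left (sub_nonneg.2 hxy) (mul_pos hx hy) hxy_le
    _ = 1 / x - 1 / y := by field_simp

lemma windowLeft_succ (k : ℕ) (i : Fin 3) : windowLeft (k + 1, i) = windowLeft (k, i) + 1 := by
  simp only [windowLeft, Nat.cast_succ, add_right_comm]

lemma windowRight_succ (k : ℕ) (i : Fin 3) : windowRight (k + 1, i) = windowRight (k, i) + 1 := by
  simp only [windowRight, Nat.cast_succ, add_right_comm]

lemma natCast_le_windowLeft (k : ℕ) (i : Fin 3) : k ≤ windowLeft (k, i) := by
  fin_cases i <;> norm_num [windowLeft]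

lemma carryRate_succ (k : ℕ) :
    carryRate (k + 1) =
      carryRate k + 2 * ∑ i, (1 / windowLeft (k, i) - 1 / windowRight (k, i)) := by
  simp only [carryRate, Finset.sum_product, Finset.sum_range_succ, mul_add]

lemma carryTail_sub_carryTail_le {δ : ℝ} {k₀ k : ℕ} (hδ : 1 ≤ 8 * δ * k₀) (hk : k₀ ≤ k) :
    carryTail δ k₀ - carryTail δ k ≤ carryRate k - carryRate k₀ := by
  induction k, hk using Nat.le_induction with
  | base => simp
  | succ k hk ih =>
    suffices carryTail δ k - carryTail δ (k + 1) ≤ carryRate (k + 1) - carryRate k by linarith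
    rw [carryRate_succ, add_sub_cancel_left, carryTail, carryTail, ← mul_sub,
      ← Finset.sum_sub_distrib]
    refine mul_le_mul_of_nonneg_left (Finset.sum_le_sum fun i _ ↦ ?_) zero_le_two
    have hδ_pos : 0 < δ := by
      by_contra! hδ_nonpos
      nlinarith [(k₀.cast_nonneg : (0 : ℝ) ≤ k₀)]
    have hk₀ : (k₀ : ℝ) ≤ windowLeft (k, i) := (Nat.cast_le.2 hk).trans (natCast_le_windowLeft k i)
    have hδ_window : 1 ≤ 8 * δ * windowLeft (k, i) :=
      hδ.trans (mul_le_mul_of_nonneg_left hk₀ (by positivity))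
    refine Eq.trans_le ?_ (div_sub_div_le_one_div_sub_one_div (windowLeft_pos (k, i))
      (windowLeft_le_windowRight (k, i)) hδ_pos hδ_window)
    rw [windowLeft_succ, windowRight_succ]
    ring_nf

lemma lt_carryRate : 9.990202 < carryRate (10 ^ 6) := by
  have hhead : 9.9668736 < carryRate 50 := by
    simp only [carryRate, Finset.sum_product, Fin.sum_univ_three, windowLeft, windowRight,
      Matrix.cons_val]
    norm_num [Finset.sum_range_succ]
  have htail : 0.0233285 < carryTail (1 / 400) 50 - carryTail (1 / 400) (10 ^ 6) := by
    simp only [carryTail, Fin.sum_univ_three, windowLeft, windowRight, Matrix.cons_val]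
    norm_num
  have := carryTail_sub_carryTail_le (δ := 1 / 400) (k₀ := 50) (k := 10 ^ 6) (by norm_num)
    (by norm_num)
  linarith

end CarryBound

section Eleven

open Real

lemma saddleRate_heights_le : saddleRate (heights 521) 25233 ≤ 23689.162 := by
  have h₀ := log_le_of_le_two_zpow_mul (r := (25233 ^ 2 - 3647 ^ 2) / (4 * 3647 ^ 2))
    (x := 0.188541301) (by norm_num) 3 6 (by norm_num) (by norm_num) (by norm_num)
  have h₁ := log_le_of_le_two_zpow_mul (r := (25233 ^ 2 - 2605 ^ 2) / (4 * 2605 ^ 2))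
    (x := 0.183807816) (by norm_num) 4 6 (by norm_num) (by norm_num) (by norm_num)
  have h₂ := log_le_of_le_two_zpow_mul (r := (25233 ^ 2 - 1563 ^ 2) / (4 * 1563 ^ 2))
    (x := 0.007034634) (by norm_num) 6 2 (by norm_num) (by norm_num) (by norm_num)
  norm_num [Finset.sum_range_succ] at h₀ h₁ h₂
  simp only [saddleRate, Fin.sum_univ_three, heights, Matrix.cons_val]
  norm_num
  linarith [log_two_lt_d9]

lemma lineRate_heights_le : lineRate (heights 521) 343 1354.276 ≤ -8698.278 := by
  have h₀ := log_le_of_le_two_zpow_mul (r := ((3647 + 343) ^ 2 + 1354.276 ^ 2) / (4 * 3647 ^ 2))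
    (x := 0.143409664) (by norm_num) (-2) 5 (by norm_num) (by norm_num) (by norm_num)
  have h₀' := log_le_of_le_two_zpow_mul (r := ((3647 - 343) ^ 2 + 1354.276 ^ 2) / (4 * 3647 ^ 2))
    (x := 0.314429303) (by norm_num) (-3) 8 (by norm_num) (by norm_num) (by norm_num)
  have h₁ := log_le_of_le_two_zpow_mul (r := ((2605 + 343) ^ 2 + 1354.276 ^ 2) / (4 * 2605 ^ 2))
    (x := 0.215977547) (by norm_num) (-2) 6 (by norm_num) (by norm_num) (by norm_num)
  have h₁' := log_le_of_le_two_zpow_mul (r := ((2605 - 343) ^ 2 + 1354.276 ^ 2) / (4 * 2605 ^ 2))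
    (x := 0.011988476) (by norm_num) (-2) 2 (by norm_num) (by norm_num) (by norm_num)
  have h₂ := log_le_of_le_two_zpow_mul (r := ((1563 + 343) ^ 2 + 1354.276 ^ 2) / (4 * 1563 ^ 2))
    (x := 0.05611616) (by norm_num) (-1) 3 (by norm_num) (by norm_num) (by norm_num)
  have h₂' := log_le_of_le_two_zpow_mul (r := ((1563 - 343) ^ 2 + 1354.276 ^ 2) / (4 * 1563 ^ 2))
    (x := 0.152546143) (by norm_num) (-2) 5 (by norm_num) (by norm_num) (by norm_num)
  norm_num [Finset.sum_range_succ] at h₀ h₀' h₁ h₁' h₂ h₂'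
  have hlt (i) : 343 < heights 521 i := by fin_cases i <;> simp [heights]
  rw [lineRate, Fin.sum_univ_three, factorRate_eq (hlt 0) (by norm_num),
    factorRate_eq (hlt 1) (by norm_num), factorRate_eq (hlt 2) (by norm_num)]
  simp only [heights, Matrix.cons_val]
  norm_num
  linarith [log_two_gt_d9]

lemma sqrtRatio_eleven_mem_Ioo : sqrtRatio 11 ∈ Set.Ioo 0.53667504192 0.53667504193 := by
  have hlower : 3.31662479035 < √11 := lt_sqrt_of_sq_lt (by norm_num)
  have hupper : √11 < 3.31662479036 := (sqrt_lt' (by norm_num)).2 (by norm_num)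
  constructor
  · rw [sqrtRatio, lt_div_iff₀ (by linarith)]
    linarith
  · rw [sqrtRatio, div_lt_iff₀ (by linarith)]
    linarith

lemma log_sqrtRatio_eleven_le : log (sqrtRatio 11) ≤ -0.622362 := by
  have hlog := log_le_of_le_two_zpow_mul (x := 0.035377569)
    (sqrtRatio_pos (d := 11) (by norm_num)) (-1) 3 (by norm_num) (by norm_num)
    (sqrtRatio_eleven_mem_Ioo.2.le.trans (by norm_num))
  norm_num [Finset.sum_range_succ] at hlog
  linarith [log_two_gt_d9]

lemma termQuotient_eleven_mem_Ioo :
    termQuotient (heights 521) (sqrtRatio 11) 25233 ∈ Set.Ioo (1 - 3.1e-8) 1 := by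
  have hz := sqrtRatio_eleven_mem_Ioo
  simp only [termQuotient, Fin.prod_univ_three, heights, Matrix.cons_val, Set.mem_Ioo] at hz ⊢
  norm_num at hz ⊢
  constructor <;> linarith

lemma lineAngle_heights_lt : lineAngle (heights 521) 343 1354.276 < 2 * π := by
  have hpair₀ := arctan_add_eq_add_pi (x := (3647 + 343) / 1354.276)
    (y := (3647 - 343) / 1354.276) (by norm_num) (by norm_num)
  have hpair₁ := arctan_add_eq_add_pi (x := (2605 + 343) / 1354.276)
    (y := (2605 - 343) / 1354.276) (by norm_num) (by norm_num)
  have hpair₂ := arctan_add_eq_add_pi (x := (1563 + 343) / 1354.276)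
    (y := (1563 - 343) / 1354.276) (by norm_num) (by norm_num)
  -- The arguments are minus the tangents of the first two pairs.
  have hfold := arctan_add_eq_add_pi (x := 12599603500 / 14475633311)
    (y := 40089647500 / 27467684749) (by norm_num) (by norm_num)
  have hlt : arctan (926404973677644894000 / 107501530626095176061) <
      arctan (264591673500 / 30703532239) := arctan_strictMono (by norm_num)
  simp only [lineAngle, factorAngle, Fin.sum_univ_three, heights, Matrix.cons_val]
  norm_num at hpair₀ hpair₁ hpair₂ hfold ⊢
  linarith

lemma clearingRate_le : clearingRate 5 2 (10 ^ 6) ≤ 6.3598162 := by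
  have hcarry := lt_carryRate
  norm_num [clearingRate] at hcarry ⊢
  linarith [log_two_lt_d9, log_five_gt_d9]

lemma log_termQuotient_eleven_ge :
    -3.2e-8 ≤ log (termQuotient (heights 521) (sqrtRatio 11) 25233) := by
  have hquot := termQuotient_eleven_mem_Ioo.1
  have hquot_pos : 0 < termQuotient (heights 521) (sqrtRatio 11) 25233 := by linarith
  have hinv := inv_anti₀ (by norm_num) hquot.le
  have hlog := one_sub_inv_le_log_of_pos hquot_pos
  norm_num at hinv ⊢
  linarith

end Eleven

end LogIrrationality

theorem irrationality_measure_alpha_1 :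
    ∀ κ : ℝ, κ > 5.82338 →
      {pq : ℤ × ℕ+ |
        |Real.sqrt 11 * Real.log ((Real.sqrt 11 - 1) / (Real.sqrt 11 + 1)) -
            (pq.1 : ℝ) / ((pq.2 : ℕ) : ℝ)| <
          ((pq.2 : ℕ) : ℝ) ^ (-κ)}.Finite := by
  intro κ hκ
  have hclear := LogIrrationality.clearingRate_le
  have hsaddle := LogIrrationality.saddleRate_heights_le
  have hline := LogIrrationality.lineRate_heights_le
  have hlog := LogIrrationality.log_sqrtRatio_eleven_le
  have hquot := LogIrrationality.log_termQuotient_eleven_ge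
  -- `termQuotient (heights 521) (sqrtRatio 11)` is nearly `1` at `25233` and `343 + 1354.276 * I`.
  have hcriterion := LogIrrationality.finite_setOf_abs_sqrt_mul_log_sub_div_lt
    (d := 11) (a := 5) (b := 2) (n := 521) (l := 343) (T := 25233) (η := 1354.276) (κ := κ)
    (by norm_num) (by norm_num) (by norm_num) (by norm_num) (10 ^ 6)
    (by norm_num) (by norm_num) (by norm_num) (by norm_num)
    LogIrrationality.termQuotient_eleven_mem_Ioo.2 LogIrrationality.lineAngle_heights_lt
    rfl rfl rfl
  push_cast at hcriterion
  refine hcriterion ?_ ?_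
  · linarith
  · refine lt_of_le_of_lt ?_ hκ
    rw [← le_sub_iff_add_le', div_le_iff₀ (by linarith)]
    linarith
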